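/- If Y ⊆ L²([0,a)) is a perfect set that is gap-rich (with some discrete exceptional set S ⊆ ℝ), then for generic y ∈ LP(ℤ,Y) (i.e., for every y in some dense Gδ subset of LP(ℤ,Y)), the spectrum of the continuum Schrödinger operator L_y = −d²/dx² + y^♮ on L²(ℝ) is a Cantor set of zero Hausdorff dimension. -/

import Mathlib

/-!
The spectrum is handled through lower bounds. A distributional solution of `-g'' + W g = h` with
`g, h ∈ L²` and `W` uniformly locally square integrable has a `C¹` representative
(`Eqn.exists_reg`), which is controlled on each block `[ja, (j+1)a)` by the `L²` norms of `g` and `h`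
there (`local_est`). Hence such potentials are relatively bounded (`pot_bound`), solutions can be cut
off with errors living near the cut (`cutoff_lemma`), and the maximal operator is symmetric
(`symm_eqn`). It follows that `E` is outside the spectrum iff `-d²/dx² + V - E` is bounded below
(`Res.lb`, `LB.res`), a condition stable under perturbations of the energy and of the potential
(`LB_perturb`).

For every limit-periodic `y` the spectrum is closed (`spec_closed`), nonempty (`spec_nonempty`) and
without isolated points (`spec_preperfect`). For the last claim, an isolated point of the spectrum is
an eigenvalue of multiplicity at most two, with a lower bound on the complement of its eigenspace
(`isolated_lb`, `ker_three`), whereas three translates of a compactly supported approximate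
eigenfunction by quasi-periods of `y` are disjointly supported approximate eigenfunctions.

For the dimension, let `K S n` be an exhaustion of `ℝ ∖ S` by compact sets, and call the spectrum in
`K S n` thin when it is covered by `N` intervals of radius `r` with `N ^ n * r < 1 / (n + 1)`
(`ThinCover`). The set of `y` for which this holds is open (`isOpen_thin`). It is dense
(`exists_thin`): near a periodic sequence `x`, gap-richness and compactness give finitely many
periodic sequences, such that each energy in `K S n` lies in a gap of one of them, with a uniform
lower bound. Concatenate stretches of length `2 r` of these sequences periodically, with total period
`q = O(r)`. At an energy of the new spectrum, solutions decay exponentially inside the stretch which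
has a gap there (`decay`), so there are approximate eigenfunctions supported in one period box with
exponentially small error (`box_lemma`). Approximate eigenfunctions in one box at well-separated
energies are almost orthogonal, and there are only `O(q)` of them (`count_lemma`). The spectrum in
`K S n` is therefore covered by `O(q)` intervals of length exponentially small in `q`
(`thin_lemma`).

By Baire's theorem, the intersection of these open dense sets is a dense `Gδ`. On it the spectrum
meets each `K S n` in a set of Hausdorff dimension zero (`hausdorff_zero`), and `S` is countable, so
the spectrum has dimension zero, and in particular empty interior.
-/

open Set MeasureTheory BoundedContinuousFunction

noncomputable section

/-- `L²(ℝ)`. -/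
abbrev L2R := Lp ℝ 2 (volume : Measure ℝ)

/-- `L²([0,a))`. -/
abbrev L2I (a : ℝ) := Lp ℝ 2 (volume.restrict (Ico (0 : ℝ) a))

/-- `g` and `h` satisfy `(-d²/dx² + (V - E)) g = h` in the distributional sense. -/
def WeakSchrodingerEq (V : ℝ → ℝ) (E : ℝ) (g h : L2R) : Prop :=
  ∀ φ : ℝ → ℝ, ContDiff ℝ (⊤ : ℕ∞) φ → HasCompactSupport φ →
    ∫ x, g x * (-(deriv (deriv φ) x) + (V x - E) * φ x) = ∫ x, h x * φ x

/-- The spectrum of the continuum Schrödinger operator `L_V = -d²/dx² + V` on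
`L²(ℝ)`: `E` is in the spectrum iff there is no bounded operator `T` inverting
`L_V - E` (in the distributional sense). -/
def ContSpectrum (V : ℝ → ℝ) : Set ℝ :=
  {E : ℝ | ¬ ∃ T : L2R →L[ℝ] L2R,
      (∀ f : L2R, WeakSchrodingerEq V E (T f) f) ∧
      (∀ g h : L2R, WeakSchrodingerEq V E g h → T h = g)}

/-- A subset of ℝ is discrete if it has no accumulation points. -/
def IsDiscreteSet (S : Set ℝ) : Prop := ∀ x : ℝ, ¬ AccPt x (Filter.principal S)

/-- Periodic extension `w^{♯ℤ}` of a finite word `w`. -/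
def perExt {α : Type*} [Zero α] {m : ℕ} (w : Fin m → α) : ℤ → α :=
  fun n =>
    if h : 0 < m then
      w ⟨(n % (m : ℤ)).toNat, by
        have h1 : 0 ≤ n % (m : ℤ) := Int.emod_nonneg n (by exact_mod_cast h.ne')
        have h2 : n % (m : ℤ) < (m : ℤ) := Int.emod_lt_of_pos n (by exact_mod_cast h)
        omega⟩
    else 0

/-- Concatenation `y^♮ : ℝ → ℝ` of a bi-infinite sequence of pieces in
`L²([0,a))`: `y^♮(ja + t) = y_j(t)` for `t ∈ [0,a)`. -/
def aggC (a : ℝ) (y : ℤ → L2I a) : ℝ → ℝ :=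
  fun t => (y ⌊t / a⌋) (t - (⌊t / a⌋ : ℝ) * a)

/-- `Y ⊆ L²([0,a))` is gap-rich with exceptional set `S`. -/
def GapRichC (a : ℝ) (Y : Set (L2I a)) (S : Set ℝ) : Prop :=
  IsDiscreteSet S ∧
  ∀ E : ℝ, E ∉ S → ∀ m : ℕ, 0 < m → ∀ x : Fin m → L2I a, (∀ i, x i ∈ Y) →
    ∀ ε : ℝ, 0 < ε →
      ∃ l : ℕ, 0 < l ∧ ∃ y : Fin l → L2I a,
        (∀ i, y i ∈ Y) ∧
        (∀ j : ℤ, dist (perExt x j) (perExt y j) < ε) ∧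
        E ∉ ContSpectrum (aggC a (perExt y))

/-- The periodic elements of `Y^ℤ`. -/
def PerC (a : ℝ) (Y : Set (L2I a)) : Set (ℤ →ᵇ L2I a) :=
  {x | (∃ q : ℕ, 0 < q ∧ ∀ n : ℤ, x (n + q) = x n) ∧ ∀ n : ℤ, x n ∈ Y}

/-- The limit-periodic elements of `Y^ℤ`. -/
def LPC (a : ℝ) (Y : Set (L2I a)) : Set (ℤ →ᵇ L2I a) := closure (PerC a Y)

/-- Cantor set of zero Hausdorff dimension (continuum case: closed, possibly
unbounded). -/
def IsZeroDimCantorC (s : Set ℝ) : Prop :=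
  s.Nonempty ∧ IsClosed s ∧ Preperfect s ∧ interior s = ∅ ∧ dimH s = 0

namespace ThinSpec
open Filter Topology

/-! ### Blocks and weak solutions -/

/-- The `j`-th block `[ja, (j+1)a)`. -/
def blk (a : ℝ) (j : ℤ) : Set ℝ := Ico (j * a) ((j + 1) * a)

/-- `-g'' + W g = h` in the sense of distributions, for functions rather than `L²` classes. -/
def WeakEq (W g h : ℝ → ℝ) : Prop :=
  ∀ φ : ℝ → ℝ, ContDiff ℝ (⊤ : ℕ∞) φ → HasCompactSupport φ →
    ∫ x, g x * (-(deriv (deriv φ) x) + W x * φ x) = ∫ x, h x * φ x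

/-- `(g, h)` lies in the graph of the maximal realisation of `-d²/dx² + W` on `L²(ℝ)`. -/
structure Eqn (W g h : ℝ → ℝ) : Prop where
  memg : MemLp g 2 volume
  memh : MemLp h 2 volume
  weak : WeakEq W g h

/-- `W` is uniformly locally square integrable: its `L²` norm on every block is at most `M`. -/
structure ULoc (a : ℝ) (W : ℝ → ℝ) (M : ℝ) : Prop where
  ha : 0 < a
  hM : 0 ≤ M
  meas : Measurable W
  int : ∀ j, IntegrableOn (fun x => W x ^ 2) (blk a j)
  bd : ∀ j, ∫ x in blk a j, W x ^ 2 ≤ M ^ 2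

lemma measurableSet_blk (a : ℝ) (j : ℤ) : MeasurableSet (blk a j) := measurableSet_Ico

lemma mem_blk_iff {a : ℝ} (ha : 0 < a) {x : ℝ} {j : ℤ} : x ∈ blk a j ↔ ⌊x / a⌋ = j := by
  rw [Int.floor_eq_iff, le_div_iff₀ ha, div_lt_iff₀ ha]; rfl

lemma mem_blk_floor {a : ℝ} (ha : 0 < a) (x : ℝ) : x ∈ blk a ⌊x / a⌋ := (mem_blk_iff ha).2 rfl

lemma blk_disjoint {a : ℝ} (ha : 0 < a) : Pairwise (Function.onFun Disjoint (blk a)) := by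
  intro i j hij
  rw [Function.onFun, Set.disjoint_left]
  intro x hx hy
  exact hij (((mem_blk_iff ha).1 hx).symm.trans ((mem_blk_iff ha).1 hy))

lemma iUnion_blk {a : ℝ} (ha : 0 < a) : ⋃ j, blk a j = univ :=
  eq_univ_of_forall fun x => mem_iUnion.2 ⟨_, mem_blk_floor ha x⟩

lemma hasSum_blk {a : ℝ} (ha : 0 < a) {f : ℝ → ℝ} (hf : Integrable f) :
    HasSum (fun j => ∫ x in blk a j, f x) (∫ x, f x) := by
  have := hasSum_integral_iUnion (μ := volume) (measurableSet_blk a) (blk_disjoint ha)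
    (by rw [iUnion_blk ha]; exact hf.integrableOn : IntegrableOn f (⋃ j, blk a j))
  rwa [iUnion_blk ha, setIntegral_univ] at this

lemma volume_blk {a : ℝ} (ha : 0 < a) (j : ℤ) : (volume : Measure ℝ).real (blk a j) = a := by
  rw [blk, Real.volume_real_Ico_of_le (by nlinarith)]; ring

lemma Ico_eq_biUnion {a : ℝ} (ha : 0 < a) (m n : ℤ) :
    Ico (m * a) (n * a) = ⋃ j ∈ Finset.Ico m n, blk a j := by
  ext x
  simp only [mem_iUnion, Finset.mem_Ico, exists_prop, mem_blk_iff ha, exists_eq_right']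
  rw [Int.le_floor, Int.floor_lt, le_div_iff₀ ha, div_lt_iff₀ ha]; rfl

lemma integrableOn_Ico_of_blk {a : ℝ} (ha : 0 < a) {f : ℝ → ℝ} (m n : ℤ)
    (hf : ∀ j, IntegrableOn f (blk a j)) : IntegrableOn f (Ico (m * a) (n * a)) := by
  rw [Ico_eq_biUnion ha, integrableOn_finset_iUnion]
  exact fun j _ => hf j

lemma integral_Ico_blk {a : ℝ} (ha : 0 < a) {f : ℝ → ℝ} (m n : ℤ)
    (hf : ∀ j, IntegrableOn f (blk a j)) :
    ∫ x in Ico (m * a) (n * a), f x = ∑ j ∈ Finset.Ico m n, ∫ x in blk a j, f x := by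
  rw [Ico_eq_biUnion ha, integral_biUnion_finset]
  · exact fun j _ => measurableSet_blk a j
  · exact fun i _ j _ hij => blk_disjoint ha hij
  · exact fun j _ => hf j

lemma exists_Ico_superset {a : ℝ} (ha : 0 < a) (s t : ℝ) :
    ∃ n : ℕ, Icc s t ⊆ Ico (((-n : ℤ) : ℝ) * a) (((n : ℤ) : ℝ) * a) := by
  obtain ⟨n, hn⟩ := exists_nat_gt (max (|s| / a) (|t| / a))
  refine ⟨n, fun x hx => ?_⟩
  have h1 := (div_lt_iff₀ ha).1 ((le_max_left _ _).trans_lt hn)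
  have h2 := (div_lt_iff₀ ha).1 ((le_max_right _ _).trans_lt hn)
  constructor
  · push_cast; have := neg_abs_le s; have := hx.1; linarith
  · push_cast; have := le_abs_self t; have := hx.2; linarith

/-- Cauchy–Schwarz. -/
lemma cs {μ : Measure ℝ} {f g : ℝ → ℝ} (hf : MemLp f 2 μ) (hg : MemLp g 2 μ) :
    (∫ x, |f x * g x| ∂μ) ^ 2 ≤ (∫ x, f x ^ 2 ∂μ) * ∫ x, g x ^ 2 ∂μ := by
  have hI : Integrable (fun x => |f x * g x|) μ := (hf.integrable_mul hg).abs
  have key : ∀ t : ℝ, 0 ≤ (∫ x, f x ^ 2 ∂μ) * (t * t) + (-2 * ∫ x, |f x * g x| ∂μ) * t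
      + ∫ x, g x ^ 2 ∂μ := by
    intro t
    have h0 : 0 ≤ ∫ x, (t * |f x| - |g x|) ^ 2 ∂μ := integral_nonneg fun x => sq_nonneg _
    have h1 : ∀ x, (t * |f x| - |g x|) ^ 2 = (t * t) * f x ^ 2 + (-2 * t) * |f x * g x| + g x ^ 2 := by
      intro x
      rw [abs_mul, ← sq_abs (f x), ← sq_abs (g x)]; ring
    simp_rw [h1] at h0
    have hadd : Integrable (fun x => t * t * f x ^ 2 + -2 * t * |f x * g x|) μ :=
      (hf.integrable_sq.const_mul _).add (hI.const_mul _)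
    rw [integral_add hadd hg.integrable_sq,
      integral_add (hf.integrable_sq.const_mul _) (hI.const_mul _), integral_const_mul,
      integral_const_mul] at h0
    linarith
  have := discrim_le_zero key
  rw [discrim] at this
  nlinarith

/-! ### Locally square integrable functions -/

/-- `W` is measurable and locally square integrable. -/
def L2loc (W : ℝ → ℝ) : Prop :=
  AEStronglyMeasurable W volume ∧ ∀ s t : ℝ, IntegrableOn (fun x => W x ^ 2) (Icc s t)

lemma ULoc.l2loc {a M : ℝ} {W : ℝ → ℝ} (h : ULoc a W M) : L2loc W := by
  refine ⟨h.meas.aestronglyMeasurable, fun s t => ?_⟩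
  obtain ⟨n, hn⟩ := exists_Ico_superset h.ha s t
  exact (integrableOn_Ico_of_blk h.ha _ _ h.int).mono_set hn

lemma L2loc.memLp {W : ℝ → ℝ} (h : L2loc W) (s t : ℝ) :
    MemLp W 2 (volume.restrict (Icc s t)) :=
  (memLp_two_iff_integrable_sq h.1.restrict).2 (h.2 s t)

lemma l2loc_of_memLp {g : ℝ → ℝ} (h : MemLp g 2 volume) : L2loc g :=
  ⟨h.1, fun _ _ => h.integrable_sq.integrableOn⟩

lemma locallyIntegrable_of_Icc {f : ℝ → ℝ} (h : ∀ s t : ℝ, IntegrableOn f (Icc s t)) :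
    LocallyIntegrable f volume := by
  intro x
  exact ⟨Icc (x - 1) (x + 1), Icc_mem_nhds (by linarith) (by linarith), h _ _⟩

lemma L2loc.mul {f g : ℝ → ℝ} (hf : L2loc f) (hg : L2loc g) :
    LocallyIntegrable (fun x => f x * g x) volume :=
  locallyIntegrable_of_Icc fun s t => (hf.memLp s t).integrable_mul (hg.memLp s t)

lemma L2loc.locInt {f : ℝ → ℝ} (hf : L2loc f) : LocallyIntegrable f volume :=
  locallyIntegrable_of_Icc fun s t => (hf.memLp s t).integrable (by norm_num)

lemma l2loc_const (c : ℝ) : L2loc (fun _ => c) :=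
  ⟨aestronglyMeasurable_const, fun s t => by simp⟩

lemma L2loc.sub {f g : ℝ → ℝ} (hf : L2loc f) (hg : L2loc g) : L2loc (fun x => f x - g x) :=
  ⟨hf.1.sub hg.1, fun s t => ((hf.memLp s t).sub (hg.memLp s t)).integrable_sq⟩

lemma L2loc.memLp_mul_test {W φ : ℝ → ℝ} (hW : L2loc W) (hφ : Continuous φ)
    (hc : HasCompactSupport φ) : MemLp (fun x => W x * φ x) 2 volume := by
  obtain ⟨B, hB⟩ := hc.exists_bound_of_continuous hφ
  obtain ⟨R, hR⟩ := hc.isBounded.subset_closedBall 0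
  rw [Real.closedBall_eq_Icc] at hR
  have h1 : MemLp (fun x => W x * φ x) 2 (volume.restrict (Icc (0 - R) (0 + R))) := by
    refine MemLp.of_le_mul (c := B) (hW.memLp _ _) (hW.1.restrict.mul hφ.aestronglyMeasurable)
      (Eventually.of_forall fun x => ?_)
    rw [norm_mul, mul_comm]
    exact mul_le_mul_of_nonneg_right (hB x) (norm_nonneg _)
  have h2 : (fun x => W x * φ x) = (Icc (0 - R) (0 + R)).indicator (fun x => W x * φ x) := by
    ext x
    by_cases hx : x ∈ Icc (0 - R) (0 + R)
    · rw [indicator_of_mem hx]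
    · rw [indicator_of_notMem hx, image_eq_zero_of_notMem_tsupport (fun h => hx (hR h)), mul_zero]
  rw [h2]
  exact (memLp_indicator_iff_restrict measurableSet_Icc).2 h1

lemma test_deriv {φ : ℝ → ℝ} (h : ContDiff ℝ (⊤ : ℕ∞) φ) : ContDiff ℝ (⊤ : ℕ∞) (deriv φ) := by
  have := (contDiff_infty_iff_deriv (f := φ)).1 h
  exact this.2

lemma test_memLp {φ : ℝ → ℝ} (h : Continuous φ) (hc : HasCompactSupport φ) :
    MemLp φ 2 volume := h.memLp_of_hasCompactSupport hc

/-- `(-d²/dx² + W)φ` is square integrable for a test function `φ`. -/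
lemma L2loc.memLp_op {W φ : ℝ → ℝ} (hW : L2loc W) (hφ : ContDiff ℝ (⊤ : ℕ∞) φ)
    (hc : HasCompactSupport φ) : MemLp (fun x => -(deriv (deriv φ) x) + W x * φ x) 2 volume :=
  (test_memLp (test_deriv (test_deriv hφ)).continuous hc.deriv.deriv).neg.add
    (hW.memLp_mul_test hφ.continuous hc)

/-! ### Regularity of distributional solutions -/

/-- A test function of zero mean is the derivative of a test function. -/
lemma exists_antideriv {ψ : ℝ → ℝ} (hψ : ContDiff ℝ (⊤ : ℕ∞) ψ) (hc : HasCompactSupport ψ)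
    (h0 : ∫ x, ψ x = 0) :
    ∃ φ : ℝ → ℝ, ContDiff ℝ (⊤ : ℕ∞) φ ∧ HasCompactSupport φ ∧ deriv φ = ψ := by
  obtain ⟨R, hR⟩ := hc.isBounded.subset_closedBall 0
  rw [Real.closedBall_eq_Icc] at hR
  have hz : ∀ x, x ∉ Icc (0 - R) (0 + R) → ψ x = 0 := fun x hx =>
    image_eq_zero_of_notMem_tsupport fun h => hx (hR h)
  have hcont := hψ.continuous
  let φ : ℝ → ℝ := fun x => ∫ t in (-R - 1)..x, ψ t
  have hd : ∀ x, HasDerivAt φ (ψ x) x := fun x =>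
    intervalIntegral.integral_hasDerivAt_right (hcont.intervalIntegrable _ _)
      hcont.stronglyMeasurable.stronglyMeasurableAtFilter hcont.continuousAt
  have hder : deriv φ = ψ := funext fun x => (hd x).deriv
  refine ⟨φ, ?_, ?_, hder⟩
  · rw [contDiff_infty_iff_deriv, hder]
    exact ⟨fun x => (hd x).differentiableAt, hψ⟩
  · refine HasCompactSupport.intro (K := Icc (-R - 1) (R + 1)) isCompact_Icc fun x hx => ?_
    rw [mem_Icc, not_and_or, not_le, not_le] at hx
    rcases hx with hx | hx
    · change ∫ t in (-R - 1)..x, ψ t = 0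
      rw [intervalIntegral.integral_symm, intervalIntegral.integral_of_le hx.le, neg_eq_zero]
      refine setIntegral_eq_zero_of_forall_eq_zero fun t ht => hz t fun h => ?_
      have := h.1; have := ht.2; linarith
    · change ∫ t in (-R - 1)..x, ψ t = 0
      rw [intervalIntegral.integral_eq_integral_of_support_subset, h0]
      intro t ht
      by_contra hcon
      refine ht (hz t fun h => hcon ⟨?_, ?_⟩)
      · linarith [h.1]
      · linarith [h.2]

lemma exists_bump : ∃ θ : ℝ → ℝ, ContDiff ℝ (⊤ : ℕ∞) θ ∧ HasCompactSupport θ ∧ ∫ x, θ x = 1 := by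
  let f : ContDiffBump (0 : ℝ) := ⟨1, 2, one_pos, by norm_num⟩
  exact ⟨f.normed volume, f.contDiff_normed, f.hasCompactSupport_normed, f.integral_normed⟩

lemma locInt_mul_test {d φ : ℝ → ℝ} (hd : LocallyIntegrable d volume) (hφ : Continuous φ)
    (hc : HasCompactSupport φ) : Integrable (fun x => d x * φ x) := by
  have := hd.integrable_smul_right_of_hasCompactSupport hφ hc
  simpa [smul_eq_mul] using this

lemma test_lin {ψ θ : ℝ → ℝ} (hψ : ContDiff ℝ (⊤ : ℕ∞) ψ) (hψc : HasCompactSupport ψ)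
    (hθ : ContDiff ℝ (⊤ : ℕ∞) θ) (hθc : HasCompactSupport θ) (hθ1 : ∫ x, θ x = 1) :
    ∃ φ : ℝ → ℝ, ContDiff ℝ (⊤ : ℕ∞) φ ∧ HasCompactSupport φ ∧
      deriv φ = fun x => ψ x - (∫ y, ψ y) * θ x := by
  have hc : HasCompactSupport fun x => (∫ y, ψ y) * θ x := hθc.mul_left
  refine exists_antideriv (hψ.sub (contDiff_const.mul hθ)) (hψc.sub hc) ?_
  have i1 : Integrable ψ := hψ.continuous.integrable_of_hasCompactSupport hψc
  have i2 : Integrable θ := hθ.continuous.integrable_of_hasCompactSupport hθc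
  rw [integral_sub i1 (i2.const_mul _), integral_const_mul, hθ1]; ring

/-- Du Bois-Reymond lemma of first order. -/
lemma dbr1 {d : ℝ → ℝ} (hd : LocallyIntegrable d volume)
    (h : ∀ φ : ℝ → ℝ, ContDiff ℝ (⊤ : ℕ∞) φ → HasCompactSupport φ → ∫ x, d x * deriv φ x = 0) :
    ∃ c : ℝ, d =ᵐ[volume] fun _ => c := by
  obtain ⟨θ, hθ, hθc, hθ1⟩ := exists_bump
  refine ⟨∫ x, d x * θ x, ?_⟩
  refine ae_eq_of_integral_contDiff_smul_eq hd (locallyIntegrable_const _) fun ψ hψ hψc => ?_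
  obtain ⟨φ, hφ, hφc, hder⟩ := test_lin hψ hψc hθ hθc hθ1
  have h1 := h φ hφ hφc
  rw [hder] at h1
  have e : ∀ x, d x * (ψ x - (∫ y, ψ y) * θ x) = d x * ψ x - (∫ y, ψ y) * (d x * θ x) :=
    fun x => by ring
  simp_rw [e] at h1
  rw [integral_sub (locInt_mul_test hd hψ.continuous hψc)
    ((locInt_mul_test hd hθ.continuous hθc).const_mul _), integral_const_mul, sub_eq_zero] at h1
  simp only [smul_eq_mul]
  rw [integral_mul_const, ← h1]
  exact integral_congr_ae (Eventually.of_forall fun x => mul_comm _ _)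

lemma ibp {u v u' v' : ℝ → ℝ} (hu : ∀ x, HasDerivAt u (u' x) x) (hu' : Continuous u')
    (hv : ∀ x, HasDerivAt v (v' x) x) (hv' : Continuous v') (hc : HasCompactSupport v) :
    ∫ x, u x * v' x = -∫ x, u' x * v x := by
  have cu : Continuous u := continuous_iff_continuousAt.2 fun x => (hu x).continuousAt
  have cv : Continuous v := continuous_iff_continuousAt.2 fun x => (hv x).continuousAt
  have hcv' : HasCompactSupport v' := by
    have : v' = deriv v := funext fun x => (hv x).deriv.symm
    rw [this]; exact hc.deriv
  exact integral_mul_deriv_eq_deriv_mul_of_integrable (fun x _ => hu x) (fun x _ => hv x)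
    ((cu.mul hv').integrable_of_hasCompactSupport hcv'.mul_left)
    ((hu'.mul cv).integrable_of_hasCompactSupport hc.mul_left)
    ((cu.mul cv).integrable_of_hasCompactSupport hc.mul_left)

lemma test_hasDerivAt {φ : ℝ → ℝ} (hφ : ContDiff ℝ (⊤ : ℕ∞) φ) (x : ℝ) :
    HasDerivAt φ (deriv φ x) x :=
  ((hφ.differentiable (by simp)) x).hasDerivAt

/-- Du Bois-Reymond lemma of second order. -/
lemma dbr2 {d : ℝ → ℝ} (hd : LocallyIntegrable d volume)
    (h : ∀ φ : ℝ → ℝ, ContDiff ℝ (⊤ : ℕ∞) φ → HasCompactSupport φ →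
      ∫ x, d x * deriv (deriv φ) x = 0) :
    ∃ α β : ℝ, d =ᵐ[volume] fun x => α + β * x := by
  obtain ⟨θ, hθ, hθc, hθ1⟩ := exists_bump
  set β : ℝ := -∫ x, d x * deriv θ x with hβ
  have hlin : LocallyIntegrable (fun x : ℝ => β * x) volume :=
    (continuous_const.mul continuous_id).locallyIntegrable
  obtain ⟨α, hα⟩ := dbr1 (hd.sub hlin) (by
    intro ψ hψ hψc
    obtain ⟨φ, hφ, hφc, hder⟩ := test_lin hψ hψc hθ hθc hθ1
    have h1 := h φ hφ hφc
    have h2 : deriv (deriv φ) = fun x => deriv ψ x - (∫ y, ψ y) * deriv θ x := by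
      rw [hder]; ext x
      exact ((test_hasDerivAt hψ x).sub ((test_hasDerivAt hθ x).const_mul _)).deriv
    rw [h2] at h1
    have e : ∀ x, d x * (deriv ψ x - (∫ y, ψ y) * deriv θ x)
        = d x * deriv ψ x - (∫ y, ψ y) * (d x * deriv θ x) := fun x => by ring
    simp_rw [e] at h1
    have iψ := locInt_mul_test hd (test_deriv hψ).continuous hψc.deriv
    rw [integral_sub iψ
      ((locInt_mul_test hd (test_deriv hθ).continuous hθc.deriv).const_mul _),
      integral_const_mul] at h1
    have h3 : ∫ x, (β * x) * deriv ψ x = -∫ x, β * ψ x := by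
      refine ibp (u := fun x => β * x) (u' := fun _ => β) (fun x => ?_) continuous_const
        (test_hasDerivAt hψ) (test_deriv hψ).continuous hψc
      simpa using (hasDerivAt_id x).const_mul β
    have e2 : ∀ x, (d - fun x => β * x) x * deriv ψ x = d x * deriv ψ x - (β * x) * deriv ψ x :=
      fun x => by simp only [Pi.sub_apply]; ring
    simp_rw [e2]
    rw [integral_sub iψ (locInt_mul_test hlin (test_deriv hψ).continuous hψc.deriv), h3,
      integral_const_mul]
    linear_combination h1)
  refine ⟨α, β, ?_⟩
  filter_upwards [hα] with x hx
  simp only [Pi.sub_apply] at hx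
  linarith

/-- Integration by parts of a primitive of a locally integrable function against a test function. -/
lemma ibp_primitive {F φ : ℝ → ℝ} (hF : LocallyIntegrable F volume)
    (hφ : ContDiff ℝ (⊤ : ℕ∞) φ) (hc : HasCompactSupport φ) :
    ∫ x, (∫ t in (0 : ℝ)..x, F t) * deriv φ x = -∫ x, F x * φ x := by
  set Q : ℝ → ℝ := fun x => ∫ t in (0 : ℝ)..x, F t with hQ
  obtain ⟨R, hR⟩ := hc.isBounded.subset_closedBall 0
  rw [Real.closedBall_eq_Icc] at hR
  have hR' : tsupport φ ⊆ Ioc (-(|R| + 1)) (|R| + 1) := fun x hx => by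
    have h1 := hR hx
    have := le_abs_self R
    exact ⟨by linarith [h1.1], by linarith [h1.2]⟩
  set A := |R| + 1 with hA
  have hA0 : 0 < A := by positivity
  have hFi : ∀ s t, IntervalIntegrable F volume s t := fun s t =>
    (hF.integrableOn_isCompact isCompact_uIcc).intervalIntegrable
  have hac : AbsolutelyContinuousOnInterval Q (-A) A :=
    (hFi (-A) A).absolutelyContinuousOnInterval_intervalIntegral (by
      rw [uIcc_of_le (by linarith)]; exact ⟨by linarith, by linarith⟩)
  obtain ⟨K, hK⟩ := ContDiff.lipschitzWith_of_hasCompactSupport hc hφ (by simp)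
  have hacφ : AbsolutelyContinuousOnInterval φ (-A) A :=
    (hK.lipschitzOnWith (s := uIcc (-A) A)).absolutelyContinuousOnInterval
  have key := hac.integral_mul_deriv_eq_deriv_mul hacφ
  have z1 : φ A = 0 := by
    by_contra hne
    have := hc.isBounded
    have h1 := hR (subset_tsupport _ hne)
    have := le_abs_self R
    linarith [h1.2]
  have z2 : φ (-A) = 0 := image_eq_zero_of_notMem_tsupport fun h => by
    have := (hR' h).1; linarith
  rw [z1, z2] at key
  have hsub : ∀ f : ℝ → ℝ, (∀ x, x ∉ tsupport φ → f x = 0) → ∫ x in (-A)..A, f x = ∫ x, f x := by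
    intro f hf
    refine intervalIntegral.integral_eq_integral_of_support_subset fun x hx => hR' ?_
    by_contra hcon; exact hx (hf x hcon)
  have hderiv : ∀ᵐ x, deriv Q x = F x := by
    filter_upwards [LocallyIntegrable.ae_hasDerivAt_integral hF] with x hx
    exact (hx 0).deriv
  rw [hsub (fun x => Q x * deriv φ x) (fun x hx => by
      have : deriv φ x = 0 := by
        by_contra hne
        exact hx (support_deriv_subset hne)
      simp [this]),
    hsub (fun x => deriv Q x * φ x) (fun x hx => by
      simp [image_eq_zero_of_notMem_tsupport hx])] at key
  rw [key]
  have : ∫ x, deriv Q x * φ x = ∫ x, F x * φ x :=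
    integral_congr_ae (by filter_upwards [hderiv] with x hx; rw [hx])
  rw [this]; ring

/-- `G` is the `C¹` representative of `g`, where `-g'' + Wg = h`, and `P = G'`. -/
structure Reg (W g h G P : ℝ → ℝ) : Prop where
  ae : g =ᵐ[volume] G
  der : ∀ x, HasDerivAt G (P x) x
  cont : Continuous P
  int : ∀ s t : ℝ, ∫ x in s..t, (W x * G x - h x) = P t - P s

lemma Eqn.locInt {W g h : ℝ → ℝ} (hW : L2loc W) (he : Eqn W g h) :
    LocallyIntegrable (fun x => W x * g x - h x) volume :=
  (hW.mul (l2loc_of_memLp he.memg)).sub (l2loc_of_memLp he.memh).locInt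

/-- Elliptic regularity: distributional solutions have a `C¹` representative. -/
theorem Eqn.exists_reg {W g h : ℝ → ℝ} (hW : L2loc W) (he : Eqn W g h) :
    ∃ G P, Reg W g h G P := by
  have hF := he.locInt hW
  set F : ℝ → ℝ := fun x => W x * g x - h x with hFdef
  have hFi : ∀ s t, IntervalIntegrable F volume s t := fun s t =>
    (hF.integrableOn_isCompact isCompact_uIcc).intervalIntegrable
  set P0 : ℝ → ℝ := fun x => ∫ t in (0 : ℝ)..x, F t with hP0
  have cP0 : Continuous P0 := intervalIntegral.continuous_primitive hFi 0
  set G0 : ℝ → ℝ := fun x => ∫ t in (0 : ℝ)..x, P0 t with hG0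
  have dG0 : ∀ x, HasDerivAt G0 (P0 x) x := fun x =>
    intervalIntegral.integral_hasDerivAt_right (cP0.intervalIntegrable _ _)
      cP0.stronglyMeasurable.stronglyMeasurableAtFilter cP0.continuousAt
  have cG0 : Continuous G0 := continuous_iff_continuousAt.2 fun x => (dG0 x).continuousAt
  have hg := (l2loc_of_memLp he.memg).locInt
  obtain ⟨α, β, hαβ⟩ := dbr2 (hg.sub cG0.locallyIntegrable) (by
    intro φ hφ hc
    have i1 := locInt_mul_test hg (test_deriv (test_deriv hφ)).continuous hc.deriv.deriv
    have i2 := locInt_mul_test cG0.locallyIntegrable (test_deriv (test_deriv hφ)).continuous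
      hc.deriv.deriv
    have e2 : ∀ x, (g - G0) x * deriv (deriv φ) x
        = g x * deriv (deriv φ) x - G0 x * deriv (deriv φ) x := fun x => by
      simp only [Pi.sub_apply]; ring
    simp_rw [e2]
    rw [integral_sub i1 i2,
      ibp dG0 cP0 (test_hasDerivAt (test_deriv hφ)) (test_deriv (test_deriv hφ)).continuous
        hc.deriv, ibp_primitive hF hφ hc]
    have hw := he.weak φ hφ hc
    have i3 := locInt_mul_test (hW.mul (l2loc_of_memLp he.memg)) hφ.continuous hc
    have i4 := locInt_mul_test (l2loc_of_memLp he.memh).locInt hφ.continuous hc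
    have e3 : ∀ x, g x * (-(deriv (deriv φ) x) + W x * φ x)
        = W x * g x * φ x - g x * deriv (deriv φ) x := fun x => by ring
    simp_rw [e3] at hw
    rw [integral_sub i3 i1] at hw
    have e4 : ∀ x, F x * φ x = W x * g x * φ x - h x * φ x := fun x => by
      simp only [hFdef]; ring
    simp_rw [e4]
    rw [integral_sub i3 i4]
    linarith)
  have hae : g =ᵐ[volume] fun x => G0 x + (α + β * x) := by
    filter_upwards [hαβ] with x hx
    simp only [Pi.sub_apply] at hx
    linarith
  refine ⟨fun x => G0 x + (α + β * x), fun x => P0 x + β, hae, fun x => ?_,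
    cP0.add continuous_const, fun s t => ?_⟩
  · have := (dG0 x).add (((hasDerivAt_id x).const_mul β).const_add α)
    simp only [mul_one] at this
    exact this
  · have : ∫ x in s..t, (W x * (G0 x + (α + β * x)) - h x) = ∫ x in s..t, F x := by
      refine intervalIntegral.integral_congr_ae ?_
      filter_upwards [hae] with x hx _
      simp only [hFdef, hx]
    rw [this, add_sub_add_right_eq_sub]
    exact (intervalIntegral.integral_interval_sub_left (hFi _ _) (hFi _ _)).symm

/-! ### Pointwise control on a block -/

/-- If the derivative `P` of `G` oscillates by at most `B` on an interval, then `G` and `P` are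
controlled there by the `L²` norm of `G` and by `B`: `G` is within `Ba` of its tangent at the
midpoint, whose `L²` norm is explicit. -/
lemma tangent_bound {a p B : ℝ} (ha : 0 < a) (hB : 0 ≤ B) {G P : ℝ → ℝ}
    (hd : ∀ x, HasDerivAt G (P x) x)
    (hP : ∀ x ∈ Icc p (p + a), ∀ y ∈ Icc p (p + a), |P x - P y| ≤ B) {x : ℝ}
    (hx : x ∈ Icc p (p + a)) :
    G x ^ 2 ≤ 39 / a * (2 * (∫ y in p..(p + a), G y ^ 2) + 2 * B ^ 2 * a ^ 3) + 3 * B ^ 2 * a ^ 2 ∧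
    P x ^ 2 ≤ 24 / a ^ 3 * (2 * (∫ y in p..(p + a), G y ^ 2) + 2 * B ^ 2 * a ^ 3) + 2 * B ^ 2 := by
  set m := p + a / 2 with hm
  have hmem : m ∈ Icc p (p + a) := ⟨by linarith, by linarith⟩
  set α := G m
  set β := P m
  have cG : Continuous G := continuous_iff_continuousAt.2 fun x => (hd x).continuousAt
  have tang : ∀ y ∈ Icc p (p + a), |G y - (α + β * (y - m))| ≤ B * a := by
    intro y hy
    have hder : ∀ z ∈ Icc p (p + a),
        HasDerivWithinAt (fun z => G z - (α + β * (z - m))) (P z - β) (Icc p (p + a)) z := by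
      intro z _
      have h1 := ((((hasDerivAt_id z).sub_const m).const_mul β).const_add α)
      have := (hd z).sub h1
      simp only [mul_one] at this
      exact this.hasDerivWithinAt
    have := (convex_Icc p (p + a)).norm_image_sub_le_of_norm_hasDerivWithin_le (C := B) hder
      (fun z hz => by rw [Real.norm_eq_abs]; exact hP z hz m hmem) hmem hy
    simp only [sub_self, mul_zero, add_zero, Real.norm_eq_abs] at this
    have e : G m - α = 0 := sub_self _
    rw [e, sub_zero] at this
    refine this.trans (mul_le_mul_of_nonneg_left ?_ hB)
    rw [abs_le]; constructor <;> linarith [hy.1, hy.2]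
  have hinteg : a * α ^ 2 + β ^ 2 * a ^ 3 / 12 ≤ 2 * (∫ y in p..(p + a), G y ^ 2)
      + 2 * B ^ 2 * a ^ 3 := by
    have h1 : ∫ y in p..(p + a), (α + β * (y - m)) ^ 2 = a * α ^ 2 + β ^ 2 * a ^ 3 / 12 := by
      have hprim : ∀ y, HasDerivAt
          (fun y => α ^ 2 * y + α * β * (y - m) ^ 2 + β ^ 2 / 3 * (y - m) ^ 3)
          ((α + β * (y - m)) ^ 2) y := by
        intro y
        have h0 := (hasDerivAt_id y).sub_const m
        have := (((hasDerivAt_id y).const_mul (α ^ 2)).add ((h0.pow 2).const_mul (α * β))).add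
          ((h0.pow 3).const_mul (β ^ 2 / 3))
        exact this.congr_deriv (by simp; ring)
      rw [intervalIntegral.integral_eq_sub_of_hasDerivAt (fun y _ => hprim y)
        (Continuous.intervalIntegrable (by fun_prop) _ _)]
      rw [hm]; ring
    have h2 : ∫ y in p..(p + a), (α + β * (y - m)) ^ 2
        ≤ ∫ y in p..(p + a), (2 * G y ^ 2 + 2 * (B * a) ^ 2) := by
      refine intervalIntegral.integral_mono_on (by linarith)
        (Continuous.intervalIntegrable (by fun_prop) _ _)
        (Continuous.intervalIntegrable (by fun_prop) _ _) fun y hy => ?_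
      have h3 := tang y hy
      have h4 : (G y - (α + β * (y - m))) ^ 2 ≤ (B * a) ^ 2 := sq_le_sq' (abs_le.1 h3).1 (abs_le.1 h3).2
      nlinarith [sq_nonneg (G y + (G y - (α + β * (y - m))))]
    rw [h1, intervalIntegral.integral_add (Continuous.intervalIntegrable (by fun_prop) _ _)
      (Continuous.intervalIntegrable (by fun_prop) _ _), intervalIntegral.integral_const_mul,
      intervalIntegral.integral_const] at h2
    refine h2.trans (le_of_eq ?_)
    simp; ring
  set Q := 2 * (∫ y in p..(p + a), G y ^ 2) + 2 * B ^ 2 * a ^ 3 with hQ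
  have hα : α ^ 2 ≤ Q / a := by
    rw [le_div_iff₀ ha]
    have : 0 ≤ β ^ 2 * a ^ 3 / 12 := by positivity
    nlinarith
  have hβ : β ^ 2 ≤ 12 * Q / a ^ 3 := by
    rw [le_div_iff₀ (by positivity)]
    have : 0 ≤ a * α ^ 2 := by positivity
    nlinarith
  constructor
  · have h3 := tang x hx
    have h4 : (G x - (α + β * (x - m))) ^ 2 ≤ (B * a) ^ 2 := sq_le_sq' (abs_le.1 h3).1 (abs_le.1 h3).2
    have h5 : (x - m) ^ 2 ≤ a ^ 2 := sq_le_sq' (by linarith [hx.1]) (by linarith [hx.2])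
    have h6 : (β * (x - m)) ^ 2 ≤ 12 * Q / a := by
      have : (β * (x - m)) ^ 2 ≤ (12 * Q / a ^ 3) * a ^ 2 := by
        rw [mul_pow]
        exact mul_le_mul hβ h5 (sq_nonneg _) ((sq_nonneg _).trans hβ)
      refine this.trans (le_of_eq ?_)
      field_simp
    have h7 : G x ^ 2 ≤ 3 * (α ^ 2 + (β * (x - m)) ^ 2 + (G x - (α + β * (x - m))) ^ 2) := by
      nlinarith [sq_nonneg (α - β * (x - m)), sq_nonneg (α - (G x - (α + β * (x - m)))),
        sq_nonneg (β * (x - m) - (G x - (α + β * (x - m))))]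
    have h8 : 39 / a * Q = 3 * (Q / a + 12 * Q / a) := by field_simp; ring
    rw [h8]; nlinarith
  · have h3 := hP x hx m hmem
    have h4 : (P x - β) ^ 2 ≤ B ^ 2 := sq_le_sq' (abs_le.1 h3).1 (abs_le.1 h3).2
    have h8 : 24 / a ^ 3 * Q = 2 * (12 * Q / a ^ 3) := by ring
    rw [h8]; nlinarith [sq_nonneg (P x - β - β)]

/-- The constant in the local estimate. -/
def leC (a M : ℝ) : ℝ :=
  (39 / a + 24 / a ^ 3) * (2 + 4 * (M ^ 2 + a) * a ^ 3) + 2 * (M ^ 2 + a) * (3 * a ^ 2 + 2)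

lemma leC_pos {a M : ℝ} (ha : 0 < a) : 0 < leC a M := by unfold leC; positivity

lemma blk_mem_Icc {a : ℝ} {j : ℤ} {x : ℝ} (hx : x ∈ blk a j) : x ∈ Icc (j * a) (j * a + a) :=
  ⟨hx.1, by have := hx.2; linarith⟩

lemma setIntegral_blk {a : ℝ} (ha : 0 < a) (j : ℤ) (f : ℝ → ℝ) :
    ∫ x in blk a j, f x = ∫ x in (j * a : ℝ)..(j * a + a), f x := by
  rw [intervalIntegral.integral_of_le (by linarith), blk, integral_Ico_eq_integral_Ioc]
  congr 3; ring

lemma Reg.cG {W g h G P : ℝ → ℝ} (r : Reg W g h G P) : Continuous G :=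
  continuous_iff_continuousAt.2 fun x => (r.der x).continuousAt

lemma Reg.locInt {W g h G P : ℝ → ℝ} (hW : L2loc W) (he : Eqn W g h) (r : Reg W g h G P) :
    LocallyIntegrable (fun x => W x * G x - h x) volume := by
  refine (he.locInt hW).congr ?_
  filter_upwards [r.ae] with x hx; rw [hx]

/-- Local estimate: on each block, a solution and its derivative are bounded by the `L²` norms of
the solution and of the right-hand side on that block. -/
theorem local_est {a M : ℝ} {W g h G P : ℝ → ℝ} (hW : ULoc a W M) (he : Eqn W g h)
    (r : Reg W g h G P) (j : ℤ) {x : ℝ} (hx : x ∈ Icc (j * a) (j * a + a)) :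
    G x ^ 2 ≤ leC a M * ((∫ y in blk a j, g y ^ 2) + ∫ y in blk a j, h y ^ 2) ∧
    P x ^ 2 ≤ leC a M * ((∫ y in blk a j, g y ^ 2) + ∫ y in blk a j, h y ^ 2) := by
  have ha := hW.ha
  set N := ∫ y in blk a j, g y ^ 2 with hN
  set H := ∫ y in blk a j, h y ^ 2 with hH
  have hN0 : 0 ≤ N := integral_nonneg fun _ => sq_nonneg _
  have hH0 : 0 ≤ H := integral_nonneg fun _ => sq_nonneg _
  have hloc := r.locInt hW.l2loc he
  have hNG : ∫ y in (j * a : ℝ)..(j * a + a), G y ^ 2 = N := by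
    rw [← setIntegral_blk ha, hN]
    refine integral_congr_ae (ae_restrict_of_ae ?_)
    filter_upwards [r.ae] with x hx; simp only [hx]
  set B := ∫ y in blk a j, |W y * G y - h y| with hB
  have hB0 : 0 ≤ B := integral_nonneg fun _ => abs_nonneg _
  have mW : MemLp W 2 (volume.restrict (blk a j)) :=
    (memLp_two_iff_integrable_sq hW.meas.aestronglyMeasurable).2 (hW.int j)
  have mG : MemLp G 2 (volume.restrict (blk a j)) := (he.memg.restrict _).ae_eq
    (ae_restrict_of_ae r.ae)
  have mh : MemLp h 2 (volume.restrict (blk a j)) := he.memh.restrict _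
  have hfin : IsFiniteMeasure (volume.restrict (blk a j)) :=
    ⟨by rw [Measure.restrict_apply_univ, blk]; exact measure_Ico_lt_top⟩
  have m1 : MemLp (fun _ : ℝ => (1 : ℝ)) 2 (volume.restrict (blk a j)) := memLp_const 1
  have hB2 : B ^ 2 ≤ 2 * (M ^ 2 + a) * (N + H) := by
    have i1 : Integrable (fun y => |W y * G y|) (volume.restrict (blk a j)) :=
      (mW.integrable_mul mG).abs
    have i2 : Integrable (fun y => |h y * 1|) (volume.restrict (blk a j)) :=
      (mh.integrable_mul m1).abs
    have c1 := cs mW mG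
    have c2 := cs mh m1
    have hB1 : B ≤ (∫ y in blk a j, |W y * G y|) + ∫ y in blk a j, |h y * 1| := by
      rw [← integral_add i1 i2]
      refine integral_mono ?_ (i1.add i2) fun y => ?_
      · have := ((mW.integrable_mul mG).sub (mh.integrable (by norm_num))).abs
        exact this
      · simp only [mul_one]; exact abs_sub _ _
    have e1 : ∫ y in blk a j, G y ^ 2 = N := by rw [← hNG, setIntegral_blk ha]
    have e2 : ∫ y in blk a j, (1 : ℝ) ^ 2 = a := by
      simp [volume_blk ha]
    rw [e1] at c1
    rw [e2] at c2
    have c1' : (∫ y in blk a j, |W y * G y|) ^ 2 ≤ M ^ 2 * N :=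
      c1.trans (mul_le_mul_of_nonneg_right (hW.bd j) hN0)
    set p := ∫ y in blk a j, |W y * G y|
    set q := ∫ y in blk a j, |h y * 1|
    have hp : 0 ≤ p := integral_nonneg fun _ => abs_nonneg _
    have hq : 0 ≤ q := integral_nonneg fun _ => abs_nonneg _
    have : B ^ 2 ≤ (p + q) ^ 2 := pow_le_pow_left₀ hB0 hB1 2
    have h5 : 0 ≤ M ^ 2 * H := by positivity
    have h6 : 0 ≤ a * N := by positivity
    nlinarith [sq_nonneg (p - q)]
  have hP : ∀ x ∈ Icc (j * a : ℝ) (j * a + a), ∀ y ∈ Icc (j * a : ℝ) (j * a + a),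
      |P x - P y| ≤ B := by
    intro x hx y hy
    rw [← r.int y x, hB, setIntegral_blk ha]
    refine (intervalIntegral.norm_integral_le_integral_norm_uIoc (μ := volume)
      (f := fun x => W x * G x - h x)).trans ?_
    rw [intervalIntegral.integral_of_le (by linarith)]
    refine setIntegral_mono_set ?_ (Eventually.of_forall fun _ => abs_nonneg _) ?_
    · exact ((hloc.integrableOn_isCompact (isCompact_Icc (a := j * a) (b := j * a + a))).mono_set
        Ioc_subset_Icc_self).abs
    · refine LE.le.eventuallyLE (Ioc_subset_Ioc ?_ ?_)
      · exact le_min hy.1 hx.1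
      · exact max_le hy.2 hx.2
  obtain ⟨h1, h2⟩ := tangent_bound ha hB0 r.der hP hx
  rw [hNG] at h1 h2
  have hT : 0 ≤ N + H := by positivity
  have hQ : 2 * N + 2 * B ^ 2 * a ^ 3 ≤ (2 + 4 * (M ^ 2 + a) * a ^ 3) * (N + H) := by
    have : B ^ 2 * a ^ 3 ≤ 2 * (M ^ 2 + a) * (N + H) * a ^ 3 :=
      mul_le_mul_of_nonneg_right hB2 (by positivity)
    nlinarith
  have t1 : 0 ≤ (2 + 4 * (M ^ 2 + a) * a ^ 3) * (N + H) := by positivity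
  have f1 : 39 / a * (2 * N + 2 * B ^ 2 * a ^ 3)
      ≤ 39 / a * ((2 + 4 * (M ^ 2 + a) * a ^ 3) * (N + H)) :=
    mul_le_mul_of_nonneg_left hQ (by positivity)
  have f2 : 24 / a ^ 3 * (2 * N + 2 * B ^ 2 * a ^ 3)
      ≤ 24 / a ^ 3 * ((2 + 4 * (M ^ 2 + a) * a ^ 3) * (N + H)) :=
    mul_le_mul_of_nonneg_left hQ (by positivity)
  have f3 : 0 ≤ 24 / a ^ 3 * ((2 + 4 * (M ^ 2 + a) * a ^ 3) * (N + H)) := by positivity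
  have f4 : 0 ≤ 39 / a * ((2 + 4 * (M ^ 2 + a) * a ^ 3) * (N + H)) := by positivity
  have f5 : 3 * B ^ 2 * a ^ 2 ≤ 2 * (M ^ 2 + a) * (N + H) * (3 * a ^ 2) := by
    have := mul_le_mul_of_nonneg_right hB2 (show 0 ≤ 3 * a ^ 2 by positivity)
    linarith
  have f6 : 0 ≤ 2 * (M ^ 2 + a) * (N + H) * (3 * a ^ 2) := by positivity
  have e : leC a M * (N + H) = 39 / a * ((2 + 4 * (M ^ 2 + a) * a ^ 3) * (N + H))
    + 24 / a ^ 3 * ((2 + 4 * (M ^ 2 + a) * a ^ 3) * (N + H))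
    + 2 * (M ^ 2 + a) * (N + H) * (3 * a ^ 2) + 2 * (2 * (M ^ 2 + a) * (N + H)) := by
    unfold leC; ring
  rw [e]
  have f7 : 0 ≤ 2 * (M ^ 2 + a) * (N + H) := by positivity
  constructor <;> linarith

/-! ### Operations on solutions -/

lemma Eqn.congr {W W' g g' h h' : ℝ → ℝ} (he : Eqn W g h) (hW : W =ᵐ[volume] W')
    (hg : g =ᵐ[volume] g') (hh : h =ᵐ[volume] h') : Eqn W' g' h' := by
  refine ⟨he.memg.ae_eq hg, he.memh.ae_eq hh, fun φ hφ hc => ?_⟩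
  have h1 : ∫ x, g' x * (-(deriv (deriv φ) x) + W' x * φ x)
      = ∫ x, g x * (-(deriv (deriv φ) x) + W x * φ x) :=
    integral_congr_ae (by filter_upwards [hW, hg] with x h1 h2; rw [h1, h2])
  have h2 : ∫ x, h' x * φ x = ∫ x, h x * φ x :=
    integral_congr_ae (by filter_upwards [hh] with x h1; rw [h1])
  rw [h1, h2]; exact he.weak φ hφ hc

lemma Eqn.zero (W : ℝ → ℝ) : Eqn W (fun _ => 0) (fun _ => 0) :=
  ⟨MemLp.zero, MemLp.zero, fun φ _ _ => by simp⟩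

lemma Eqn.add {W g h g' h' : ℝ → ℝ} (hW : L2loc W) (e : Eqn W g h) (e' : Eqn W g' h') :
    Eqn W (fun x => g x + g' x) (fun x => h x + h' x) := by
  refine ⟨e.memg.add e'.memg, e.memh.add e'.memh, fun φ hφ hc => ?_⟩
  have mφ := test_memLp hφ.continuous hc
  have mL := hW.memLp_op hφ hc
  simp_rw [add_mul]
  have i1 : Integrable (fun x => g x * (-(deriv (deriv φ) x) + W x * φ x)) :=
    e.memg.integrable_mul mL
  have i2 : Integrable (fun x => g' x * (-(deriv (deriv φ) x) + W x * φ x)) :=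
    e'.memg.integrable_mul mL
  have i3 : Integrable (fun x => h x * φ x) := e.memh.integrable_mul mφ
  have i4 : Integrable (fun x => h' x * φ x) := e'.memh.integrable_mul mφ
  rw [integral_add i1 i2, integral_add i3 i4, e.weak φ hφ hc, e'.weak φ hφ hc]

lemma Eqn.smul {W g h : ℝ → ℝ} (c : ℝ) (e : Eqn W g h) :
    Eqn W (fun x => c * g x) (fun x => c * h x) := by
  refine ⟨e.memg.const_mul c, e.memh.const_mul c, fun φ hφ hc => ?_⟩
  simp_rw [mul_assoc]
  rw [integral_const_mul, integral_const_mul, e.weak φ hφ hc]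

lemma Eqn.sum {W : ℝ → ℝ} (hW : L2loc W) {ι : Type*} (s : Finset ι) (c : ι → ℝ)
    {u k : ι → ℝ → ℝ} (e : ∀ i ∈ s, Eqn W (u i) (k i)) :
    Eqn W (fun x => ∑ i ∈ s, c i * u i x) (fun x => ∑ i ∈ s, c i * k i x) := by
  classical
  induction s using Finset.induction_on with
  | empty => simpa using Eqn.zero W
  | insert i s hi ih =>
    simp_rw [Finset.sum_insert hi]
    exact ((e i (Finset.mem_insert_self _ _)).smul (c i)).add hW
      (ih fun j hj => e j (Finset.mem_insert_of_mem hj))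

/-- Changing the potential by `D` moves `D g` to the right-hand side. -/
lemma Eqn.add_pot {W D g h : ℝ → ℝ} (hW : L2loc W) (e : Eqn W g h)
    (hDg : MemLp (fun x => D x * g x) 2 volume) :
    Eqn (fun x => W x + D x) g (fun x => h x + D x * g x) := by
  refine ⟨e.memg, e.memh.add hDg, fun φ hφ hc => ?_⟩
  have mφ := test_memLp hφ.continuous hc
  have i1 : Integrable (fun x => g x * (-(deriv (deriv φ) x) + W x * φ x)) :=
    e.memg.integrable_mul (hW.memLp_op hφ hc)
  have i2 : Integrable (fun x => D x * g x * φ x) := hDg.integrable_mul mφ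
  have i3 : Integrable (fun x => h x * φ x) := e.memh.integrable_mul mφ
  have e1 : ∀ x, g x * (-(deriv (deriv φ) x) + (W x + D x) * φ x)
      = g x * (-(deriv (deriv φ) x) + W x * φ x) + D x * g x * φ x := fun x => by ring
  simp_rw [e1, add_mul]
  rw [integral_add i1 i2, integral_add i3 i2, e.weak φ hφ hc]

/-- A function dominated on each block by a summable family is integrable. -/
lemma integrable_of_blk {a : ℝ} (ha : 0 < a) {f : ℝ → ℝ} (hf0 : ∀ x, 0 ≤ f x)
    (hf : ∀ j, IntegrableOn f (blk a j)) {b : ℤ → ℝ} {s : ℝ} (hb : HasSum b s)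
    (h : ∀ j, ∫ x in blk a j, f x ≤ b j) : Integrable f ∧ ∫ x, f x ≤ s := by
  have h0 : ∀ j, 0 ≤ ∫ x in blk a j, f x := fun j => integral_nonneg hf0
  have hi : Integrable f := by
    have := integrableOn_iUnion_of_summable_integral_norm (μ := volume) (s := blk a) hf
      (by
        have e : ∀ j, ∫ x in blk a j, ‖f x‖ = ∫ x in blk a j, f x := fun j =>
          integral_congr_ae (Eventually.of_forall fun x => by
            simp only [Real.norm_eq_abs, abs_of_nonneg (hf0 x)])
        simp_rw [e]
        exact Summable.of_nonneg_of_le h0 h hb.summable)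
    rwa [iUnion_blk ha, integrableOn_univ] at this
  exact ⟨hi, hasSum_le h (hasSum_blk ha hi) hb⟩

lemma Eqn.hasSum_sq {a : ℝ} (ha : 0 < a) {W g h : ℝ → ℝ} (e : Eqn W g h) :
    HasSum (fun j => (∫ y in blk a j, g y ^ 2) + ∫ y in blk a j, h y ^ 2)
      ((∫ y, g y ^ 2) + ∫ y, h y ^ 2) :=
  (hasSum_blk ha e.memg.integrable_sq).add (hasSum_blk ha e.memh.integrable_sq)

/-- A uniformly locally `L²` potential is relatively bounded. -/
theorem pot_bound {a M δ : ℝ} {W D g h : ℝ → ℝ} (hW : ULoc a W M) (hD : ULoc a D δ)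
    (e : Eqn W g h) : MemLp (fun x => D x * g x) 2 volume ∧
      ∫ x, (D x * g x) ^ 2 ≤ leC a M * δ ^ 2 * ((∫ y, g y ^ 2) + ∫ y, h y ^ 2) := by
  obtain ⟨G, P, r⟩ := e.exists_reg hW.l2loc
  have ha := hW.ha
  have meas : AEStronglyMeasurable (fun x => D x * g x) volume :=
    hD.meas.aestronglyMeasurable.mul e.memg.1
  have hae : ∀ j, (fun x => (D x * g x) ^ 2) =ᵐ[volume.restrict (blk a j)]
      fun x => G x ^ 2 * D x ^ 2 := fun j => ae_restrict_of_ae (by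
    filter_upwards [r.ae] with x hx; rw [hx]; ring)
  have hbound : ∀ j, ∀ x ∈ blk a j, G x ^ 2 * D x ^ 2
      ≤ leC a M * ((∫ y in blk a j, g y ^ 2) + ∫ y in blk a j, h y ^ 2) * D x ^ 2 := fun j x hx =>
    mul_le_mul_of_nonneg_right (local_est hW e r j (blk_mem_Icc hx)).1 (sq_nonneg _)
  have hinteg : ∀ j, IntegrableOn (fun x => (D x * g x) ^ 2) (blk a j) := by
    intro j
    refine Integrable.mono' ((hD.int j).const_mul
      (leC a M * ((∫ y in blk a j, g y ^ 2) + ∫ y in blk a j, h y ^ 2))) (meas.pow 2).restrict ?_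
    filter_upwards [hae j, ae_restrict_mem (measurableSet_blk a j)] with x hx hxm
    rw [hx, Real.norm_of_nonneg (by positivity)]
    exact hbound j x hxm
  have key := integrable_of_blk ha (f := fun x => (D x * g x) ^ 2) (fun _ => sq_nonneg _) hinteg
    ((e.hasSum_sq ha).mul_left (leC a M * δ ^ 2)) (by
      intro j
      have hT : 0 ≤ (∫ y in blk a j, g y ^ 2) + ∫ y in blk a j, h y ^ 2 :=
        add_nonneg (integral_nonneg fun _ => sq_nonneg _) (integral_nonneg fun _ => sq_nonneg _)
      calc ∫ x in blk a j, (D x * g x) ^ 2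
          ≤ ∫ x in blk a j,
            leC a M * ((∫ y in blk a j, g y ^ 2) + ∫ y in blk a j, h y ^ 2) * D x ^ 2 := by
            refine integral_mono_ae (hinteg j) ((hD.int j).const_mul _) ?_
            filter_upwards [hae j, ae_restrict_mem (measurableSet_blk a j)] with x hx hxm
            rw [hx]; exact hbound j x hxm
        _ = leC a M * ((∫ y in blk a j, g y ^ 2) + ∫ y in blk a j, h y ^ 2)
            * ∫ x in blk a j, D x ^ 2 := integral_const_mul _ _
        _ ≤ leC a M * ((∫ y in blk a j, g y ^ 2) + ∫ y in blk a j, h y ^ 2) * δ ^ 2 :=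
            mul_le_mul_of_nonneg_left (hD.bd j) (mul_nonneg (leC_pos ha).le hT)
        _ = _ := by ring)
  exact ⟨(memLp_two_iff_integrable_sq meas).2 key.1, key.2⟩

/-! ### Cutoffs -/

/-- A smooth step, `0` for `t ≤ 1/3` and `1` for `t ≥ 2/3`. -/
def step (t : ℝ) : ℝ := Real.smoothTransition (3 * t - 1)

lemma step_contDiff : ContDiff ℝ (⊤ : ℕ∞) step :=
  Real.smoothTransition.contDiff.comp ((contDiff_const.mul contDiff_id).sub contDiff_const)

lemma step_zero {t : ℝ} (h : t < 1 / 3) : step t = 0 :=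
  Real.smoothTransition.zero_of_nonpos (by linarith)

lemma step_one {t : ℝ} (h : 2 / 3 < t) : step t = 1 :=
  Real.smoothTransition.one_of_one_le (by linarith)

lemma deriv_const_on {f : ℝ → ℝ} {U : Set ℝ} (hU : IsOpen U) {c : ℝ} (h : ∀ t ∈ U, f t = c) :
    ∀ t ∈ U, deriv f t = 0 := fun t ht => by
  have : f =ᶠ[𝓝 t] fun _ => c := by
    filter_upwards [hU.mem_nhds ht] with s hs using h s hs
  rw [this.deriv_eq, deriv_const]

lemma step_deriv_low {t : ℝ} (h : t < 1 / 3) : deriv step t = 0 :=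
  deriv_const_on isOpen_Iio (fun _ h => step_zero h) t h

lemma step_deriv_high {t : ℝ} (h : 2 / 3 < t) : deriv step t = 0 :=
  deriv_const_on isOpen_Ioi (fun _ h => step_one h) t h

lemma step_deriv2_low {t : ℝ} (h : t < 1 / 3) : deriv (deriv step) t = 0 :=
  deriv_const_on isOpen_Iio (fun _ h => step_deriv_low h) t h

lemma step_deriv2_high {t : ℝ} (h : 2 / 3 < t) : deriv (deriv step) t = 0 :=
  deriv_const_on isOpen_Ioi (fun _ h => step_deriv_high h) t h

lemma step_bound : ∃ K : ℝ, 0 ≤ K ∧ ∀ t, |deriv step t| ≤ K ∧ |deriv (deriv step) t| ≤ K := by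
  have hc : HasCompactSupport (deriv step) :=
    HasCompactSupport.intro (K := Icc (1 / 3) (2 / 3)) isCompact_Icc fun x hx => by
      rw [mem_Icc, not_and_or, not_le, not_le] at hx
      exact hx.elim step_deriv_low step_deriv_high
  obtain ⟨K1, h1⟩ := hc.exists_bound_of_continuous (test_deriv step_contDiff).continuous
  obtain ⟨K2, h2⟩ := hc.deriv.exists_bound_of_continuous
    (test_deriv (test_deriv step_contDiff)).continuous
  exact ⟨max K1 K2, (norm_nonneg _).trans ((h1 0).trans (le_max_left _ _)),
    fun t => ⟨(h1 t).trans (le_max_left _ _), (h2 t).trans (le_max_right _ _)⟩⟩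

/-- Cutoff functions between integer multiples of `a`, with uniformly bounded derivatives. -/
lemma exists_cutoff {a : ℝ} (ha : 0 < a) : ∃ K : ℝ, 0 ≤ K ∧ ∀ m n : ℤ, m + 2 ≤ n →
    ∃ χ χ1 χ2 : ℝ → ℝ, ContDiff ℝ (⊤ : ℕ∞) χ ∧ deriv χ = χ1 ∧ deriv χ1 = χ2 ∧
      (∀ x, |χ x| ≤ 1 ∧ |χ1 x| ≤ K ∧ |χ2 x| ≤ K) ∧
      (∀ x, x ∉ Ico (m * a) (n * a) → χ x = 0 ∧ χ1 x = 0 ∧ χ2 x = 0) ∧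
      (∀ x ∈ Ico ((m + 1) * a) ((n - 1) * a), χ x = 1 ∧ χ1 x = 0 ∧ χ2 x = 0) := by
  obtain ⟨K, hK, hb⟩ := step_bound
  refine ⟨2 * K / a + 2 * K / a ^ 2, by positivity, fun m n hmn => ?_⟩
  have hd0 := test_hasDerivAt step_contDiff
  have hd1 := test_hasDerivAt (test_deriv step_contDiff)
  have l1 : ∀ x, HasDerivAt (fun x : ℝ => x / a - m) (1 / a) x := fun x =>
    ((hasDerivAt_id x).div_const a).sub_const _
  have l2 : ∀ x, HasDerivAt (fun x : ℝ => n - x / a) (-(1 / a)) x := fun x =>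
    ((hasDerivAt_id x).div_const a).const_sub _
  set χ : ℝ → ℝ := fun x => step (x / a - m) + step (n - x / a) - 1 with hχ
  set χ1 : ℝ → ℝ := fun x => (deriv step (x / a - m) - deriv step (n - x / a)) / a with hχ1
  set χ2 : ℝ → ℝ := fun x =>
    (deriv (deriv step) (x / a - m) + deriv (deriv step) (n - x / a)) / a ^ 2 with hχ2
  have hmn' : (m : ℝ) + 2 ≤ n := by exact_mod_cast hmn
  have hstep : ∀ t, 0 ≤ step t ∧ step t ≤ 1 := fun t =>
    ⟨Real.smoothTransition.nonneg _, Real.smoothTransition.le_one _⟩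
  refine ⟨χ, χ1, χ2, ?_, ?_, ?_, ?_, ?_, ?_⟩
  · exact ((step_contDiff.comp ((contDiff_id.div_const a).sub contDiff_const)).add
      (step_contDiff.comp (contDiff_const.sub (contDiff_id.div_const a)))).sub contDiff_const
  · ext x
    have := (((hd0 (x / a - m)).comp x (l1 x)).add ((hd0 (n - x / a)).comp x (l2 x))).sub_const 1
    refine HasDerivAt.deriv (this.congr_deriv ?_)
    simp only [hχ1]; ring
  · ext x
    have := (((hd1 (x / a - m)).comp x (l1 x)).sub ((hd1 (n - x / a)).comp x (l2 x))).div_const a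
    refine HasDerivAt.deriv (this.congr_deriv ?_)
    simp only [hχ2]; field_simp; ring
  · intro x
    have p1 : 0 ≤ 2 * K / a := by positivity
    have p2 : 0 ≤ 2 * K / a ^ 2 := by positivity
    refine ⟨?_, ?_, ?_⟩
    · have h1 := hstep (x / a - m); have h2 := hstep (n - x / a)
      rw [abs_le]; constructor <;> simp only [hχ] <;> linarith
    · have h1 := (hb (x / a - m)).1; have h2 := (hb (n - x / a)).1
      have : |χ1 x| ≤ 2 * K / a := by
        simp only [hχ1, abs_div, abs_of_pos ha]
        gcongr
        exact (abs_sub _ _).trans (by linarith)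
      linarith
    · have h1 := (hb (x / a - m)).2; have h2 := (hb (n - x / a)).2
      have : |χ2 x| ≤ 2 * K / a ^ 2 := by
        simp only [hχ2, abs_div, abs_of_pos (pow_pos ha 2)]
        gcongr
        exact (abs_add_le _ _).trans (by linarith)
      linarith
  · intro x hx
    rw [mem_Ico, not_and_or, not_le, not_lt, ← div_lt_iff₀ ha, ← le_div_iff₀ ha] at hx
    rcases hx with hx | hx
    · have h1 : x / a - m < 1 / 3 := by linarith
      have h2 : 2 / 3 < n - x / a := by linarith
      simp [hχ, hχ1, hχ2, step_zero h1, step_one h2, step_deriv_low h1, step_deriv_high h2,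
        step_deriv2_low h1, step_deriv2_high h2]
    · have h1 : n - x / a < 1 / 3 := by linarith
      have h2 : 2 / 3 < x / a - m := by linarith
      simp [hχ, hχ1, hχ2, step_zero h1, step_one h2, step_deriv_low h1, step_deriv_high h2,
        step_deriv2_low h1, step_deriv2_high h2]
  · intro x hx
    rw [mem_Ico, ← div_lt_iff₀ ha, ← le_div_iff₀ ha] at hx
    have h1 : 2 / 3 < n - x / a := by linarith [hx.2]
    have h2 : 2 / 3 < x / a - m := by linarith [hx.1]
    simp [hχ, hχ1, hχ2, step_one h1, step_one h2, step_deriv_high h1, step_deriv_high h2,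
      step_deriv2_high h1, step_deriv2_high h2]

/-- Multiplying a solution by a smooth compactly supported function. -/
lemma Eqn.cutoff {W g h G P χ χ1 χ2 : ℝ → ℝ} (hW : L2loc W) (e : Eqn W g h) (r : Reg W g h G P)
    (hχ : ContDiff ℝ (⊤ : ℕ∞) χ) (h1 : deriv χ = χ1) (h2 : deriv χ1 = χ2)
    (hc : HasCompactSupport χ) :
    Eqn W (fun x => χ x * g x) (fun x => χ x * h x - 2 * (χ1 x * P x) - χ2 x * G x) := by
  subst h1 h2
  have c1 := test_deriv hχ
  have c2 := test_deriv c1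
  have mk : ∀ {f w : ℝ → ℝ}, Continuous f → HasCompactSupport f → L2loc w →
      MemLp (fun x => f x * w x) 2 volume := fun hf hfc hw => by
    simpa [mul_comm] using hw.memLp_mul_test hf hfc
  have lG : MemLp (fun x => deriv (deriv χ) x * G x) 2 volume :=
    test_memLp (c2.continuous.mul r.cG) hc.deriv.deriv.mul_right
  have lP : MemLp (fun x => deriv χ x * P x) 2 volume :=
    test_memLp (c1.continuous.mul r.cont) hc.deriv.mul_right
  refine ⟨mk hχ.continuous hc (l2loc_of_memLp e.memg),
    ((mk hχ.continuous hc (l2loc_of_memLp e.memh)).sub (lP.const_mul 2)).sub lG,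
    fun φ hφ hφc => ?_⟩
  have d0 := test_hasDerivAt hχ
  have d1 := test_hasDerivAt c1
  have e0 := test_hasDerivAt hφ
  have e1 := test_hasDerivAt (test_deriv hφ)
  have hder : deriv (fun x => χ x * φ x) = fun x => deriv χ x * φ x + χ x * deriv φ x :=
    funext fun x => ((d0 x).mul (e0 x)).deriv
  have hder2 : deriv (deriv (fun x => χ x * φ x)) = fun x =>
      (deriv (deriv χ) x * φ x + deriv χ x * deriv φ x)
        + (deriv χ x * deriv φ x + χ x * deriv (deriv φ) x) := by
    rw [hder]; ext x
    exact (((d1 x).mul (e0 x)).add ((d0 x).mul (e1 x))).deriv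
  have tχφ : ContDiff ℝ (⊤ : ℕ∞) (fun x => χ x * φ x) := hχ.mul hφ
  have key := e.weak _ tχφ hc.mul_right
  have ibp1 := ibp r.der r.cont (v := fun x => deriv χ x * φ x)
    (v' := fun x => deriv (deriv χ) x * φ x + deriv χ x * deriv φ x)
    (fun x => (d1 x).mul (e0 x))
    ((c2.continuous.mul hφ.continuous).add (c1.continuous.mul (test_deriv hφ).continuous))
    hc.deriv.mul_right
  have hgG : ∫ x, g x * (deriv (deriv χ) x * φ x + deriv χ x * deriv φ x)
      = ∫ x, G x * (deriv (deriv χ) x * φ x + deriv χ x * deriv φ x) :=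
    integral_congr_ae (by filter_upwards [r.ae] with x hx; rw [hx])
  have hgG2 : ∫ x, g x * (deriv (deriv χ) x * φ x) = ∫ x, (deriv (deriv χ) x * G x) * φ x :=
    integral_congr_ae (by filter_upwards [r.ae] with x hx; rw [hx]; ring)
  have mφ := test_memLp hφ.continuous hφc
  have iA : Integrable fun x => g x * (-(deriv (deriv (fun x => χ x * φ x)) x)
      + W x * (χ x * φ x)) := e.memg.integrable_mul (hW.memLp_op tχφ hc.mul_right)
  have iB : Integrable fun x => g x * (deriv (deriv χ) x * φ x + deriv χ x * deriv φ x) :=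
    e.memg.integrable_mul (test_memLp ((c2.continuous.mul hφ.continuous).add
      (c1.continuous.mul (test_deriv hφ).continuous))
      ((hc.deriv.deriv.mul_right).add (hc.deriv.mul_right)))
  have iC : Integrable fun x => g x * (deriv (deriv χ) x * φ x) :=
    e.memg.integrable_mul (test_memLp (c2.continuous.mul hφ.continuous) hc.deriv.deriv.mul_right)
  have iD : Integrable fun x => (χ x * h x) * φ x :=
    (mk hχ.continuous hc (l2loc_of_memLp e.memh)).integrable_mul mφ
  have iE : Integrable fun x => (2 * (deriv χ x * P x)) * φ x :=
    (lP.const_mul 2).integrable_mul mφ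
  have iF : Integrable fun x => (deriv (deriv χ) x * G x) * φ x := lG.integrable_mul mφ
  have lhs : ∀ x, χ x * g x * (-(deriv (deriv φ) x) + W x * φ x)
      = g x * (-(deriv (deriv (fun x => χ x * φ x)) x) + W x * (χ x * φ x))
        + 2 * (g x * (deriv (deriv χ) x * φ x + deriv χ x * deriv φ x))
        - g x * (deriv (deriv χ) x * φ x) := fun x => by rw [hder2]; ring
  simp_rw [lhs, sub_mul]
  have iAB : Integrable fun x => g x * (-(deriv (deriv (fun x => χ x * φ x)) x)
      + W x * (χ x * φ x)) + 2 * (g x * (deriv (deriv χ) x * φ x + deriv χ x * deriv φ x)) :=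
    iA.add (iB.const_mul 2)
  have iDE : Integrable fun x => (χ x * h x) * φ x - (2 * (deriv χ x * P x)) * φ x := iD.sub iE
  rw [integral_sub iAB iC, integral_add iA (iB.const_mul 2), integral_const_mul, key, hgG, ibp1,
    hgG2, integral_sub iDE iF, integral_sub iD iE]
  have s1 : ∫ x, h x * (χ x * φ x) = ∫ x, χ x * h x * φ x := integral_congr_ae
    (Eventually.of_forall fun x => by ring)
  have s2 : ∫ x, 2 * (deriv χ x * P x) * φ x = 2 * ∫ x, P x * (deriv χ x * φ x) := by
    rw [← integral_const_mul]
    exact integral_congr_ae (Eventually.of_forall fun x => by ring)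
  rw [s1, s2]; ring

lemma integral_supp {a : ℝ} (ha : 0 < a) {f : ℝ → ℝ} {m n : ℤ}
    (hf : ∀ j, IntegrableOn f (blk a j)) (h0 : ∀ x, x ∉ Ico (m * a) (n * a) → f x = 0) :
    ∫ x, f x = ∑ j ∈ Finset.Ico m n, ∫ x in blk a j, f x := by
  rw [← integral_Ico_blk ha m n hf, setIntegral_eq_integral_of_forall_compl_eq_zero h0]

lemma blk_subset {a : ℝ} (ha : 0 < a) {m n j : ℤ} (h1 : m ≤ j) (h2 : j < n) :
    blk a j ⊆ Ico (m * a) (n * a) := by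
  rw [Ico_eq_biUnion ha]
  exact subset_biUnion_of_mem (u := fun j => blk a j) (by simpa using ⟨h1, h2⟩)

/-- A solution cut off at blocks `m` and `n - 1` solves the equation up to an error that is
controlled by the right-hand side and by the solution on these two blocks. -/
theorem cutoff_lemma {a : ℝ} (ha : 0 < a) (M : ℝ) : ∃ C : ℝ, 1 ≤ C ∧
    ∀ {W g h : ℝ → ℝ}, ULoc a W M → Eqn W g h → ∀ m n : ℤ, m + 2 ≤ n →
    ∃ u k : ℝ → ℝ, Eqn W u k ∧
      (∀ x, x ∉ Ico (m * a) (n * a) → u x = 0 ∧ k x = 0) ∧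
      ∑ j ∈ Finset.Ico (m + 1) (n - 1), ∫ x in blk a j, g x ^ 2 ≤ ∫ x, u x ^ 2 ∧
      ∫ x, k x ^ 2 ≤ C * (∑ j ∈ Finset.Ico m n, (∫ x in blk a j, h x ^ 2)
        + (∫ x in blk a m, g x ^ 2) + ∫ x in blk a (n - 1), g x ^ 2) := by
  obtain ⟨K, hK, hcut⟩ := exists_cutoff ha
  have hle := (leC_pos (M := M) ha).le
  refine ⟨3 + 15 * K ^ 2 * a * leC a M, by
    have : 0 ≤ 15 * K ^ 2 * a * leC a M := by positivity
    linarith, fun {W g h} hW e m n hmn => ?_⟩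
  obtain ⟨G, P, r⟩ := e.exists_reg hW.l2loc
  obtain ⟨χ, χ1, χ2, hχ, d1, d2, hb, hoff, hon⟩ := hcut m n hmn
  have hc : HasCompactSupport χ := HasCompactSupport.intro (K := Icc (m * a) (n * a)) isCompact_Icc
    fun x hx => (hoff x fun h => hx (Ico_subset_Icc_self h)).1
  have eu := e.cutoff hW.l2loc r hχ d1 d2 hc
  set C0 := 3 + 15 * K ^ 2 * a * leC a M with hC0
  have hC01 : 1 ≤ C0 := by
    have : 0 ≤ 15 * K ^ 2 * a * leC a M := by positivity
    linarith
  set u : ℝ → ℝ := fun x => χ x * g x with hu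
  set k : ℝ → ℝ := fun x => χ x * h x - 2 * (χ1 x * P x) - χ2 x * G x with hk
  refine ⟨u, k, eu, fun x hx => ?_, ?_, ?_⟩
  · obtain ⟨p1, p2, p3⟩ := hoff x hx
    simp [hu, hk, p1, p2, p3]
  · have iu := eu.memg.integrable_sq
    rw [integral_supp ha (f := fun x => u x ^ 2) (m := m) (n := n) (fun j => iu.integrableOn)
      (fun x hx => by simp [hu, (hoff x hx).1])]
    refine (le_of_eq (Finset.sum_congr rfl fun j hj => ?_)).trans
      (Finset.sum_le_sum_of_subset_of_nonneg (Finset.Ico_subset_Ico (by omega) (by omega))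
        fun j _ _ => integral_nonneg fun _ => sq_nonneg _)
    rw [Finset.mem_Ico] at hj
    refine setIntegral_congr_fun (measurableSet_blk a j) fun x hx => ?_
    have hx' := blk_subset ha hj.1 hj.2 hx
    push_cast at hx'
    simp [hu, (hon x hx').1]
  · have ik := eu.memh.integrable_sq
    rw [integral_supp ha (f := fun x => k x ^ 2) (m := m) (n := n) (fun j => ik.integrableOn)
      (fun x hx => by obtain ⟨p1, p2, p3⟩ := hoff x hx; simp [hk, p1, p2, p3])]
    have hN0 : ∀ j, 0 ≤ ∫ x in blk a j, g x ^ 2 := fun j => integral_nonneg fun _ => sq_nonneg _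
    have hH0 : ∀ j, 0 ≤ ∫ x in blk a j, h x ^ 2 := fun j => integral_nonneg fun _ => sq_nonneg _
    have gen : ∀ j, ∫ x in blk a j, k x ^ 2
        ≤ C0 * (∫ x in blk a j, h x ^ 2) + C0 * ∫ x in blk a j, g x ^ 2 := by
      intro j
      set T := (∫ x in blk a j, g x ^ 2) + ∫ x in blk a j, h x ^ 2 with hT
      have hT0 : 0 ≤ T := add_nonneg (hN0 j) (hH0 j)
      have hfin : IsFiniteMeasure (volume.restrict (blk a j)) :=
        ⟨by rw [Measure.restrict_apply_univ, blk]; exact measure_Ico_lt_top⟩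
      have ih : IntegrableOn (fun x => 3 * h x ^ 2) (blk a j) :=
        (e.memh.integrable_sq.const_mul 3).integrableOn
      have ic : IntegrableOn (fun _ => 15 * K ^ 2 * (leC a M * T)) (blk a j) := integrable_const _
      have : ∫ x in blk a j, k x ^ 2
          ≤ ∫ x in blk a j, (3 * h x ^ 2 + 15 * K ^ 2 * (leC a M * T)) := by
        refine setIntegral_mono_on ik.integrableOn (ih.add ic) (measurableSet_blk a j)
          fun x hx => ?_
        obtain ⟨b0, b1, b2⟩ := hb x
        obtain ⟨l1, l2⟩ := local_est hW e r j (blk_mem_Icc hx)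
        have q0 : χ x ^ 2 ≤ 1 := by nlinarith [abs_le.1 b0]
        have q1 : χ1 x ^ 2 ≤ K ^ 2 := sq_le_sq' (abs_le.1 b1).1 (abs_le.1 b1).2
        have q2 : χ2 x ^ 2 ≤ K ^ 2 := sq_le_sq' (abs_le.1 b2).1 (abs_le.1 b2).2
        have w0 : (χ x * h x) ^ 2 ≤ h x ^ 2 := by
          rw [mul_pow]; nlinarith [sq_nonneg (h x)]
        have w1 : (χ1 x * P x) ^ 2 ≤ K ^ 2 * (leC a M * T) := by
          rw [mul_pow]; exact mul_le_mul q1 l2 (sq_nonneg _) (sq_nonneg _)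
        have w2 : (χ2 x * G x) ^ 2 ≤ K ^ 2 * (leC a M * T) := by
          rw [mul_pow]; exact mul_le_mul q2 l1 (sq_nonneg _) (sq_nonneg _)
        simp only [hk]
        nlinarith [sq_nonneg (χ x * h x + 2 * (χ1 x * P x)), sq_nonneg (χ x * h x + χ2 x * G x),
          sq_nonneg (2 * (χ1 x * P x) - χ2 x * G x)]
      refine this.trans ?_
      rw [integral_add ih ic, integral_const_mul, integral_const, measureReal_restrict_apply_univ,
        volume_blk ha, smul_eq_mul, ← mul_add, hC0]
      have : 0 ≤ 3 * ∫ x in blk a j, g x ^ 2 := by have := hN0 j; positivity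
      rw [add_mul, hT]
      nlinarith
    have each : ∀ j ∈ Finset.Ico m n, ∫ x in blk a j, k x ^ 2
        ≤ C0 * (∫ x in blk a j, h x ^ 2) + ((if j = m then C0 * ∫ x in blk a j, g x ^ 2 else 0)
          + (if j = n - 1 then C0 * ∫ x in blk a j, g x ^ 2 else 0)) := by
      intro j hj
      rw [Finset.mem_Ico] at hj
      have hCN : 0 ≤ C0 * ∫ x in blk a j, g x ^ 2 := mul_nonneg (by linarith) (hN0 j)
      by_cases hjm : j = m
      · have := gen j
        rw [if_pos hjm]
        split_ifs <;> linarith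
      by_cases hjn : j = n - 1
      · have := gen j
        rw [if_pos hjn, if_neg hjm]
        linarith
      · rw [if_neg hjm, if_neg hjn, add_zero, add_zero]
        have : ∫ x in blk a j, k x ^ 2 = ∫ x in blk a j, h x ^ 2 := by
          refine setIntegral_congr_fun (measurableSet_blk a j) fun x hx => ?_
          have hx' := blk_subset ha (m := m + 1) (n := n - 1) (by omega) (by omega) hx
          push_cast at hx'
          obtain ⟨p0, p1, p2⟩ := hon x hx'
          simp [hk, p0, p1, p2]
        rw [this]
        have := hH0 j
        nlinarith
    refine (Finset.sum_le_sum each).trans (le_of_eq ?_)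
    rw [Finset.sum_add_distrib, Finset.sum_add_distrib, Finset.sum_ite_eq', Finset.sum_ite_eq',
      if_pos (by rw [Finset.mem_Ico]; omega), if_pos (by rw [Finset.mem_Ico]; omega),
      ← Finset.mul_sum]
    ring

/-! ### Symmetry -/

lemma Reg.parts {W g h G P Q Q' : ℝ → ℝ} (hW : L2loc W) (e : Eqn W g h) (r : Reg W g h G P)
    (dQ : ∀ x, HasDerivAt Q (Q' x) x) (cQ : Continuous Q') (s t : ℝ) :
    ∫ x in s..t, ((W x * G x - h x) * Q x + P x * Q' x) = P t * Q t - P s * Q s := by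
  have hloc := r.locInt hW e
  have hFi : IntervalIntegrable (fun x => W x * G x - h x) volume s t :=
    (hloc.integrableOn_isCompact isCompact_uIcc).intervalIntegrable
  have hPeq : P = fun x => P s + ∫ y in s..x, (W y * G y - h y) := by
    ext x; rw [r.int]; ring
  have hPder : ∀ᵐ x, deriv P x = W x * G x - h x := by
    filter_upwards [LocallyIntegrable.ae_hasDerivAt_integral hloc] with x hx
    have := (hx s).const_add (P s)
    rw [hPeq]; exact this.deriv
  have acP : AbsolutelyContinuousOnInterval P s t := by
    have h1 := hFi.absolutelyContinuousOnInterval_intervalIntegral (c := s) left_mem_uIcc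
    have h2 : AbsolutelyContinuousOnInterval (fun _ : ℝ => P s) s t :=
      (LipschitzWith.const (P s)).lipschitzOnWith.absolutelyContinuousOnInterval (K := 0)
    rw [hPeq]; exact h2.fun_add h1
  have acQ : AbsolutelyContinuousOnInterval Q s t := by
    obtain ⟨K, hK⟩ := (isCompact_uIcc (a := s) (b := t)).exists_bound_of_continuousOn
      cQ.continuousOn
    have : LipschitzOnWith (Real.toNNReal K) Q (uIcc s t) :=
      (convex_uIcc s t).lipschitzOnWith_of_nnnorm_hasDerivWithin_le
        (fun x _ => (dQ x).hasDerivWithinAt) fun x hx => by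
          rw [← NNReal.coe_le_coe, coe_nnnorm]
          exact (hK x hx).trans (Real.le_coe_toNNReal K)
    exact this.absolutelyContinuousOnInterval
  rw [← acP.integral_deriv_mul_eq_sub acQ]
  refine intervalIntegral.integral_congr_ae ?_
  filter_upwards [hPder] with x hx _
  rw [hx, (dQ x).deriv]

/-- The maximal operator is symmetric: the Wronskian of two solutions vanishes at infinity. -/
theorem symm_eqn {a M : ℝ} {W u k w l : ℝ → ℝ} (hW : ULoc a W M) (e1 : Eqn W u k)
    (e2 : Eqn W w l) : ∫ x, u x * l x = ∫ x, k x * w x := by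
  obtain ⟨G, P, r⟩ := e1.exists_reg hW.l2loc
  obtain ⟨G2, P2, r2⟩ := e2.exists_reg hW.l2loc
  have ha := hW.ha
  have hloc := r.locInt hW.l2loc e1
  have hloc2 := r2.locInt hW.l2loc e2
  have iul : Integrable fun x => u x * l x := e1.memg.integrable_mul e2.memh
  have ikw : Integrable fun x => k x * w x := e1.memh.integrable_mul e2.memg
  have wr : ∀ s t : ℝ, ∫ x in s..t, (u x * l x - k x * w x)
      = (P t * G2 t - P2 t * G t) - (P s * G2 s - P2 s * G s) := by
    intro s t
    have hF : IntervalIntegrable (fun x => W x * G x - k x) volume s t :=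
      (hloc.integrableOn_isCompact isCompact_uIcc).intervalIntegrable
    have hF2 : IntervalIntegrable (fun x => W x * G2 x - l x) volume s t :=
      (hloc2.integrableOn_isCompact isCompact_uIcc).intervalIntegrable
    have q1 := r.parts hW.l2loc e1 r2.der r2.cont s t
    have q2 := r2.parts hW.l2loc e2 r.der r.cont s t
    have i1 : IntervalIntegrable (fun x => (W x * G x - k x) * G2 x + P x * P2 x) volume s t :=
      (hF.mul_continuousOn r2.cG.continuousOn).add
        ((r.cont.mul r2.cont).intervalIntegrable _ _)
    have i2 : IntervalIntegrable (fun x => (W x * G2 x - l x) * G x + P2 x * P x) volume s t :=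
      (hF2.mul_continuousOn r.cG.continuousOn).add
        ((r2.cont.mul r.cont).intervalIntegrable _ _)
    have : ∫ x in s..t, (u x * l x - k x * w x) = (∫ x in s..t,
        (((W x * G x - k x) * G2 x + P x * P2 x) - ((W x * G2 x - l x) * G x + P2 x * P x))) := by
      refine intervalIntegral.integral_congr_ae ?_
      filter_upwards [r.ae, r2.ae] with x h1 h2 _
      rw [h1, h2]; ring
    rw [this, intervalIntegral.integral_sub i1 i2, q1, q2]; ring
  have hnat : Tendsto (fun n : ℕ => (n : ℝ) * a) atTop atTop :=
    (tendsto_natCast_atTop_atTop).atTop_mul_const ha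
  have lim1 : Tendsto (fun n : ℕ => ∫ x in (-((n : ℝ) * a))..((n : ℝ) * a),
      (u x * l x - k x * w x)) atTop (𝓝 (∫ x, (u x * l x - k x * w x))) :=
    intervalIntegral_tendsto_integral (iul.sub ikw) (tendsto_neg_atTop_atBot.comp hnat) hnat
  set T : ℤ → ℝ := fun j => ((∫ y in blk a j, u y ^ 2) + ∫ y in blk a j, k y ^ 2)
    + ((∫ y in blk a j, w y ^ 2) + ∫ y in blk a j, l y ^ 2) with hT
  have hTs : Summable T := ((e1.hasSum_sq ha).add (e2.hasSum_sq ha)).summable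
  have bound : ∀ j : ℤ, |P (j * a) * G2 (j * a) - P2 (j * a) * G (j * a)| ≤ leC a M * T j := by
    intro j
    have hm : (j * a : ℝ) ∈ Icc (j * a : ℝ) (j * a + a) := ⟨le_rfl, by linarith⟩
    obtain ⟨p1, p2⟩ := local_est hW e1 r j hm
    obtain ⟨p3, p4⟩ := local_est hW e2 r2 j hm
    have : leC a M * T j = leC a M * ((∫ y in blk a j, u y ^ 2) + ∫ y in blk a j, k y ^ 2)
      + leC a M * ((∫ y in blk a j, w y ^ 2) + ∫ y in blk a j, l y ^ 2) := by
      rw [hT]; ring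
    rw [this, abs_le]
    constructor
    · nlinarith [sq_nonneg (P (j * a) + G2 (j * a)), sq_nonneg (P2 (j * a) - G (j * a))]
    · nlinarith [sq_nonneg (P (j * a) - G2 (j * a)), sq_nonneg (P2 (j * a) + G (j * a))]
  have hT0 : Tendsto (fun j => leC a M * T j) cofinite (𝓝 0) := by
    simpa using hTs.tendsto_cofinite_zero.const_mul (leC a M)
  have hB0 : Tendsto (fun j : ℤ => P (j * a) * G2 (j * a) - P2 (j * a) * G (j * a)) cofinite
      (𝓝 0) := squeeze_zero_norm (fun j => by rw [Real.norm_eq_abs]; exact bound j) hT0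
  have inj1 : Tendsto (fun n : ℕ => (n : ℤ)) atTop cofinite := by
    rw [← Nat.cofinite_eq_atTop]
    exact (Nat.cast_injective (R := ℤ)).tendsto_cofinite
  have inj2 : Tendsto (fun n : ℕ => -(n : ℤ)) atTop cofinite := by
    rw [← Nat.cofinite_eq_atTop]
    exact (neg_injective.comp (Nat.cast_injective (R := ℤ))).tendsto_cofinite
  have lim2 := (hB0.comp inj1).sub (hB0.comp inj2)
  rw [sub_zero] at lim2
  have : ∫ x, (u x * l x - k x * w x) = 0 := by
    refine tendsto_nhds_unique lim1 (lim2.congr fun n => ?_)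
    rw [wr]
    simp only [Function.comp_apply]
    push_cast
    rw [neg_mul]
  rw [integral_sub iul ikw, sub_eq_zero] at this
  exact this

/-! ### Translations -/

lemma Eqn.shift {W g h : ℝ → ℝ} (e : Eqn W g h) (τ : ℝ) :
    Eqn (fun x => W (x - τ)) (fun x => g (x - τ)) (fun x => h (x - τ)) := by
  have mp := measurePreserving_sub_right (volume : Measure ℝ) τ
  refine ⟨e.memg.comp_measurePreserving mp, e.memh.comp_measurePreserving mp, fun φ hφ hc => ?_⟩
  set ψ : ℝ → ℝ := fun x => φ (x + τ) with hψ
  have hψc : HasCompactSupport ψ := by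
    have := hc.comp_homeomorph (Homeomorph.addRight τ)
    exact this
  have key := e.weak ψ (hφ.comp (contDiff_id.add contDiff_const)) hψc
  have d1 : deriv ψ = fun x => deriv φ (x + τ) := funext fun x => deriv_comp_add_const φ τ x
  have d2 : deriv (deriv ψ) = fun x => deriv (deriv φ) (x + τ) := by
    rw [d1]; exact funext fun x => deriv_comp_add_const (deriv φ) τ x
  rw [d2] at key
  rw [← integral_sub_right_eq_self _ τ, ← integral_sub_right_eq_self (fun x => h x * ψ x) τ] at key
  simpa [hψ] using key

lemma ULoc.shift {a M : ℝ} {W : ℝ → ℝ} (h : ULoc a W M) (n : ℤ) :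
    ULoc a (fun x => W (x - n * a)) M := by
  have mp : ∀ j, MeasurePreserving (fun x : ℝ => x - n * a) (volume.restrict (blk a j))
      (volume.restrict (blk a (j - n))) := by
    intro j
    have := (measurePreserving_sub_right (volume : Measure ℝ) (n * a)).restrict_preimage
      (measurableSet_blk a (j - n))
    convert this using 2
    ext x
    simp only [blk, mem_preimage, mem_Ico]
    push_cast
    constructor <;> rintro ⟨h1, h2⟩ <;> constructor <;> linarith
  have emb : MeasurableEmbedding (fun x : ℝ => x - n * a) :=
    (MeasurableEquiv.subRight ((n : ℝ) * a)).measurableEmbedding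
  refine ⟨h.ha, h.hM, h.meas.comp (measurable_id.sub_const _), fun j => ?_, fun j => ?_⟩
  · exact ((mp j).integrable_comp_emb emb).2 (h.int (j - n))
  · rw [(mp j).integral_comp emb (fun x => W x ^ 2)]
    exact h.bd _

/-! ### The potential attached to a sequence -/

lemma ULoc.mono {a M M' : ℝ} {W : ℝ → ℝ} (h : ULoc a W M) (hM : M ≤ M') : ULoc a W M' :=
  ⟨h.ha, h.hM.trans hM, h.meas, h.int, fun j => (h.bd j).trans (pow_le_pow_left₀ h.hM hM 2)⟩

lemma ULoc.neg {a M : ℝ} {W : ℝ → ℝ} (h : ULoc a W M) : ULoc a (fun x => - W x) M :=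
  ⟨h.ha, h.hM, h.meas.neg, fun j => by simpa using h.int j, fun j => by simpa using h.bd j⟩

lemma ULoc.add {a M δ : ℝ} {W D : ℝ → ℝ} (h : ULoc a W M) (hD : ULoc a D δ) :
    ULoc a (fun x => W x + D x) (2 * (M + δ)) := by
  have i : ∀ j, IntegrableOn (fun x => 2 * W x ^ 2 + 2 * D x ^ 2) (blk a j) := fun j =>
    ((h.int j).const_mul 2).add ((hD.int j).const_mul 2)
  have le : ∀ x, (W x + D x) ^ 2 ≤ 2 * W x ^ 2 + 2 * D x ^ 2 := fun x => by
    nlinarith [sq_nonneg (W x - D x)]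
  have ii : ∀ j, IntegrableOn (fun x => (W x + D x) ^ 2) (blk a j) := fun j => by
    refine Integrable.mono' (i j) ((h.meas.add hD.meas).pow_const 2).aestronglyMeasurable
      (Eventually.of_forall fun x => ?_)
    rw [Real.norm_of_nonneg (sq_nonneg _)]; exact le x
  have h1 := h.hM
  have h2 := hD.hM
  refine ⟨h.ha, by linarith, h.meas.add hD.meas, ii, fun j => ?_⟩
  refine (integral_mono (ii j) (i j) le).trans ?_
  rw [integral_add ((h.int j).const_mul 2) ((hD.int j).const_mul 2), integral_const_mul,
    integral_const_mul]
  have := h.bd j; have := hD.bd j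
  nlinarith [mul_nonneg h1 h2]

lemma uloc_const {a : ℝ} (ha : 0 < a) (E : ℝ) : ULoc a (fun _ => E) ((1 + a) * |E|) := by
  refine ⟨ha, by positivity, measurable_const, fun j => ?_, fun j => ?_⟩
  · exact integrableOn_const (by rw [blk]; exact measure_Ico_lt_top.ne)
  · rw [integral_const, measureReal_restrict_apply_univ, volume_blk ha, smul_eq_mul, mul_pow, sq_abs]
    nlinarith [sq_nonneg E, mul_nonneg (sq_nonneg a) (sq_nonneg E), mul_nonneg ha.le (sq_nonneg E)]

lemma measurable_aggC {a : ℝ} (y : ℤ → L2I a) : Measurable (aggC a y) := by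
  have h1 : Measurable fun p : ℤ × ℝ => (y p.1 : ℝ → ℝ) p.2 :=
    measurable_from_prod_countable_right fun j => (Lp.stronglyMeasurable (y j)).measurable
  have h2 : Measurable fun t : ℝ => ⌊t / a⌋ := Int.measurable_floor.comp (measurable_id.div_const a)
  have h3 : Measurable fun t : ℝ => t - (⌊t / a⌋ : ℝ) * a :=
    measurable_id.sub ((measurable_from_top.comp h2).mul_const a)
  exact h1.comp (h2.prodMk h3)

lemma mp_blk (a : ℝ) (j : ℤ) : MeasurePreserving (fun x : ℝ => x - j * a)
    (volume.restrict (blk a j)) (volume.restrict (Ico 0 a)) := by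
  have := (measurePreserving_sub_right (volume : Measure ℝ) (j * a)).restrict_preimage
    (measurableSet_Ico (a := (0 : ℝ)) (b := a))
  convert this using 2
  ext x
  simp only [blk, mem_preimage, mem_Ico]
  constructor <;> rintro ⟨h1, h2⟩ <;> constructor <;> linarith

lemma L2I_norm_sq {a : ℝ} (f : L2I a) : ∫ x in Ico 0 a, (f x) ^ 2 = ‖f‖ ^ 2 := by
  rw [← real_inner_self_eq_norm_sq, L2.inner_def]
  refine integral_congr_ae (Eventually.of_forall fun x => ?_)
  simp [sq]

lemma aggC_on_blk {a : ℝ} (ha : 0 < a) (y : ℤ → L2I a) {j : ℤ} {x : ℝ} (hx : x ∈ blk a j) :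
    aggC a y x = (y j) (x - j * a) := by
  unfold aggC; rw [(mem_blk_iff ha).1 hx]

lemma uloc_aggC_sub {a δ : ℝ} (ha : 0 < a) (hδ : 0 ≤ δ) (y y' : ℤ → L2I a)
    (h : ∀ j, ‖y j - y' j‖ ≤ δ) : ULoc a (fun x => aggC a y x - aggC a y' x) δ := by
  have emb : ∀ j : ℤ, MeasurableEmbedding (fun x : ℝ => x - j * a) := fun j =>
    (MeasurableEquiv.subRight ((j : ℝ) * a)).measurableEmbedding
  have hae : ∀ j, (fun x => (y j x - y' j x) ^ 2) =ᵐ[volume.restrict (Ico 0 a)]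
      fun x => ((y j - y' j : L2I a) x) ^ 2 := fun j => by
    filter_upwards [Lp.coeFn_sub (y j) (y' j)] with x hx
    rw [hx]; rfl
  have hi : ∀ j, Integrable (fun x => (y j x - y' j x) ^ 2) (volume.restrict (Ico 0 a)) :=
    fun j => ((Lp.memLp (y j - y' j)).integrable_sq).congr (hae j).symm
  have hon : ∀ j, EqOn (fun x => (aggC a y x - aggC a y' x) ^ 2)
      (fun x => (y j (x - j * a) - y' j (x - j * a)) ^ 2) (blk a j) := fun j x hx => by
    simp only [aggC_on_blk ha y hx, aggC_on_blk ha y' hx]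
  refine ⟨ha, hδ, (measurable_aggC y).sub (measurable_aggC y'), fun j => ?_, fun j => ?_⟩
  · rw [integrableOn_congr_fun (hon j) (measurableSet_blk a j)]
    exact ((mp_blk a j).integrable_comp_emb (emb j)).2 (hi j)
  · rw [setIntegral_congr_fun (measurableSet_blk a j) (hon j),
      (mp_blk a j).integral_comp (emb j) (fun x => (y j x - y' j x) ^ 2),
      integral_congr_ae (hae j), L2I_norm_sq]
    exact pow_le_pow_left₀ (norm_nonneg _) (h j) 2

lemma uloc_aggC {a M : ℝ} (ha : 0 < a) (hM : 0 ≤ M) (y : ℤ → L2I a) (h : ∀ j, ‖y j‖ ≤ M) :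
    ULoc a (aggC a y) M := by
  have emb : ∀ j : ℤ, MeasurableEmbedding (fun x : ℝ => x - j * a) := fun j =>
    (MeasurableEquiv.subRight ((j : ℝ) * a)).measurableEmbedding
  have hon : ∀ j, EqOn (fun x => (aggC a y x) ^ 2) (fun x => (y j (x - j * a)) ^ 2) (blk a j) :=
    fun j x hx => by simp only [aggC_on_blk ha y hx]
  refine ⟨ha, hM, measurable_aggC y, fun j => ?_, fun j => ?_⟩
  · rw [integrableOn_congr_fun (hon j) (measurableSet_blk a j)]
    exact ((mp_blk a j).integrable_comp_emb (emb j) (g := fun x => (y j x) ^ 2)).2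
      (Lp.memLp (y j)).integrable_sq
  · rw [setIntegral_congr_fun (measurableSet_blk a j) (hon j),
      (mp_blk a j).integral_comp (emb j) (fun x => (y j x) ^ 2), L2I_norm_sq]
    exact pow_le_pow_left₀ (norm_nonneg _) (h j) 2

lemma aggC_shift {a : ℝ} (ha : 0 < a) (y : ℤ → L2I a) (n : ℤ) (x : ℝ) :
    aggC a y (x - n * a) = aggC a (fun j => y (j - n)) x := by
  have h : ⌊(x - n * a) / a⌋ = ⌊x / a⌋ - n := by
    rw [sub_div, mul_div_cancel_right₀ _ ha.ne', Int.floor_sub_intCast]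
  unfold aggC
  rw [h]; push_cast; congr 1; ring

/-! ### Lower bounds -/

/-- `‖(-d²/dx² + W) g‖² ≥ c ‖g‖²` on the maximal domain. -/
def LB (W : ℝ → ℝ) (c : ℝ) : Prop := ∀ g h, Eqn W g h → c * ∫ x, g x ^ 2 ≤ ∫ x, h x ^ 2

lemma LB.mono {W : ℝ → ℝ} {c c' : ℝ} (h : LB W c) (hc : c' ≤ c) : LB W c' := fun g k e =>
  (mul_le_mul_of_nonneg_right hc (integral_nonneg fun _ => sq_nonneg _)).trans (h g k e)

lemma LB.shift {W : ℝ → ℝ} {c : ℝ} (h : LB W c) (τ : ℝ) : LB (fun x => W (x - τ)) c := by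
  intro g k e
  have e' := e.shift (-τ)
  have := h _ _ (e'.congr (W' := W) (Eventually.of_forall fun x => by simp) (ae_eq_refl _)
    (ae_eq_refl _))
  rwa [integral_sub_right_eq_self (fun x => g x ^ 2) (-τ),
    integral_sub_right_eq_self (fun x => k x ^ 2) (-τ)] at this

lemma sq_sub_le_int {f g : ℝ → ℝ} (hf : MemLp f 2 volume) (hg : MemLp g 2 volume) :
    ∫ x, (f x - g x) ^ 2 ≤ 2 * (∫ x, f x ^ 2) + 2 * ∫ x, g x ^ 2 := by
  rw [← integral_const_mul, ← integral_const_mul,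
    ← integral_add (hf.integrable_sq.const_mul 2) (hg.integrable_sq.const_mul 2)]
  refine integral_mono (hf.sub hg).integrable_sq
    ((hf.integrable_sq.const_mul 2).add (hg.integrable_sq.const_mul 2)) fun x => ?_
  simp only
  nlinarith [sq_nonneg (f x + g x)]

/-- Lower bounds are stable under small perturbations of the potential. -/
theorem LB_perturb {a M c : ℝ} (ha : 0 < a) (hc : 0 < c) : ∃ δ > 0, ∃ c' > 0,
    ∀ W D, ULoc a W M → ULoc a D δ → LB W c → LB (fun x => W x + D x) c' := by
  set L := leC a (2 * (M + 1)) with hL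
  have hL0 : 0 < L := leC_pos ha
  refine ⟨min 1 (Real.sqrt (c / (4 * L))), lt_min one_pos (Real.sqrt_pos.2 (by positivity)),
    (c / 2) / (2 + c / 2), by positivity, fun W D hW hD hlb g h e => ?_⟩
  set δ := min 1 (Real.sqrt (c / (4 * L))) with hδ
  have hδ1 : δ ≤ 1 := min_le_left _ _
  have hδ2 : L * δ ^ 2 ≤ c / 4 := by
    have h1 : δ ^ 2 ≤ c / (4 * L) := by
      have := pow_le_pow_left₀ hD.hM (min_le_right 1 (Real.sqrt (c / (4 * L)))) 2
      rwa [Real.sq_sqrt (by positivity)] at this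
    calc L * δ ^ 2 ≤ L * (c / (4 * L)) := mul_le_mul_of_nonneg_left h1 hL0.le
      _ = c / 4 := by field_simp
  have hWD : ULoc a (fun x => W x + D x) (2 * (M + 1)) := (hW.add hD).mono (by linarith)
  obtain ⟨m, b⟩ := pot_bound hWD hD e
  have mneg : MemLp (fun x => -D x * g x) 2 volume := by
    have := m.neg
    simp only [neg_mul]
    exact this
  have e' := (e.add_pot hWD.l2loc mneg).congr (W' := W) (g' := g)
    (h' := fun x => h x - D x * g x) (Eventually.of_forall fun x => by ring) (ae_eq_refl _)
    (Eventually.of_forall fun x => by ring)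
  have k1 := hlb _ _ e'
  have k2 := sq_sub_le_int e.memh m
  set N := ∫ x, g x ^ 2
  set H := ∫ x, h x ^ 2
  have hN : 0 ≤ N := integral_nonneg fun _ => sq_nonneg _
  have hH : 0 ≤ H := integral_nonneg fun _ => sq_nonneg _
  have k3 : L * δ ^ 2 * (N + H) ≤ c / 4 * (N + H) :=
    mul_le_mul_of_nonneg_right hδ2 (by positivity)
  rw [div_mul_eq_mul_div, div_le_iff₀ (by positivity)]
  linarith

/-! ### Resolvents -/

lemma L2R_norm_sq (f : L2R) : ∫ x, (f x) ^ 2 = ‖f‖ ^ 2 := by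
  rw [← real_inner_self_eq_norm_sq, L2.inner_def]
  refine integral_congr_ae (Eventually.of_forall fun x => ?_)
  simp [sq]

lemma L2R_inner (f g : L2R) : inner ℝ f g = ∫ x, f x * g x := by
  rw [L2.inner_def]
  refine integral_congr_ae (Eventually.of_forall fun x => ?_)
  simp [mul_comm]

lemma inner_toLp (f : L2R) {g : ℝ → ℝ} (hg : MemLp g 2 volume) :
    inner ℝ f (hg.toLp g) = ∫ x, f x * g x := by
  rw [L2R_inner]
  refine integral_congr_ae ?_
  filter_upwards [hg.coeFn_toLp] with x hx
  rw [hx]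

lemma toLp_norm_sq {g : ℝ → ℝ} (hg : MemLp g 2 volume) : ‖hg.toLp g‖ ^ 2 = ∫ x, g x ^ 2 := by
  rw [← L2R_norm_sq]
  refine integral_congr_ae ?_
  filter_upwards [hg.coeFn_toLp] with x hx
  rw [hx]

lemma weakSchrodinger_iff {V : ℝ → ℝ} {E : ℝ} {g h : L2R} :
    WeakSchrodingerEq V E g h ↔ Eqn (fun x => V x - E) g h :=
  ⟨fun w => ⟨Lp.memLp g, Lp.memLp h, w⟩, fun e => e.weak⟩

lemma Eqn.toLp {W g h : ℝ → ℝ} (e : Eqn W g h) : Eqn W (e.memg.toLp g) (e.memh.toLp h) :=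
  e.congr (ae_eq_refl _) e.memg.coeFn_toLp.symm e.memh.coeFn_toLp.symm

/-- `T` inverts `-d²/dx² + W`. -/
structure Res (W : ℝ → ℝ) (T : L2R →L[ℝ] L2R) : Prop where
  eqn : ∀ f : L2R, Eqn W (T f) f
  uniq : ∀ g h : L2R, Eqn W g h → T h = g

lemma notMem_spec_iff {V : ℝ → ℝ} {E : ℝ} :
    E ∉ ContSpectrum V ↔ ∃ T, Res (fun x => V x - E) T := by
  simp only [ContSpectrum, mem_ofPred_eq, not_not, weakSchrodinger_iff]
  exact ⟨fun ⟨T, h1, h2⟩ => ⟨T, h1, h2⟩, fun ⟨T, h⟩ => ⟨T, h.eqn, h.uniq⟩⟩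

/-- A test function lies in the domain. -/
lemma eqn_test {W φ : ℝ → ℝ} (hW : L2loc W) (hφ : ContDiff ℝ (⊤ : ℕ∞) φ)
    (hc : HasCompactSupport φ) :
    Eqn W φ (fun x => -(deriv (deriv φ) x) + W x * φ x) := by
  refine ⟨test_memLp hφ.continuous hc, hW.memLp_op hφ hc, fun ψ hψ hψc => ?_⟩
  have t1 := test_hasDerivAt hφ
  have t2 := test_hasDerivAt (test_deriv hφ)
  have c1 := (test_deriv hφ).continuous
  have c2 := (test_deriv (test_deriv hφ)).continuous
  have s1 := test_hasDerivAt hψ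
  have s2 := test_hasDerivAt (test_deriv hψ)
  have d1 := (test_deriv hψ).continuous
  have d2 := (test_deriv (test_deriv hψ)).continuous
  have p1 := ibp t1 c1 s2 d2 hψc.deriv
  have p2 := ibp t2 c2 s1 d1 hψc
  have i0 : Integrable fun x => W x * φ x * ψ x :=
    (hW.memLp_mul_test hφ.continuous hc).integrable_mul (test_memLp hψ.continuous hψc)
  have i1 : Integrable fun x => φ x * deriv (deriv ψ) x :=
    (hφ.continuous.mul d2).integrable_of_hasCompactSupport hc.mul_right
  have i2 : Integrable fun x => deriv (deriv φ) x * ψ x :=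
    (c2.mul hψ.continuous).integrable_of_hasCompactSupport hψc.mul_left
  have l1 : ∀ x, φ x * (-(deriv (deriv ψ) x) + W x * ψ x)
      = W x * φ x * ψ x - φ x * deriv (deriv ψ) x := fun x => by ring
  have l2 : ∀ x, (-(deriv (deriv φ) x) + W x * φ x) * ψ x
      = W x * φ x * ψ x - deriv (deriv φ) x * ψ x := fun x => by ring
  simp_rw [l1, l2]
  rw [integral_sub i0 i1, integral_sub i0 i2, p1, p2, neg_neg]

/-- The graph of the maximal operator, as a subspace. -/
def graph (W : ℝ → ℝ) (hW : L2loc W) : Submodule ℝ (L2R × L2R) where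
  carrier := {p | Eqn W p.1 p.2}
  add_mem' {p q} hp hq := by
    refine (hp.add hW hq).congr (ae_eq_refl _) ?_ ?_
    · exact (Lp.coeFn_add p.1 q.1).symm
    · exact (Lp.coeFn_add p.2 q.2).symm
  zero_mem' := (Eqn.zero W).congr (ae_eq_refl _) (Lp.coeFn_zero ℝ 2 volume).symm
    (Lp.coeFn_zero ℝ 2 volume).symm
  smul_mem' c p hp := by
    refine (Eqn.smul c hp).congr (ae_eq_refl _) ?_ ?_
    · exact (Lp.coeFn_smul c p.1).symm
    · exact (Lp.coeFn_smul c p.2).symm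

lemma mem_graph {W : ℝ → ℝ} {hW : L2loc W} {p : L2R × L2R} : p ∈ graph W hW ↔ Eqn W p.1 p.2 :=
  Iff.rfl

lemma isClosed_graph (W : ℝ → ℝ) (hW : L2loc W) : IsClosed (graph W hW : Set (L2R × L2R)) := by
  have : (graph W hW : Set (L2R × L2R)) = ⋂ (φ : ℝ → ℝ) (hφ : ContDiff ℝ (⊤ : ℕ∞) φ)
      (hc : HasCompactSupport φ), {p : L2R × L2R | inner ℝ p.1 ((hW.memLp_op hφ hc).toLp _)
        = inner ℝ p.2 ((test_memLp hφ.continuous hc).toLp _)} := by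
    ext p
    simp only [SetLike.mem_coe, mem_graph, mem_iInter, mem_ofPred_eq, inner_toLp]
    exact ⟨fun e => e.weak, fun w => ⟨Lp.memLp _, Lp.memLp _, w⟩⟩
  rw [this]
  refine isClosed_iInter fun φ => isClosed_iInter fun hφ => isClosed_iInter fun hc => ?_
  exact isClosed_eq (continuous_fst.inner continuous_const) (continuous_snd.inner continuous_const)

lemma Res.lb {W : ℝ → ℝ} {T : L2R →L[ℝ] L2R} (h : Res W T) : ∃ c > 0, LB W c := by
  refine ⟨1 / (‖T‖ + 1) ^ 2, by positivity, fun g k e => ?_⟩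
  have h1 := h.uniq _ _ e.toLp
  have h2 : ‖e.memg.toLp g‖ ≤ (‖T‖ + 1) * ‖e.memh.toLp k‖ := by
    rw [← h1]
    exact (T.le_opNorm _).trans (mul_le_mul_of_nonneg_right (by linarith) (norm_nonneg _))
  have h3 := pow_le_pow_left₀ (norm_nonneg _) h2 2
  rw [mul_pow, toLp_norm_sq, toLp_norm_sq] at h3
  rw [one_div, inv_mul_le_iff₀ (by positivity)]
  exact h3

/-- A lower bound on the maximal operator makes it invertible: its range is closed, and orthogonal
to no nonzero vector, since such a vector would be in the kernel. -/
theorem LB.res {W : ℝ → ℝ} {c : ℝ} (hW : L2loc W) (hc : 0 < c) (hlb : LB W c) :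
    ∃ T, Res W T := by
  set Γ := graph W hW
  have hcomp : CompleteSpace Γ := (isClosed_graph W hW).completeSpace_coe
  have bnd : ∀ p ∈ Γ, ‖p.1‖ ≤ 1 / Real.sqrt c * ‖p.2‖ := by
    intro p hp
    have h1 := hlb _ _ (mem_graph.1 hp)
    rw [L2R_norm_sq, L2R_norm_sq] at h1
    rw [one_div, ← div_eq_inv_mul, le_div_iff₀ (Real.sqrt_pos.2 hc)]
    refine (pow_le_pow_iff_left₀ (by positivity) (norm_nonneg _) two_ne_zero).1 ?_
    rw [mul_pow, Real.sq_sqrt hc.le]; linarith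
  let f : Γ →L[ℝ] L2R := (ContinuousLinearMap.snd ℝ L2R L2R).comp Γ.subtypeL
  set K : ℝ := 1 / Real.sqrt c + 1 with hK
  have hK0 : 0 < K := by positivity
  have anti : AntilipschitzWith (Real.toNNReal K) f := by
    refine AddMonoidHomClass.antilipschitz_of_bound f fun p => ?_
    rw [Real.coe_toNNReal _ hK0.le]
    change ‖(p : L2R × L2R)‖ ≤ K * ‖(p : L2R × L2R).2‖
    have h1 := bnd _ p.2
    have h2 : 0 ≤ 1 / Real.sqrt c * ‖(p : L2R × L2R).2‖ := by positivity
    rw [Prod.norm_def, hK, add_mul, one_mul]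
    exact max_le (by linarith [norm_nonneg (p : L2R × L2R).2]) (by linarith)
  have hclosed : IsClosed (LinearMap.range f.toLinearMap : Set L2R) := by
    have := anti.isClosed_range f.uniformContinuous
    rw [LinearMap.coe_range]; exact this
  have horth : (LinearMap.range f.toLinearMap)ᗮ = ⊥ := by
    rw [Submodule.eq_bot_iff]
    intro v hv
    rw [Submodule.mem_orthogonal'] at hv
    have ev : Eqn W v (fun _ => 0) := by
      refine ⟨Lp.memLp v, MemLp.zero, fun φ hφ hcs => ?_⟩
      have he := (eqn_test hW hφ hcs).toLp
      have := hv ((hW.memLp_op hφ hcs).toLp _) ⟨⟨(_, _), mem_graph.2 he⟩, rfl⟩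
      rw [inner_toLp] at this
      simp only [zero_mul, integral_zero]
      exact this
    have := hlb _ _ ev
    rw [L2R_norm_sq] at this
    simp only [ne_eq, OfNat.ofNat_ne_zero, not_false_eq_true, zero_pow, integral_zero] at this
    have h0 : ‖v‖ ^ 2 ≤ 0 := by nlinarith [sq_nonneg ‖v‖]
    exact norm_eq_zero.1 (pow_eq_zero_iff (two_ne_zero) |>.1 (le_antisymm h0 (sq_nonneg _)))
  have hrange : LinearMap.range f.toLinearMap = ⊤ := by
    have h1 := Submodule.orthogonal_orthogonal_eq_closure (LinearMap.range f.toLinearMap)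
    rw [horth, Submodule.bot_orthogonal_eq_top] at h1
    rw [h1]
    exact (IsClosed.submodule_topologicalClosure_eq hclosed).symm
  have hbij : Function.Bijective f.toLinearMap :=
    ⟨anti.injective, LinearMap.range_eq_top.1 hrange⟩
  let e := LinearEquiv.ofBijective f.toLinearMap hbij
  let T0 : L2R →ₗ[ℝ] L2R :=
    (LinearMap.fst ℝ L2R L2R).comp (Γ.subtype.comp e.symm.toLinearMap)
  have hsnd : ∀ h, ((e.symm h : Γ) : L2R × L2R).2 = h := fun h => e.apply_symm_apply h
  let T : L2R →L[ℝ] L2R := T0.mkContinuous (1 / Real.sqrt c) fun h => by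
    have := bnd _ (e.symm h).2
    rw [hsnd] at this
    exact this
  refine ⟨T, fun h => ?_, fun g h hgh => ?_⟩
  · have := mem_graph.1 (e.symm h).2
    rw [hsnd] at this
    exact this
  · have : e.symm h = ⟨(g, h), mem_graph.2 hgh⟩ := by
      rw [LinearEquiv.symm_apply_eq]; rfl
    change ((e.symm h : Γ) : L2R × L2R).1 = g
    rw [this]

lemma Res.symm {a M : ℝ} {W : ℝ → ℝ} {T : L2R →L[ℝ] L2R} (hW : ULoc a W M) (h : Res W T)
    (f g : L2R) : inner ℝ (T f) g = inner ℝ f (T g) := by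
  rw [L2R_inner, L2R_inner]
  exact symm_eqn hW (h.eqn f) (h.eqn g)

/-- Lowering the potential by the constant `d` subtracts `d g` from the right-hand side. -/
lemma Eqn.sub_const {W : ℝ → ℝ} {g h : L2R} (hW : L2loc W) (e : Eqn W g h) (d : ℝ) :
    Eqn (fun x => W x - d) g (h - d • g : L2R) := by
  have := e.add_pot (D := fun _ => -d) hW (e.memg.const_mul (-d))
  refine this.congr (Eventually.of_forall fun x => by ring) (ae_eq_refl _) ?_
  filter_upwards [Lp.coeFn_sub h (d • g), Lp.coeFn_smul d g] with x h1 h2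
  rw [h1, Pi.sub_apply, h2, Pi.smul_apply, smul_eq_mul]; ring

lemma Res.resolvent {W : ℝ → ℝ} {T T' : L2R →L[ℝ] L2R} {d : ℝ} (hW : L2loc W)
    (h : Res W T) (h' : Res (fun x => W x - d) T') (f : L2R) :
    T f = T' f - d • T' (T f) ∧ T f = T' f - d • T (T' f) := by
  constructor
  · have := h'.uniq _ _ ((h.eqn f).sub_const hW d)
    rw [map_sub, map_smul] at this
    exact this.symm
  · have hW' : L2loc (fun x => W x - d) := hW.sub (l2loc_const d)
    have e := ((h'.eqn f).sub_const hW' (-d)).congr (W' := W)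
      (Eventually.of_forall fun x => by ring) (ae_eq_refl _) (ae_eq_refl _)
    have := h.uniq _ _ e
    rw [map_sub, map_smul, neg_smul, sub_neg_eq_add] at this
    exact eq_sub_of_add_eq this

/-- Spectral mapping for the resolvent. -/
lemma Res.isUnit_sub {W : ℝ → ℝ} {T T' : L2R →L[ℝ] L2R} {d : ℝ} (hd : d ≠ 0) (hW : L2loc W)
    (h : Res W T) (h' : Res (fun x => W x - d) T') :
    IsUnit (T - (1 / d) • (1 : L2R →L[ℝ] L2R)) := by
  refine ⟨⟨T - (1 / d) • 1, (-d) • (1 + d • T'), ?_, ?_⟩, rfl⟩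
  · ext1 f
    have := (h.resolvent hW h' f).2
    simp only [mul_apply_eq_comp, _root_.sub_apply, _root_.smul_apply, _root_.add_apply,
      one_apply_eq_self, map_add, map_smul]
    rw [this]
    match_scalars <;> field_simp <;> ring
  · ext1 f
    have e3 : T' (T f) = (1 / d) • (T' f - T f) := by
      rw [eq_comm, one_div, inv_smul_eq_iff₀ hd]
      nth_rewrite 1 [(h.resolvent hW h' f).1]; simp
    simp only [mul_apply_eq_comp, _root_.sub_apply, _root_.smul_apply, _root_.add_apply,
      one_apply_eq_self, map_sub, map_smul]
    rw [e3]
    match_scalars <;> field_simp <;> ring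

/-! ### Spectral gaps -/

/-- The norm of a symmetric operator is at most its spectral radius: if `N = ‖T‖`, then
`‖(T² - N²)x‖² ≤ N² (N² ‖x‖² - ‖Tx‖²)`, so `T² - N²` is not invertible. -/
lemma norm_le_of_units {H : Type*} [NormedAddCommGroup H] [InnerProductSpace ℝ H]
    (T : H →L[ℝ] H) (hs : ∀ x y, inner ℝ (T x) y = inner ℝ x (T y)) {b : ℝ} (hb : 0 ≤ b)
    (hu : ∀ μ : ℝ, b < |μ| → IsUnit (T - μ • (1 : H →L[ℝ] H))) : ‖T‖ ≤ b := by
  by_contra! hlt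
  set N := ‖T‖ with hN
  have hN0 : 0 < N := hb.trans_lt hlt
  have u1 := hu N (by rwa [abs_of_pos hN0])
  have u2 := hu (-N) (by rwa [abs_neg, abs_of_pos hN0])
  obtain ⟨U, hU⟩ := u1.mul u2
  have hUx : ∀ x, (U : H →L[ℝ] H) x = T (T x) - (N ^ 2) • x := by
    intro x
    rw [hU]
    simp only [mul_apply_eq_comp, _root_.sub_apply, _root_.smul_apply, one_apply_eq_self, map_sub,
      map_smul]
    module
  set κ : ℝ := 1 / (‖(↑U⁻¹ : H →L[ℝ] H)‖ + 1) with hκ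
  have hκ0 : 0 < κ := by positivity
  have hlow : ∀ x, κ * ‖x‖ ≤ ‖(U : H →L[ℝ] H) x‖ := by
    intro x
    have h1 : (↑U⁻¹ : H →L[ℝ] H) ((U : H →L[ℝ] H) x) = x := by
      rw [← mul_apply_eq_comp, Units.inv_mul, one_apply_eq_self]
    have h2 := (↑U⁻¹ : H →L[ℝ] H).le_opNorm ((U : H →L[ℝ] H) x)
    rw [h1] at h2
    rw [hκ, one_div, inv_mul_le_iff₀ (by positivity)]
    nlinarith [norm_nonneg ((U : H →L[ℝ] H) x)]
  have key : ∀ x, ‖T x‖ ^ 2 ≤ (N ^ 2 - κ ^ 2 / N ^ 2) * ‖x‖ ^ 2 := by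
    intro x
    have h1 : (κ * ‖x‖) ^ 2 ≤ ‖T (T x) - (N ^ 2) • x‖ ^ 2 := by
      have := hlow x
      rw [hUx] at this
      exact pow_le_pow_left₀ (by positivity) this 2
    have h2 : ‖T (T x) - (N ^ 2) • x‖ ^ 2
        = ‖T (T x)‖ ^ 2 - 2 * (N ^ 2 * ‖T x‖ ^ 2) + (N ^ 2) ^ 2 * ‖x‖ ^ 2 := by
      rw [norm_sub_sq_real, norm_smul, inner_smul_right, hs (T x) x, real_inner_self_eq_norm_sq,
        mul_pow, Real.norm_eq_abs, sq_abs]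
    have h3 : ‖T (T x)‖ ^ 2 ≤ N ^ 2 * ‖T x‖ ^ 2 := by
      rw [← mul_pow]; exact pow_le_pow_left₀ (norm_nonneg _) (T.le_opNorm _) 2
    have h4 : κ ^ 2 * ‖x‖ ^ 2 ≤ N ^ 2 * (N ^ 2 * ‖x‖ ^ 2 - ‖T x‖ ^ 2) := by
      rw [mul_pow] at h1; nlinarith
    rw [sub_mul, div_mul_eq_mul_div, le_sub_iff_add_le, ← le_sub_iff_add_le', div_le_iff₀ (by positivity)]
    linarith
  have hpos : 0 ≤ N ^ 2 - κ ^ 2 / N ^ 2 := by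
    by_contra! hneg
    have hz : ∀ x, T x = 0 := by
      intro x
      have h1 := key x
      have h2 : ‖T x‖ ^ 2 ≤ 0 := h1.trans (mul_nonpos_of_nonpos_of_nonneg hneg.le (sq_nonneg _))
      exact norm_eq_zero.1 (pow_eq_zero_iff two_ne_zero |>.1 (le_antisymm h2 (sq_nonneg _)))
    have : T = 0 := by ext x; simp [hz x]
    rw [hN, this, norm_zero] at hN0
    exact lt_irrefl _ hN0
  have hle : N ≤ Real.sqrt (N ^ 2 - κ ^ 2 / N ^ 2) := by
    refine T.opNorm_le_bound (Real.sqrt_nonneg _) fun x => ?_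
    refine (pow_le_pow_iff_left₀ (norm_nonneg _) (by positivity) two_ne_zero).1 ?_
    rw [mul_pow, Real.sq_sqrt hpos]
    exact key x
  have h5 := pow_le_pow_left₀ hN0.le hle 2
  rw [Real.sq_sqrt hpos] at h5
  have : 0 < κ ^ 2 / N ^ 2 := by positivity
  linarith

/-- If `(-β, β)` is free of spectrum, then `-d²/dx² + W` is bounded below by `β`. -/
lemma gap_lb {a M β : ℝ} {W : ℝ → ℝ} (hW : ULoc a W M) (hβ : 0 < β)
    (h : ∀ d : ℝ, |d| < β → ∃ T, Res (fun x => W x - d) T) : LB W (β ^ 2) := by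
  obtain ⟨T, hT⟩ := h 0 (by simpa using hβ)
  simp only [sub_zero] at hT
  have hn : ‖T‖ ≤ 1 / β := by
    refine norm_le_of_units T (hT.symm hW) (by positivity) fun μ hμ => ?_
    have hμ0 : 0 < |μ| := lt_trans (by positivity) hμ
    have hμ1 : μ ≠ 0 := abs_pos.1 hμ0
    obtain ⟨T', hT'⟩ := h (1 / μ) (by
      rw [abs_div, abs_one, div_lt_iff₀ hμ0]
      rwa [div_lt_iff₀ hβ, mul_comm] at hμ)
    have := hT.isUnit_sub (one_div_ne_zero hμ1) hW.l2loc hT'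
    rwa [one_div_one_div] at this
  intro g k e
  have h1 := hT.uniq _ _ e.toLp
  have h2 : β * ‖e.memg.toLp g‖ ≤ ‖e.memh.toLp k‖ := by
    rw [← h1]
    have := (T.le_opNorm (e.memh.toLp k)).trans (mul_le_mul_of_nonneg_right hn (norm_nonneg _))
    rwa [one_div, ← div_eq_inv_mul, le_div_iff₀ hβ, mul_comm] at this
  have h3 := pow_le_pow_left₀ (by positivity) h2 2
  rwa [mul_pow, toLp_norm_sq, toLp_norm_sq] at h3

lemma uloc_sub_const {a M : ℝ} {W : ℝ → ℝ} (hW : ULoc a W M) (E : ℝ) :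
    ∃ M', ULoc a (fun x => W x - E) M' := by
  have := hW.add (uloc_const hW.ha (-E))
  simp only [← sub_eq_add_neg] at this
  exact ⟨_, this⟩

/-- An empty spectrum would, by `gap_lb`, bound the operator below by arbitrarily large constants,
which a single test function contradicts. -/
lemma spec_nonempty {a M : ℝ} {V : ℝ → ℝ} (hV : ULoc a V M) : (ContSpectrum V).Nonempty := by
  by_contra hne
  rw [not_nonempty_iff_eq_empty] at hne
  obtain ⟨θ, hθ, hc, h1⟩ := exists_bump
  have e := eqn_test hV.l2loc hθ hc
  have hall : ∀ β > 0, LB V (β ^ 2) := fun β hβ => gap_lb hV hβ fun d _ =>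
    notMem_spec_iff.1 (by rw [hne]; exact notMem_empty d)
  have hpos : 0 < ∫ x, θ x ^ 2 := by
    have i : Integrable fun x => θ x ^ 2 := (test_memLp hθ.continuous hc).integrable_sq
    refine lt_of_le_of_ne (integral_nonneg fun x => sq_nonneg _) fun h0 => ?_
    have h2 := (integral_eq_zero_iff_of_nonneg (fun x => sq_nonneg (θ x)) i).1 h0.symm
    have h3 : ∫ x, θ x = 0 := by
      rw [← integral_zero ℝ ℝ]
      refine integral_congr_ae ?_
      filter_upwards [h2] with x hx
      simpa using hx
    rw [h3] at h1; exact zero_ne_one h1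
  set H := ∫ x, (-(deriv (deriv θ) x) + V x * θ x) ^ 2 with hH
  have hH0 : 0 ≤ H := integral_nonneg fun x => sq_nonneg _
  set β := Real.sqrt ((H + 1) / ∫ x, θ x ^ 2) with hβ
  have hβ2 : β ^ 2 * (∫ x, θ x ^ 2) = H + 1 := by
    rw [hβ, Real.sq_sqrt (by positivity), div_mul_cancel₀ _ hpos.ne']
  have := hall β (by positivity) _ _ e
  linarith

/-- A lower bound at the energy `E` puts `E` in the resolvent set. -/
lemma res_of_lb {a M c E : ℝ} {V : ℝ → ℝ} (hV : ULoc a V M) (hc : 0 < c)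
    (h : LB (fun x => V x - E) c) : E ∉ ContSpectrum V :=
  notMem_spec_iff.2 (LB.res (hV.l2loc.sub (l2loc_const E)) hc h)

lemma lb_of_notMem {E : ℝ} {V : ℝ → ℝ} (h : E ∉ ContSpectrum V) :
    ∃ c > 0, LB (fun x => V x - E) c := by
  obtain ⟨T, hT⟩ := notMem_spec_iff.1 h
  exact hT.lb

lemma uloc_const_le {a δ E : ℝ} (ha : 0 < a) (h : (1 + a) * |E| ≤ δ) : ULoc a (fun _ => E) δ :=
  (uloc_const ha E).mono h

lemma spec_closed {a M : ℝ} {V : ℝ → ℝ} (hV : ULoc a V M) : IsClosed (ContSpectrum V) := by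
  rw [← isOpen_compl_iff, Metric.isOpen_iff]
  intro E hE
  obtain ⟨c, hc, hlb⟩ := lb_of_notMem hE
  obtain ⟨M', hW⟩ := uloc_sub_const hV E
  obtain ⟨δ, hδ, c', hc', hp⟩ := LB_perturb (M := M') hV.ha hc
  have h1a : 0 < 1 + a := by linarith [hV.ha]
  refine ⟨δ / (1 + a), by positivity, fun E' hE' => ?_⟩
  rw [Metric.mem_ball, Real.dist_eq, abs_sub_comm, lt_div_iff₀ h1a] at hE'
  have := hp _ (fun _ => E - E') hW (uloc_const_le hV.ha (by linarith)) hlb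
  refine res_of_lb hV hc' ?_
  convert this using 2 with x
  ring

/-! ### Isolated points of the spectrum -/

/-- Uniqueness for the initial value problem of the homogeneous equation. -/
lemma ivp_uniq {W g G P : ℝ → ℝ} (hW : L2loc W) (r : Reg W g (fun _ => 0) G P) {t₀ : ℝ}
    (hG : G t₀ = 0) (hP : P t₀ = 0) : ∀ x, G x = 0 := by
  have hclopen : IsClopen {t | G t = 0 ∧ P t = 0} := by
    refine ⟨(isClosed_eq r.cG continuous_const).inter (isClosed_eq r.cont continuous_const), ?_⟩
    rw [Metric.isOpen_iff]
    rintro t ⟨hGt, hPt⟩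
    have hWi : IntegrableOn (fun x => |W x|) (Icc (t - 1) (t + 1)) :=
      (hW.locInt.integrableOn_isCompact isCompact_Icc).abs
    set w := ∫ x in Icc (t - 1) (t + 1), |W x| with hw
    have hw0 : 0 ≤ w := integral_nonneg fun _ => abs_nonneg _
    set ρ := min 1 (1 / (2 * (w + 1))) with hρ
    have hρ0 : 0 < ρ := lt_min one_pos (by positivity)
    have hρ1 : ρ ≤ 1 := min_le_left _ _
    have hρw : w * ρ ≤ 1 / 2 := by
      have h1 : ρ ≤ 1 / (2 * (w + 1)) := min_le_right _ _
      have h2 : w * ρ ≤ w * (1 / (2 * (w + 1))) := mul_le_mul_of_nonneg_left h1 hw0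
      refine h2.trans ?_
      rw [mul_one_div, div_le_div_iff₀ (by positivity) (by norm_num)]
      linarith
    obtain ⟨s, hs, hmax⟩ := (isCompact_Icc (a := t - ρ) (b := t + ρ)).exists_isMaxOn
      ⟨t, by constructor <;> linarith⟩ (r.cG.abs.continuousOn)
    have hmax' : ∀ x ∈ Icc (t - ρ) (t + ρ), |G x| ≤ |G s| := fun x hx => hmax hx
    have hsub : ∀ x ∈ Icc (t - ρ) (t + ρ), uIoc t x ⊆ Icc (t - ρ) (t + ρ) := by
      intro x hx
      refine uIoc_subset_uIcc.trans (uIcc_subset_Icc ⟨by linarith, by linarith⟩ hx)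
    have hPb : ∀ x ∈ Icc (t - ρ) (t + ρ), |P x| ≤ |G s| * w := by
      intro x hx
      have h1 := r.int t x
      simp only [sub_zero, hPt] at h1
      rw [← h1, ← Real.norm_eq_abs]
      refine (intervalIntegral.norm_integral_le_integral_norm_uIoc (μ := volume)).trans ?_
      have hb : IntegrableOn (fun x => |G s| * |W x|) (Icc (t - 1) (t + 1)) := hWi.const_mul _
      have hsub' : uIoc t x ⊆ Icc (t - 1) (t + 1) :=
        (hsub x hx).trans (Icc_subset_Icc (by linarith) (by linarith))
      calc ∫ y in uIoc t x, ‖W y * G y‖ ≤ ∫ y in uIoc t x, |G s| * |W y| := by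
            refine setIntegral_mono_on ?_ (hb.mono_set hsub') measurableSet_uIoc fun y hy => ?_
            · exact ((hW.locInt.integrableOn_isCompact (isCompact_Icc (a := t - 1) (b := t + 1))
                |>.mul_continuousOn r.cG.continuousOn isCompact_Icc).mono_set hsub').norm
            · rw [norm_mul, mul_comm]
              exact mul_le_mul_of_nonneg_right (hmax' y (hsub x hx hy)) (norm_nonneg _)
        _ ≤ ∫ y in Icc (t - 1) (t + 1), |G s| * |W y| :=
            setIntegral_mono_set hb (Eventually.of_forall fun y => by positivity)
              (Eventually.of_forall hsub')
        _ = |G s| * w := integral_const_mul _ _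
    have hGs : |G s| ≤ |G s| * w * ρ := by
      have h1 := (convex_Icc (t - ρ) (t + ρ)).norm_image_sub_le_of_norm_hasDerivWithin_le
        (fun x _ => (r.der x).hasDerivWithinAt) (fun x hx => hPb x hx)
        (show t ∈ Icc (t - ρ) (t + ρ) by constructor <;> linarith) hs
      rw [hGt, sub_zero, Real.norm_eq_abs, Real.norm_eq_abs] at h1
      refine h1.trans (mul_le_mul_of_nonneg_left ?_ (by positivity))
      rw [abs_le]; constructor <;> linarith [hs.1, hs.2]
    have hz : |G s| = 0 := by
      nlinarith [abs_nonneg (G s)]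
    refine ⟨ρ, hρ0, fun x hx => ?_⟩
    rw [Metric.mem_ball, Real.dist_eq, abs_lt] at hx
    have hxI : x ∈ Icc (t - ρ) (t + ρ) := ⟨by linarith, by linarith⟩
    have h1 := hmax' x hxI
    have h2 := hPb x hxI
    rw [hz] at h1
    rw [hz, zero_mul] at h2
    exact ⟨abs_eq_zero.1 (le_antisymm h1 (abs_nonneg _)),
      abs_eq_zero.1 (le_antisymm h2 (abs_nonneg _))⟩
  have := hclopen.eq_univ ⟨t₀, hG, hP⟩
  intro x
  have hx : x ∈ {t | G t = 0 ∧ P t = 0} := by rw [this]; exact mem_univ x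
  exact hx.1

lemma coeFn_sum {ι : Type*} (s : Finset ι) (c : ι → ℝ) (g : ι → L2R) :
    ⇑(∑ i ∈ s, c i • g i) =ᵐ[volume] fun x => ∑ i ∈ s, c i * g i x := by
  classical
  induction s using Finset.induction_on with
  | empty =>
    simp only [Finset.sum_empty]
    exact Lp.coeFn_zero ℝ 2 (volume : Measure ℝ)
  | insert i s hi ih =>
    rw [Finset.sum_insert hi]
    filter_upwards [ih, Lp.coeFn_add (c i • g i) (∑ i ∈ s, c i • g i), Lp.coeFn_smul (c i) (g i)]
      with x h1 h2 h3
    rw [h2, Pi.add_apply, h1, h3, Finset.sum_insert hi]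
    simp

/-- The space of square-integrable solutions has dimension at most two. -/
lemma ker_three {W : ℝ → ℝ} (hW : L2loc W) (g : Fin 3 → L2R)
    (e : ∀ i, Eqn W (g i) (fun _ => 0)) : ∃ c : Fin 3 → ℝ, c ≠ 0 ∧ ∑ i, c i • g i = 0 := by
  choose G P r using fun i => (e i).exists_reg hW
  let F : (Fin 3 → ℝ) →ₗ[ℝ] ℝ × ℝ := Fintype.linearCombination ℝ fun i => (G i 0, P i 0)
  have hF : LinearMap.ker F ≠ ⊥ := F.ker_ne_bot_of_finrank_lt (by simp)
  obtain ⟨c, hc, hc0⟩ := Submodule.exists_mem_ne_zero_of_ne_bot hF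
  refine ⟨c, hc0, ?_⟩
  rw [LinearMap.mem_ker, Fintype.linearCombination_apply] at hc
  have hc1 := congrArg Prod.fst hc
  have hc2 := congrArg Prod.snd hc
  simp only [Prod.fst_sum, Prod.snd_sum, Prod.smul_fst, Prod.smul_snd, smul_eq_mul, Prod.fst_zero,
    Prod.snd_zero] at hc1 hc2
  have rr : Reg W (fun x => ∑ i, c i * g i x) (fun _ => 0) (fun x => ∑ i, c i * G i x)
      (fun x => ∑ i, c i * P i x) := by
    refine ⟨?_, fun x => ?_, ?_, fun s t => ?_⟩
    · filter_upwards [eventually_all.2 fun i => (r i).ae] with x hx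
      exact Finset.sum_congr rfl fun i _ => by rw [hx]
    · exact HasDerivAt.fun_sum fun i _ => ((r i).der x).const_mul (c i)
    · exact continuous_finsetSum _ fun i _ => (r i).cont.const_mul (c i)
    · have h1 : ∀ x, W x * (∑ i, c i * G i x) - 0 = ∑ i, c i * (W x * G i x - 0) := by
        intro x
        rw [sub_zero, Finset.mul_sum]
        exact Finset.sum_congr rfl fun i _ => by ring
      simp_rw [h1]
      rw [intervalIntegral.integral_finsetSum, ← Finset.sum_sub_distrib]
      · refine Finset.sum_congr rfl fun i _ => ?_
        rw [intervalIntegral.integral_const_mul, (r i).int, mul_sub]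
      · intro i _
        exact (((r i).locInt hW (e i)).integrableOn_isCompact
          isCompact_uIcc).intervalIntegrable.const_mul _
  have hz := ivp_uniq hW rr hc1 hc2
  refine Lp.ext ?_
  filter_upwards [coeFn_sum Finset.univ c g, rr.ae, Lp.coeFn_zero ℝ 2 (volume : Measure ℝ)] with x h1 h2 h3
  rw [h1, h2, hz, h3]; rfl

/-- If `0` is an isolated point of the spectrum of `-d²/dx² + W`, this operator is bounded below
on the complement of its kernel. The gaps `(-κ, 0)` and `(0, κ)` give `κ |⟨k, g⟩| ≤ ‖k‖²` for `k`
the image of `g`; polarization and the density of the range do the rest. -/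
lemma isolated_lb {a M κ : ℝ} {W : ℝ → ℝ} (hW : ULoc a W M) (hκ : 0 < κ)
    (h : ∀ d : ℝ, d ≠ 0 → |d| < κ → ∃ T, Res (fun x => W x - d) T) (f k : L2R)
    (e : Eqn W f k) (ho : ∀ g : L2R, Eqn W g (fun _ => 0) → inner ℝ f g = 0) :
    κ * ‖f‖ ≤ ‖k‖ := by
  have hW2 := hW.l2loc
  have half : ∀ m : ℝ, |m| = κ / 2 → LB (fun x => W x - m) ((κ / 2) ^ 2) := by
    intro m hm
    obtain ⟨M', hW'⟩ := uloc_sub_const hW m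
    refine gap_lb hW' (by positivity) fun d hd => ?_
    obtain ⟨T, hT⟩ := h (m + d) (by
        intro h0
        have : m = -d := by linarith
        rw [this, abs_neg] at hm; linarith) (by
        calc |m + d| ≤ |m| + |d| := abs_add_le _ _
          _ < κ := by linarith)
    refine ⟨T, ?_⟩
    convert hT using 2 with x
    ring
  -- the lower bounds at the energies `±κ / 2`, whose squares are expanded
  have quad : ∀ g l : L2R, Eqn W g l → κ * |inner ℝ l g| ≤ ‖l‖ ^ 2 := by
    intro g l el
    have hm : ∀ m : ℝ, |m| = κ / 2 → 2 * m * inner ℝ l g ≤ ‖l‖ ^ 2 := by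
      intro m hm
      have h1 := half m hm _ _ (el.sub_const hW2 m)
      rw [L2R_norm_sq, L2R_norm_sq, norm_sub_sq_real, norm_smul, inner_smul_right, mul_pow,
        Real.norm_eq_abs, hm] at h1
      linarith
    have p := hm (κ / 2) (abs_of_pos (by positivity))
    have n := hm (-(κ / 2)) (by rw [abs_neg, abs_of_pos (by positivity)])
    rcases abs_cases (inner ℝ l g : ℝ) with ⟨h1, _⟩ | ⟨h1, _⟩ <;> rw [h1] <;> linarith
  have addG : ∀ {g l g' l' : L2R}, Eqn W g l → Eqn W g' l' → Eqn W (g + g' : L2R) (l + l' : L2R) :=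
    fun e1 e2 => mem_graph.1 ((graph W hW2).add_mem (x := (_, _)) (y := (_, _)) e1 e2)
  have smulG : ∀ {g l : L2R} (c : ℝ), Eqn W g l → Eqn W (c • g : L2R) (c • l : L2R) :=
    fun c e1 => mem_graph.1 ((graph W hW2).smul_mem c (x := (_, _)) e1)
  have symG : ∀ {g l g' l' : L2R}, Eqn W g l → Eqn W g' l' →
      (inner ℝ g l' : ℝ) = inner ℝ l g' := by
    intro g l g' l' e1 e2
    rw [L2R_inner, L2R_inner]; exact symm_eqn hW e1 e2
  -- polarization of the quadratic inequality, with a free scaling parameter `t`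
  have polar : ∀ g l g' l' : L2R, Eqn W g l → Eqn W g' l' → ∀ t : ℝ, 0 < t →
      κ * inner ℝ l g' ≤ (t * ‖l‖ ^ 2 + t⁻¹ * ‖l'‖ ^ 2) / 2 := by
    intro g l g' l' e1 e2 t ht
    have q1 := quad _ _ (addG (smulG t e1) e2)
    have q2 := quad _ _ (addG (smulG t e1) (smulG (-1) e2))
    have i1 : (inner ℝ (t • l + l') (t • g + g') : ℝ) - inner ℝ (t • l + (-1 : ℝ) • l')
        (t • g + (-1 : ℝ) • g') = 4 * t * inner ℝ l g' := by
      have s := symG e1 e2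
      simp only [inner_add_left, inner_add_right, inner_smul_left, inner_smul_right,
        RCLike.conj_to_real]
      rw [real_inner_comm g l', s]
      ring
    have n1 : ‖t • l + l'‖ ^ 2 + ‖t • l + (-1 : ℝ) • l'‖ ^ 2 = 2 * t ^ 2 * ‖l‖ ^ 2 + 2 * ‖l'‖ ^ 2 := by
      rw [norm_add_sq_real, norm_add_sq_real, norm_smul, norm_smul, inner_smul_right,
        inner_smul_left, mul_pow, mul_pow, Real.norm_eq_abs, sq_abs]
      simp; ring
    have b1 := le_abs_self (inner ℝ (t • l + l') (t • g + g') : ℝ)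
    have b2 := neg_abs_le (inner ℝ (t • l + (-1 : ℝ) • l') (t • g + (-1 : ℝ) • g') : ℝ)
    have : κ * (4 * t * inner ℝ l g') ≤ 2 * t ^ 2 * ‖l‖ ^ 2 + 2 * ‖l'‖ ^ 2 := by
      rw [← i1, ← n1]; nlinarith
    have h2 : κ * inner ℝ l g' = κ * (4 * t * inner ℝ l g') / (4 * t) := by
      field_simp
    rw [h2, div_le_iff₀ (by positivity)]
    have h3 : (t * ‖l‖ ^ 2 + t⁻¹ * ‖l'‖ ^ 2) / 2 * (4 * t) = 2 * t ^ 2 * ‖l‖ ^ 2 + 2 * ‖l'‖ ^ 2 := by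
      field_simp; ring
    rw [h3]; exact this
  -- `f` is a limit of elements of the range
  let Rg : Submodule ℝ L2R := (graph W hW2).map (LinearMap.snd ℝ L2R L2R)
  have hf : f ∈ Rg.topologicalClosure := by
    rw [← Submodule.orthogonal_orthogonal_eq_closure, Submodule.mem_orthogonal']
    intro v hv
    refine ho v ⟨Lp.memLp v, MemLp.zero, fun φ hφ hcs => ?_⟩
    have he := (eqn_test hW2 hφ hcs).toLp
    rw [Submodule.mem_orthogonal'] at hv
    have := hv ((hW2.memLp_op hφ hcs).toLp _) ⟨(_, _), he, rfl⟩
    rw [inner_toLp] at this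
    simp only [zero_mul, integral_zero]
    exact this
  have hlim : ∀ t : ℝ, 0 < t → κ * inner ℝ f f ≤ (t * ‖k‖ ^ 2 + t⁻¹ * ‖f‖ ^ 2) / 2 := by
    intro t ht
    have hcl : IsClosed {l' : L2R | κ * inner ℝ f l' ≤ (t * ‖k‖ ^ 2 + t⁻¹ * ‖l'‖ ^ 2) / 2} :=
      isClosed_le (by fun_prop) (by fun_prop)
    refine closure_minimal ?_ hcl hf
    rintro _ ⟨⟨g', l'⟩, hp, rfl⟩
    change κ * inner ℝ f l' ≤ (t * ‖k‖ ^ 2 + t⁻¹ * ‖l'‖ ^ 2) / 2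
    rw [symG e hp]
    exact polar _ _ _ _ e hp t ht
  rw [real_inner_self_eq_norm_sq] at hlim
  have h2 := hlim (1 / κ) (by positivity)
  rw [one_div, inv_inv] at h2
  refine (pow_le_pow_iff_left₀ (by positivity) (norm_nonneg _) two_ne_zero).1 ?_
  have h3 : κ * ‖f‖ ^ 2 ≤ κ⁻¹ * ‖k‖ ^ 2 := by linarith
  rw [← div_eq_inv_mul, le_div_iff₀ hκ] at h3
  nlinarith

/-- Compactly supported approximate eigenfunctions. -/
lemma approx_compact {a M ε : ℝ} {W : ℝ → ℝ} (hW : ULoc a W M) (hn : ∀ c > 0, ¬ LB W c)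
    (hε : 0 < ε) : ∃ (u k : ℝ → ℝ) (m n : ℤ), Eqn W u k ∧
      (∀ x, x ∉ Ico (m * a) (n * a) → u x = 0 ∧ k x = 0) ∧ 0 < ∫ x, u x ^ 2 ∧
      ∫ x, k x ^ 2 ≤ ε * ∫ x, u x ^ 2 := by
  have ha := hW.ha
  obtain ⟨C, hC, hcut⟩ := cutoff_lemma ha M
  have hC0 : 0 < C := by linarith
  have h0 := hn (ε / (4 * C)) (by positivity)
  simp only [LB, not_forall, not_le] at h0
  obtain ⟨g, h, e, hlt⟩ := h0
  set A := ∫ x, g x ^ 2 with hA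
  have hH0 : 0 ≤ ∫ x, h x ^ 2 := integral_nonneg fun _ => sq_nonneg _
  have hA0 : 0 < A := by
    by_contra! hA'
    have : ε / (4 * C) * A ≤ 0 := mul_nonpos_of_nonneg_of_nonpos (by positivity) hA'
    linarith
  have sg := hasSum_blk ha e.memg.integrable_sq
  have sh := hasSum_blk ha e.memh.integrable_sq
  have nn : ∀ (f : ℝ → ℝ) (j : ℤ), 0 ≤ ∫ x in blk a j, f x ^ 2 :=
    fun f j => integral_nonneg fun _ => sq_nonneg _
  obtain ⟨s, hs⟩ := (sg.eventually (lt_mem_nhds (half_lt_self hA0))).exists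
  have hbad : {j : ℤ | ¬ (∫ x in blk a j, g x ^ 2) < ε / (8 * C) * A}.Finite :=
    sg.summable.tendsto_cofinite_zero.eventually (gt_mem_nhds (by positivity))
  set t := s ∪ hbad.toFinset with ht
  set N : ℤ := ∑ j ∈ t, |j| + 1 with hN
  have hjN : ∀ j ∈ t, |j| < N := fun j hj => by
    have := Finset.single_le_sum (f := fun j : ℤ => |j|) (fun i _ => abs_nonneg i) hj
    omega
  have hNpos : 0 < N := by
    have : 0 ≤ ∑ j ∈ t, |j| := Finset.sum_nonneg fun i _ => abs_nonneg i
    omega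
  have hgood : ∀ j : ℤ, N ≤ |j| → (∫ x in blk a j, g x ^ 2) < ε / (8 * C) * A := by
    intro j hj
    by_contra hb
    exact absurd (hjN j (Finset.mem_union_right _ (hbad.mem_toFinset.2 hb))) (by omega)
  obtain ⟨u, k, eu, hsupp, h1, h2⟩ := hcut hW e (-N - 1) (N + 1) (by omega)
  have hsum : A / 2 < ∫ x, u x ^ 2 := by
    refine hs.trans_le (le_trans ?_ h1)
    refine Finset.sum_le_sum_of_subset_of_nonneg (fun j hj => ?_) fun j _ _ => nn g j
    have := abs_lt.1 (hjN j (Finset.mem_union_left _ hj))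
    rw [Finset.mem_Ico]; omega
  refine ⟨u, k, _, _, eu, hsupp, by linarith, h2.trans ?_⟩
  have g1 := hgood (-N - 1) (by rw [abs_of_neg (by omega)]; omega)
  have g2 := hgood (N + 1 - 1) (by rw [abs_of_pos (by omega)]; omega)
  have g3 := sum_le_hasSum (Finset.Ico (-N - 1) (N + 1)) (fun j _ => nn h j) sh
  have e1 : C * (ε / (4 * C) * A + ε / (8 * C) * A + ε / (8 * C) * A) = ε * (A / 2) := by
    field_simp; ring
  calc _ ≤ C * (ε / (4 * C) * A + ε / (8 * C) * A + ε / (8 * C) * A) :=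
        mul_le_mul_of_nonneg_left (by linarith) hC0.le
    _ = ε * (A / 2) := e1
    _ ≤ _ := mul_le_mul_of_nonneg_left hsum.le hε.le

lemma sq_sum_disj {ι : Type*} [Fintype ι] (v : ι → ℝ) (h : ∀ i j, i ≠ j → v i * v j = 0) :
    (∑ i, v i) ^ 2 = ∑ i, v i ^ 2 := by
  classical
  rw [sq, Finset.sum_mul_sum]
  refine Finset.sum_congr rfl fun i _ => ?_
  rw [Finset.sum_eq_single i (fun j _ hj => h i j hj.symm) (by simp), sq]

/-- The translate of an approximate eigenfunction by a quasi-period `n` of `y` is again an approximate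
eigenfunction, with an additional error controlled by `δ`. -/
lemma translate_approx {a M δ E : ℝ} (hδ : 0 ≤ δ) {y : ℤ → L2I a} {u k : ℝ → ℝ}
    (hW : ULoc a (fun x => aggC a y x - E) M)
    (e : Eqn (fun x => aggC a y x - E) u k) (n : ℤ) (hn : ∀ j, ‖y j - y (j - n)‖ ≤ δ) :
    ∃ k' : ℝ → ℝ, Eqn (fun x => aggC a y x - E) (fun x => u (x - n * a)) k' ∧
      (∀ x, u (x - n * a) = 0 → k (x - n * a) = 0 → k' x = 0) ∧
      ∫ x, k' x ^ 2 ≤ 2 * (∫ x, k x ^ 2) + 2 * (leC a M * δ ^ 2 * ((∫ x, u x ^ 2) + ∫ x, k x ^ 2)) := by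
  have ha := hW.ha
  set V := aggC a y with hV
  set D : ℝ → ℝ := fun x => V x - V (x - n * a) with hD
  have hDu : ULoc a D δ := by
    have := uloc_aggC_sub ha hδ y (fun j => y (j - n)) hn
    simp only [← aggC_shift ha y n] at this
    exact this
  have es := e.shift (n * a)
  have hWs := hW.shift n
  have ish : ∀ f : ℝ → ℝ, ∫ x, f (x - n * a) ^ 2 = ∫ x, f x ^ 2 := fun f =>
    integral_sub_right_eq_self (fun x => f x ^ 2) _
  obtain ⟨hm, hb⟩ := pot_bound hWs hDu es
  rw [ish, ish] at hb
  refine ⟨fun x => k (x - n * a) + D x * u (x - n * a), ?_, ?_, ?_⟩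
  · refine (es.add_pot hWs.l2loc hm).congr (Eventually.of_forall fun x => ?_) (ae_eq_refl _)
      (ae_eq_refl _)
    simp only [hD]; ring
  · intro x h1 h2
    simp only [h1, h2]; ring
  · have i1 : Integrable fun x => k (x - n * a) ^ 2 := es.memh.integrable_sq
    have i2 : Integrable fun x => (D x * u (x - n * a)) ^ 2 := hm.integrable_sq
    calc ∫ x, (k (x - n * a) + D x * u (x - n * a)) ^ 2
        ≤ ∫ x, (2 * k (x - n * a) ^ 2 + 2 * (D x * u (x - n * a)) ^ 2) := by
          refine integral_mono (es.memh.add hm).integrable_sq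
            ((i1.const_mul 2).add (i2.const_mul 2)) fun x => ?_
          simp only
          nlinarith [sq_nonneg (k (x - n * a) - D x * u (x - n * a))]
      _ = 2 * (∫ x, k x ^ 2) + 2 * ∫ x, (D x * u (x - n * a)) ^ 2 := by
          rw [integral_add (i1.const_mul 2) (i2.const_mul 2), integral_const_mul,
            integral_const_mul, ish k]
      _ ≤ _ := by linarith

/-- An isolated point of the spectrum would be an eigenvalue of multiplicity at most two, but limit
periodicity yields three disjointly supported approximate eigenfunctions. -/
theorem spec_preperfect {a : ℝ} (ha : 0 < a) {Y : Set (L2I a)} {y : ℤ →ᵇ L2I a}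
    (hy : y ∈ LPC a Y) : Preperfect (ContSpectrum (aggC a y)) := by
  intro E hE
  by_contra hacc
  set V := aggC a y with hVdef
  have hV : ULoc a V ‖y‖ := uloc_aggC ha (norm_nonneg y) y fun j => y.norm_coe_le_norm j
  obtain ⟨M, hW⟩ := uloc_sub_const hV E
  have hW2 := hW.l2loc
  obtain ⟨κ, hκ, hgap⟩ : ∃ κ > 0, ∀ E', E' ≠ E → |E' - E| < κ → E' ∉ ContSpectrum V := by
    rw [accPt_iff_nhds] at hacc
    push Not at hacc
    obtain ⟨U, hU, h⟩ := hacc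
    obtain ⟨κ, hκ, hb⟩ := Metric.mem_nhds_iff.1 hU
    exact ⟨κ, hκ, fun E' hne hlt hmem => hne (h E' ⟨hb (by rwa [Metric.mem_ball, Real.dist_eq]), hmem⟩)⟩
  have hiso := isolated_lb hW hκ (fun d hd hd' => by
    have := notMem_spec_iff.1 (hgap (E + d) (by simpa using hd) (by simpa using hd'))
    simpa only [sub_sub] using this)
  set L := leC a M with hL
  have hL0 : 0 < L := leC_pos ha
  set ε := min 1 (κ ^ 2 / 16) with hε
  have hε0 : 0 < ε := lt_min one_pos (by positivity)
  have hε1 : ε ≤ 1 := min_le_left _ _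
  have hε2 : ε ≤ κ ^ 2 / 16 := min_le_right _ _
  set δ := Real.sqrt (κ ^ 2 / (16 * L)) with hδ
  have hδ0 : 0 < δ := Real.sqrt_pos.2 (by positivity)
  have hδ2 : L * δ ^ 2 = κ ^ 2 / 16 := by
    rw [hδ, Real.sq_sqrt (by positivity)]; field_simp
  obtain ⟨u, k, m, n, e, hsupp, hu0, hk⟩ := approx_compact hW
    (fun c hc hlb => res_of_lb hV hc hlb hE) hε0
  set A := ∫ x, u x ^ 2 with hA
  -- multiples of the period of a nearby periodic sequence are quasi-periods of `y`
  obtain ⟨p, hp, hyp⟩ := Metric.mem_closure_iff.1 hy (δ / 2) (by positivity)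
  obtain ⟨⟨Q, hQ, hper⟩, -⟩ := hp
  have hperZ : ∀ i : ℤ, ∀ j, p (j - i * Q) = p j := by
    intro i
    have hp' : Function.Periodic (fun j => p j) (Q : ℤ) := hper
    intro j
    exact hp'.sub_int_mul_eq i
  have hqp : ∀ i : ℤ, ∀ j, ‖y j - y (j - i * Q)‖ ≤ δ := by
    intro i j
    have h1 : ∀ j, dist (y j) (p j) ≤ δ / 2 := fun j => (dist_coe_le_dist j).trans hyp.le
    rw [← dist_eq_norm]
    have h2 := h1 (j - i * Q)
    rw [hperZ i j] at h2
    calc dist (y j) (y (j - i * Q)) ≤ dist (y j) (p j) + dist (y (j - i * Q)) (p j) :=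
          dist_triangle_right _ _ _
      _ ≤ δ := by linarith [h1 j]
  set N : ℤ := |n - m| + 1 with hN
  have hN1 : 0 ≤ |n - m| := abs_nonneg _
  let τ : Fin 3 → ℤ := fun i => (i : ℤ) * N * Q
  choose k' ek' hk0 hkb using fun i : Fin 3 =>
    translate_approx hδ0.le hW e (τ i) (fun j => hqp ((i : ℤ) * N) j)
  let u' : Fin 3 → ℝ → ℝ := fun i x => u (x - τ i * a)
  have hu' : ∀ i, ∫ x, u' i x ^ 2 = A := fun i => integral_sub_right_eq_self (fun x => u x ^ 2) _
  have hkk : ∀ i, ∫ x, k' i x ^ 2 ≤ κ ^ 2 / 2 * A := by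
    intro i
    refine (hkb i).trans ?_
    rw [hδ2]
    have : ∫ x, k x ^ 2 ≤ A := hk.trans (by nlinarith)
    nlinarith [mul_nonneg (sq_nonneg κ) hu0.le]
  -- the shifts exceed the length of the support of `u`, so the translates have disjoint supports
  have hdisj : ∀ i j : Fin 3, i ≠ j → ∀ x, (u' i x = 0 ∧ k' i x = 0) ∨ (u' j x = 0 ∧ k' j x = 0) := by
    intro i j hij x
    by_contra! hcon
    have hin : ∀ i, (u' i x = 0 → k' i x ≠ 0) → x - τ i * a ∈ Ico (m * a) (n * a) := by
      intro i hi
      by_contra hx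
      obtain ⟨h1, h2⟩ := hsupp _ hx
      exact hi h1 (hk0 i x h1 h2)
    have hi := hin i hcon.1
    have hj := hin j hcon.2
    have key : ∀ i j : Fin 3, i < j → x - τ i * a ∈ Ico (m * a) (n * a) →
        x - τ j * a ∈ Ico (m * a) (n * a) → False := by
      intro i j hij hi hj
      have h1 : ((τ j - τ i : ℤ) : ℝ) * a < ((n - m : ℤ) : ℝ) * a := by
        push_cast
        linarith [hi.2, hj.1]
      have h2 : τ j - τ i < n - m := by exact_mod_cast lt_of_mul_lt_mul_right h1 ha.le
      have h3 : (1 : ℤ) ≤ (j : ℤ) - i := by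
        have : (i : ℕ) < j := hij
        omega
      have h4 : τ j - τ i = ((j : ℤ) - i) * (N * Q) := by simp only [τ]; ring
      have hQ1 : (1 : ℤ) ≤ Q := by exact_mod_cast hQ
      have h5 : N ≤ N * Q := by nlinarith
      have h6 : N * Q ≤ ((j : ℤ) - i) * (N * Q) := by nlinarith
      have h7 := le_abs_self (n - m)
      omega
    rcases lt_or_gt_of_ne hij with h | h
    · exact key i j h hi hj
    · exact key j i h hj hi
  -- a nontrivial combination of the three translates is orthogonal to the kernel, whose dimension
  -- is at most two
  let Kr : Submodule ℝ L2R := (graph _ hW2).comap (LinearMap.inl ℝ L2R L2R)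
  have hz : (⇑(0 : L2R) : ℝ → ℝ) =ᵐ[volume] fun _ => 0 := Lp.coeFn_zero ℝ 2 volume
  have hKr : ∀ g : L2R, g ∈ Kr ↔ Eqn (fun x => V x - E) g (fun _ => 0) := by
    intro g
    constructor
    · intro h
      exact ((mem_graph (hW := hW2)).1 h).congr (ae_eq_refl _) (ae_eq_refl _) hz
    · intro h
      exact h.congr (ae_eq_refl _) (ae_eq_refl _) hz.symm
  have hKc : IsClosed (Kr : Set L2R) :=
    (isClosed_graph _ hW2).preimage (continuous_id.prodMk continuous_const)
  have : CompleteSpace Kr := hKc.completeSpace_coe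
  let U : Fin 3 → L2R := fun i => (ek' i).memg.toLp (u' i)
  obtain ⟨c, hc0, hc⟩ := ker_three hW2 (fun i => Kr.starProjection (U i))
    fun i => (hKr _).1 (Kr.starProjection_apply_mem _)
  have hperp : ∑ i, c i • U i ∈ Krᗮ := by
    rw [← Submodule.starProjection_apply_eq_zero_iff, map_sum, ← hc]
    simp only [map_smul]
  have eF := Eqn.sum hW2 Finset.univ c (u := u') (k := k') fun i _ => ek' i
  have hFU : eF.memg.toLp _ = ∑ i, c i • U i := by
    refine Lp.ext ?_
    filter_upwards [eF.memg.coeFn_toLp, coeFn_sum Finset.univ c U,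
      eventually_all.2 fun i => (ek' i).memg.coeFn_toLp] with x h1 h2 h3
    rw [h1, h2]
    exact Finset.sum_congr rfl fun i _ => by rw [h3 i]
  have hfin := hiso (eF.memg.toLp _) (eF.memh.toLp _) eF.toLp (by
    intro g hg
    rw [hFU]
    exact Submodule.inner_left_of_mem_orthogonal ((hKr g).2 hg) hperp)
  have hfin2 := pow_le_pow_left₀ (by positivity) hfin 2
  rw [mul_pow, toLp_norm_sq, toLp_norm_sq] at hfin2
  have expand : ∀ v : Fin 3 → ℝ → ℝ, (∀ i, MemLp (v i) 2 volume) →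
      (∀ i j, i ≠ j → ∀ x, v i x = 0 ∨ v j x = 0) →
      ∫ x, (∑ i, c i * v i x) ^ 2 = ∑ i, c i ^ 2 * ∫ x, v i x ^ 2 := by
    intro v hv hd
    have h1 : ∀ x, (∑ i, c i * v i x) ^ 2 = ∑ i, c i ^ 2 * v i x ^ 2 := by
      intro x
      rw [sq_sum_disj]
      · exact Finset.sum_congr rfl fun i _ => by ring
      · intro i j hij
        rcases hd i j hij x with h | h <;> rw [h] <;> ring
    simp_rw [h1]
    rw [integral_finsetSum _ fun i _ => ((hv i).integrable_sq).const_mul _]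
    exact Finset.sum_congr rfl fun i _ => integral_const_mul _ _
  rw [expand u' (fun i => (ek' i).memg) fun i j hij x => (hdisj i j hij x).imp And.left And.left,
    expand k' (fun i => (ek' i).memh) fun i j hij x => (hdisj i j hij x).imp And.right And.right]
    at hfin2
  have hB : 0 < ∑ i, c i ^ 2 := by
    obtain ⟨i, hi⟩ := Function.ne_iff.1 hc0
    exact Finset.sum_pos' (fun i _ => sq_nonneg _) ⟨i, Finset.mem_univ i, by
      have : c i ≠ 0 := hi
      positivity⟩
  have h1 : ∑ i, c i ^ 2 * ∫ x, u' i x ^ 2 = (∑ i, c i ^ 2) * A := by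
    rw [Finset.sum_mul]; exact Finset.sum_congr rfl fun i _ => by rw [hu']
  have h2 : ∑ i, c i ^ 2 * ∫ x, k' i x ^ 2 ≤ (∑ i, c i ^ 2) * (κ ^ 2 / 2 * A) := by
    rw [Finset.sum_mul]
    exact Finset.sum_le_sum fun i _ => mul_le_mul_of_nonneg_left (hkk i) (sq_nonneg _)
  rw [h1] at hfin2
  have : 0 < κ ^ 2 * ((∑ i, c i ^ 2) * A) := by positivity
  nlinarith

/-! ### Localization of approximate eigenfunctions in boxes -/

lemma Eqn.transfer {W W' u k : ℝ → ℝ} (e : Eqn W u k) (h : ∀ x, u x ≠ 0 → W x = W' x) :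
    Eqn W' u k := by
  refine ⟨e.memg, e.memh, fun φ hφ hc => ?_⟩
  rw [← e.weak φ hφ hc]
  refine integral_congr_ae (Eventually.of_forall fun x => ?_)
  by_cases hx : u x = 0
  · simp only [hx, zero_mul]
  · simp only [h x hx]

/-- Exponential decay towards the middle of a window on which the potential agrees with a potential
in whose resolvent set `0` lies. -/
lemma decay {a : ℝ} (ha : 0 < a) (M : ℝ) {c : ℝ} (hc : 0 < c) : ∃ K > 0, ∀ {W W' g h : ℝ → ℝ},
    ULoc a W M → LB W' c → Eqn W g h → ∀ (p : ℤ) (r : ℕ), 1 ≤ r →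
    EqOn W W' (Ico ((p - r : ℤ) * a) ((p + r : ℤ) * a)) →
    (∫ x in blk a (p - 1), g x ^ 2) + (∫ x in blk a p, g x ^ 2) ≤
      (K / (1 + K)) ^ (r - 1) * (∑ j ∈ Finset.Ico (p - r) (p + r), ∫ x in blk a j, g x ^ 2)
      + K * ∑ j ∈ Finset.Ico (p - r) (p + r), ∫ x in blk a j, h x ^ 2 := by
  obtain ⟨C, hC, hcut⟩ := cutoff_lemma ha M
  have hC0 : 0 < C := by linarith
  refine ⟨C / c, by positivity, ?_⟩
  intro W W' g h hW hlb e p r hr hWW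
  set K := C / c with hK
  have hK0 : 0 < K := by positivity
  set θ := K / (1 + K) with hθ
  have hθ0 : 0 < θ := by positivity
  set H := ∑ j ∈ Finset.Ico (p - r) (p + r), ∫ x in blk a j, h x ^ 2 with hH
  have nn : ∀ (f : ℝ → ℝ) (j : ℤ), 0 ≤ ∫ x in blk a j, f x ^ 2 :=
    fun f j => integral_nonneg fun _ => sq_nonneg _
  let S : ℕ → ℝ := fun s => ∑ j ∈ Finset.Ico (p - s) (p + s), ∫ x in blk a j, g x ^ 2
  have hSsucc : ∀ s : ℕ, S (s + 1) = S s + (∫ x in blk a (p - s - 1), g x ^ 2)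
      + ∫ x in blk a (p + s), g x ^ 2 := by
    intro s
    simp only [S]
    have h1 : Finset.Ico (p - (s + 1 : ℕ)) (p + (s + 1 : ℕ))
        = insert (p - s - 1) (insert (p + s) (Finset.Ico (p - s) (p + s))) := by
      ext j; simp only [Finset.mem_Ico, Finset.mem_insert]; push_cast; omega
    rw [h1, Finset.sum_insert, Finset.sum_insert]
    · ring
    · simp
    · simp only [Finset.mem_insert, Finset.mem_Ico]; omega
  -- cut `g` off just outside the blocks counted in `S s` and use the lower bound for `W'`
  have step : ∀ s : ℕ, s + 1 ≤ r → S s ≤ θ * (H + S (s + 1)) := by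
    intro s hs
    obtain ⟨u, k, eu, hsupp, h1, h2⟩ := hcut hW e (p - s - 1) (p + s + 1) (by omega)
    have eu' : Eqn W' u k := eu.transfer fun x hx => by
      refine hWW ?_
      by_contra hx'
      refine hx (hsupp x fun hin => hx' ?_).1
      have b1 : ((p - r : ℤ) : ℝ) ≤ ((p - s - 1 : ℤ) : ℝ) := by exact_mod_cast by omega
      have b2 : ((p + s + 1 : ℤ) : ℝ) ≤ ((p + r : ℤ) : ℝ) := by exact_mod_cast by omega
      exact ⟨(mul_le_mul_of_nonneg_right b1 ha.le).trans hin.1,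
        hin.2.trans_le (mul_le_mul_of_nonneg_right b2 ha.le)⟩
    have h3 := hlb _ _ eu'
    have h4 : S s ≤ ∫ x, u x ^ 2 := by
      simpa only [sub_add_cancel, add_sub_cancel_right] using h1
    have h5 : ∑ j ∈ Finset.Ico (p - s - 1) (p + s + 1), (∫ x in blk a j, h x ^ 2) ≤ H := by
      refine Finset.sum_le_sum_of_subset_of_nonneg (fun j hj => ?_) fun j _ _ => nn h j
      rw [Finset.mem_Ico] at hj ⊢; omega
    rw [add_sub_cancel_right] at h2
    have h6 : c * S s ≤ C * (H + (S (s + 1) - S s)) := by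
      calc c * S s ≤ c * ∫ x, u x ^ 2 := mul_le_mul_of_nonneg_left h4 hc.le
        _ ≤ _ := h3.trans h2
        _ ≤ _ := mul_le_mul_of_nonneg_left (by rw [hSsucc]; linarith) hC0.le
    have h7 : S s ≤ K * (H + (S (s + 1) - S s)) := by
      rw [hK, div_mul_eq_mul_div, le_div_iff₀ hc]; linarith
    rw [hθ, div_mul_eq_mul_div, le_div_iff₀ (by positivity)]
    nlinarith
  have hH0 : 0 ≤ H := Finset.sum_nonneg fun j _ => nn h j
  have iter : ∀ t : ℕ, t ≤ r → S (r - t) ≤ θ ^ t * S r + K * H := by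
    intro t
    induction t with
    | zero => intro _; simp only [Nat.sub_zero, pow_zero, one_mul]; nlinarith
    | succ t ih =>
      intro ht
      have h1 := step (r - (t + 1)) (by omega)
      rw [show r - (t + 1) + 1 = r - t by omega] at h1
      have h2 := ih (by omega)
      have h3 : θ * (1 + K) = K := by rw [hθ]; field_simp
      calc S (r - (t + 1)) ≤ θ * (H + S (r - t)) := h1
        _ ≤ θ * (H + (θ ^ t * S r + K * H)) := by gcongr
        _ = θ ^ (t + 1) * S r + θ * (1 + K) * H := by ring
        _ = _ := by rw [h3]
  have := iter (r - 1) (by omega)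
  rw [show r - (r - 1) = 0 + 1 by omega, hSsucc 0] at this
  have hS0 : S 0 = 0 := by simp [S]
  simp only [hS0, Nat.cast_zero, sub_zero, add_zero, zero_add] at this
  exact this

/-- The mass of `f²` on the box consisting of the blocks `i q, …, (i + 1) q - 1`. -/
def boxSum (a : ℝ) (q : ℕ) (f : ℝ → ℝ) (i : ℤ) : ℝ :=
  ∑ j ∈ Finset.Ico (i * q) ((i + 1) * q), ∫ x in blk a j, f x ^ 2

lemma hasSum_boxSum {a : ℝ} (ha : 0 < a) {q : ℕ} (hq : 0 < q) {f : ℝ → ℝ} (hf : MemLp f 2 volume) :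
    HasSum (boxSum a q f) (∫ x, f x ^ 2) := by
  have hqa : 0 < q * a := by positivity
  have hf2 := hf.integrable_sq
  have h1 : boxSum a q f = fun i => ∫ x in blk (q * a) i, f x ^ 2 := by
    funext i
    rw [boxSum, ← integral_Ico_blk ha _ _ (fun j => hf2.integrableOn), blk]
    push_cast
    rw [mul_assoc, mul_assoc]
  rw [h1]
  exact hasSum_blk hqa hf2

lemma hasSum_shift {b : ℤ → ℝ} {s : ℝ} (h : HasSum b s) (i : ℤ) : HasSum (fun j => b (j + i)) s :=
  (Equiv.addRight i).hasSum_iff.2 h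

lemma window_le_boxSum (a : ℝ) {q r : ℕ} (hrq : r ≤ q) {f : ℝ → ℝ} {i : ℤ} :
    ∑ j ∈ Finset.Ico (i * q - r) (i * q + r), ∫ x in blk a j, f x ^ 2
      ≤ boxSum a q f (i + -1) + boxSum a q f i := by
  have nn : ∀ (f : ℝ → ℝ) (j : ℤ), 0 ≤ ∫ x in blk a j, f x ^ 2 :=
    fun f j => integral_nonneg fun _ => sq_nonneg _
  have e1 : (i + -1) * (q : ℤ) = i * q - q := by ring
  have e2 : (i + -1 + 1) * (q : ℤ) = i * q := by ring
  have e3 : (i + 1) * (q : ℤ) = i * q + q := by ring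
  rw [boxSum, boxSum, e1, e2, e3, ← Finset.sum_union]
  · refine Finset.sum_le_sum_of_subset_of_nonneg (fun j hj => ?_) fun j _ _ => nn f j
    simp only [Finset.mem_union, Finset.mem_Ico] at hj ⊢
    omega
  · rw [Finset.disjoint_left]
    intro j h1 h2
    simp only [Finset.mem_Ico] at h1 h2
    omega

/-- If `0` is in the spectrum of `-d²/dx² + W` but `W` agrees near all multiples of `q` with potentials
for which `0` is uniformly in the resolvent set, then some box of length `q` carries an approximate
eigenfunction, with an error exponentially small in the size `r` of the windows. -/
theorem box_lemma {a : ℝ} (ha : 0 < a) (M : ℝ) {c : ℝ} (hc : 0 < c) : ∃ C > 0, ∃ θ > 0, θ < 1 ∧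
    ∃ r₀ : ℕ, ∀ {W : ℝ → ℝ}, ULoc a W M → (∀ c' > 0, ¬ LB W c') → ∀ q r : ℕ, r₀ ≤ r → 2 ≤ q → 1 ≤ r →
    r ≤ q → (∀ i : ℤ, ∃ W', LB W' c ∧
      EqOn W W' (Ico ((i * q - r : ℤ) * a) ((i * q + r : ℤ) * a))) →
    ∃ (i : ℤ) (u k : ℝ → ℝ), Eqn W u k ∧
      (∀ x, x ∉ Ico ((i * q : ℤ) * a) (((i + 1) * q : ℤ) * a) → u x = 0 ∧ k x = 0) ∧
      0 < ∫ x, u x ^ 2 ∧ ∫ x, k x ^ 2 ≤ C * θ ^ r * ∫ x, u x ^ 2 := by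
  obtain ⟨C, hC, hcut⟩ := cutoff_lemma ha M
  obtain ⟨K, hK, hdec⟩ := decay ha M hc
  have hC0 : 0 < C := by linarith
  set θ := K / (1 + K) with hθ
  have hθ0 : 0 < θ := by positivity
  have hθ1 : θ < 1 := by rw [hθ, div_lt_one (by positivity)]; linarith
  set C1 := 4 / θ + 4 * K with hC1
  have hC10 : 0 < C1 := by positivity
  have hev : ∀ᶠ r : ℕ in atTop, θ ^ r < 1 / (2 * C1) :=
    (tendsto_pow_atTop_nhds_zero_of_lt_one hθ0.le hθ1).eventually (gt_mem_nhds (by positivity))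
  obtain ⟨r₀, hr₀⟩ := eventually_atTop.1 hev
  refine ⟨4 * C * (1 + C1), by positivity, θ, hθ0, hθ1, r₀, ?_⟩
  intro W hW hn q r hr0 hq hr hrq hwin
  have h0 := hn (θ ^ r) (by positivity)
  simp only [LB, not_forall, not_le] at h0
  obtain ⟨g, h, e, hlt⟩ := h0
  set B := ∫ x, g x ^ 2 with hB
  set Hh := ∫ x, h x ^ 2 with hHh
  have hH0 : 0 ≤ Hh := integral_nonneg fun _ => sq_nonneg _
  have hB0 : 0 < B := by
    by_contra! hB'
    have : θ ^ r * B ≤ 0 := mul_nonpos_of_nonneg_of_nonpos (by positivity) hB'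
    linarith
  have nn : ∀ (f : ℝ → ℝ) (j : ℤ), 0 ≤ ∫ x in blk a j, f x ^ 2 :=
    fun f j => integral_nonneg fun _ => sq_nonneg _
  let bx := boxSum a q
  have bxsum : ∀ f : ℝ → ℝ, MemLp f 2 volume → HasSum (bx f) (∫ x, f x ^ 2) :=
    fun f hf => hasSum_boxSum ha (by omega) hf
  have bxsum' : ∀ f : ℝ → ℝ, MemLp f 2 volume → ∀ i : ℤ, HasSum (fun j => bx f (j + i)) (∫ x, f x ^ 2) :=
    fun f hf i => hasSum_shift (bxsum f hf) i
  have win := fun f i => window_le_boxSum a (f := f) (i := i) hrq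
  let X0 : ℤ → ℝ := fun i => θ ^ (r - 1) * (bx g (i + -1) + bx g i) + K * (bx h (i + -1) + bx h i)
  have edge : ∀ i : ℤ, (∫ x in blk a (i * q - 1), g x ^ 2) + (∫ x in blk a (i * q), g x ^ 2) ≤ X0 i := by
    intro i
    obtain ⟨W', hlb, heq⟩ := hwin i
    refine (hdec hW hlb e (i * q) r hr heq).trans ?_
    exact add_le_add (mul_le_mul_of_nonneg_left (win g i) (by positivity))
      (mul_le_mul_of_nonneg_left (win h i) hK.le)
  have hX0 : HasSum X0 (θ ^ (r - 1) * (B + B) + K * (Hh + Hh)) :=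
    (((bxsum' g e.memg (-1)).add (bxsum g e.memg)).mul_left _).add
      (((bxsum' h e.memh (-1)).add (bxsum h e.memh)).mul_left _)
  set XX := θ ^ (r - 1) * (B + B) + K * (Hh + Hh) with hXX
  have hX1 : HasSum (fun i => X0 (i + 1)) XX := hasSum_shift hX0 1
  have hXle : XX + XX ≤ C1 * θ ^ r * B := by
    have : θ ^ (r - 1) = θ ^ r / θ := by
      rw [eq_div_iff hθ0.ne', ← pow_succ]; congr 1; omega
    rw [hXX, this, hC1]
    have : K * Hh ≤ K * (θ ^ r * B) := mul_le_mul_of_nonneg_left hlt.le hK.le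
    have e1 : (4 / θ + 4 * K) * θ ^ r * B = 4 * (θ ^ r / θ * B) + 4 * (K * (θ ^ r * B)) := by ring
    rw [e1]; linarith
  have hhalf : C1 * θ ^ r ≤ 1 / 2 := by
    have := (hr₀ r hr0).le
    rw [le_div_iff₀ (by positivity)] at this
    linarith
  -- if no box carried a good state, summing the cutoff estimates over all boxes would contradict the
  -- choice of `g`
  by_contra! hcon
  have hbox : ∀ i : ℤ, 4 * C * (1 + C1) * θ ^ r * (bx g i - (X0 i + X0 (i + 1)))
      ≤ C * (bx h i + (X0 i + X0 (i + 1))) := by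
    intro i
    have hqi : (i + 1) * (q : ℤ) = i * q + q := by ring
    obtain ⟨u, k, eu, hsupp, h1, h2⟩ := hcut hW e (i * q) ((i + 1) * q) (by
      rw [hqi]; have : (2 : ℤ) ≤ q := by exact_mod_cast hq
      omega)
    have e1 := edge i
    have e2 := edge (i + 1)
    have hu : bx g i - (X0 i + X0 (i + 1)) ≤ ∫ x, u x ^ 2 := by
      have hsplit : bx g i = (∑ j ∈ Finset.Ico (i * q + 1) ((i + 1) * q - 1), ∫ x in blk a j, g x ^ 2)
          + (∫ x in blk a (i * q), g x ^ 2) + ∫ x in blk a ((i + 1) * q - 1), g x ^ 2 := by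
        have h1 : Finset.Ico (i * (q : ℤ)) ((i + 1) * q)
            = insert (i * (q : ℤ)) (insert ((i + 1) * (q : ℤ) - 1)
              (Finset.Ico (i * q + 1) ((i + 1) * q - 1))) := by
          ext j; simp only [Finset.mem_Ico, Finset.mem_insert, hqi]; omega
        simp only [bx, boxSum]
        rw [h1, Finset.sum_insert, Finset.sum_insert]
        · ring
        · simp
        · simp only [Finset.mem_insert, Finset.mem_Ico, hqi]; omega
      linarith [nn g (i * q - 1), nn g ((i + 1) * q)]
    have hk : ∫ x, k x ^ 2 ≤ C * (bx h i + (X0 i + X0 (i + 1))) := by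
      refine h2.trans (mul_le_mul_of_nonneg_left ?_ hC0.le)
      simp only [bx, boxSum]
      linarith [nn g (i * q - 1), nn g ((i + 1) * q)]
    refine le_trans ?_ hk
    have hk0 : 0 ≤ ∫ x, k x ^ 2 := integral_nonneg fun _ => sq_nonneg _
    have hu0 : 0 ≤ ∫ x, u x ^ 2 := integral_nonneg fun _ => sq_nonneg _
    refine le_trans (mul_le_mul_of_nonneg_left hu (by positivity)) ?_
    rcases hu0.eq_or_lt with h0 | hpos
    · rw [← h0, mul_zero]; exact hk0
    · exact (hcon i u k eu hsupp hpos).le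
  have hfin := hasSum_le hbox (((bxsum g e.memg).sub (hX0.add hX1)).mul_left _)
    (((bxsum h e.memh).add (hX0.add hX1)).mul_left _)
  have h1 : B / 2 ≤ B - (XX + XX) := by nlinarith
  have h2 : Hh + (XX + XX) ≤ (1 + C1) * θ ^ r * B := by
    have : (1 + C1) * θ ^ r * B = θ ^ r * B + C1 * θ ^ r * B := by ring
    linarith
  have h3 : 4 * C * (1 + C1) * θ ^ r * (B / 2) ≤ C * ((1 + C1) * θ ^ r * B) :=
    (mul_le_mul_of_nonneg_left h1 (by positivity)).trans
      (hfin.trans (mul_le_mul_of_nonneg_left h2 hC0.le))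
  have h4 : 0 < C * ((1 + C1) * θ ^ r * B) := by positivity
  linarith

/-! ### Counting approximate eigenvalues in a box -/

lemma Reg.sum {ι : Type*} [Fintype ι] {W : ℝ → ℝ} (hW : L2loc W) (c : ι → ℝ)
    {g h G P : ι → ℝ → ℝ} (e : ∀ i, Eqn W (g i) (h i)) (r : ∀ i, Reg W (g i) (h i) (G i) (P i)) :
    Reg W (fun x => ∑ i, c i * g i x) (fun x => ∑ i, c i * h i x) (fun x => ∑ i, c i * G i x)
      (fun x => ∑ i, c i * P i x) := by
  refine ⟨?_, fun x => ?_, ?_, fun s t => ?_⟩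
  · filter_upwards [eventually_all.2 fun i => (r i).ae] with x hx
    exact Finset.sum_congr rfl fun i _ => by rw [hx]
  · exact HasDerivAt.fun_sum fun i _ => ((r i).der x).const_mul (c i)
  · exact continuous_finsetSum _ fun i _ => (r i).cont.const_mul (c i)
  · have h1 : ∀ x, W x * (∑ i, c i * G i x) - ∑ i, c i * h i x
        = ∑ i, c i * (W x * G i x - h i x) := by
      intro x
      rw [Finset.mul_sum, ← Finset.sum_sub_distrib]
      exact Finset.sum_congr rfl fun i _ => by ring
    simp_rw [h1]
    rw [intervalIntegral.integral_finsetSum, ← Finset.sum_sub_distrib]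
    · refine Finset.sum_congr rfl fun i _ => ?_
      rw [intervalIntegral.integral_const_mul, (r i).int, mul_sub]
    · intro i _
      exact (((r i).locInt hW (e i)).integrableOn_isCompact
        isCompact_uIcc).intervalIntegrable.const_mul _

/-- Bessel-type upper bound for linear combinations of almost orthonormal vectors. -/
lemma almost_orth {H ι : Type*} [NormedAddCommGroup H] [InnerProductSpace ℝ H] [Fintype ι]
    (v : ι → H) (c : ι → ℝ) {β : ℝ} (hβ : 0 ≤ β) (hn : ∀ i, ‖v i‖ = 1)
    (ho : ∀ i j, i ≠ j → |inner ℝ (v i) (v j)| ≤ β) (hc : β * Fintype.card ι ≤ 1 / 2) :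
    ‖∑ i, c i • v i‖ ^ 2 ≤ 3 / 2 * ∑ i, c i ^ 2 := by
  classical
  rw [← real_inner_self_eq_norm_sq, sum_inner]
  have h1 : ∀ i, (inner ℝ (c i • v i) (∑ j, c j • v j) : ℝ)
      ≤ ∑ j, ((if i = j then c i ^ 2 else 0) + β * ((c i ^ 2 + c j ^ 2) / 2)) := by
    intro i
    rw [inner_sum]
    refine Finset.sum_le_sum fun j _ => ?_
    rw [inner_smul_left, inner_smul_right, RCLike.conj_to_real]
    split_ifs with hij
    · subst hij
      rw [real_inner_self_eq_norm_sq, hn]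
      have : 0 ≤ β * ((c i ^ 2 + c i ^ 2) / 2) := by positivity
      nlinarith
    · have h2 := ho i j hij
      rw [zero_add]
      calc c i * (c j * inner ℝ (v i) (v j)) ≤ |c i * (c j * inner ℝ (v i) (v j))| := le_abs_self _
        _ = |c i| * |c j| * |inner ℝ (v i) (v j)| := by rw [abs_mul, abs_mul, mul_assoc]
        _ ≤ |c i| * |c j| * β := mul_le_mul_of_nonneg_left h2 (by positivity)
        _ ≤ β * ((c i ^ 2 + c j ^ 2) / 2) := by
          rw [mul_comm]
          refine mul_le_mul_of_nonneg_left ?_ hβ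
          nlinarith [sq_nonneg (|c i| - |c j|), sq_abs (c i), sq_abs (c j)]
  refine (Finset.sum_le_sum fun i _ => h1 i).trans ?_
  have h2 : ∑ i, ∑ j, ((if i = j then c i ^ 2 else 0) + β * ((c i ^ 2 + c j ^ 2) / 2))
      = (1 + β * Fintype.card ι) * ∑ i, c i ^ 2 := by
    simp only [Finset.sum_add_distrib, Finset.sum_ite_eq, Finset.mem_univ, if_true,
      ← Finset.mul_sum, ← Finset.sum_div, Finset.sum_const, Finset.card_univ, nsmul_eq_mul]
    ring
  rw [h2]
  exact mul_le_mul_of_nonneg_right (by linarith) (Finset.sum_nonneg fun i _ => sq_nonneg _)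

/-- Cauchy–Schwarz bound for linear combinations of few small vectors. -/
lemma sum_small {H ι : Type*} [NormedAddCommGroup H] [InnerProductSpace ℝ H] [Fintype ι]
    (v : ι → H) (c : ι → ℝ) {ε : ℝ} (hn : ∀ i, ‖v i‖ ≤ ε) (hc : ε ^ 2 * Fintype.card ι ≤ 1) :
    ‖∑ i, c i • v i‖ ^ 2 ≤ ∑ i, c i ^ 2 := by
  have h1 : ‖∑ i, c i • v i‖ ≤ ∑ i, |c i| * ε := by
    refine (norm_sum_le _ _).trans (Finset.sum_le_sum fun i _ => ?_)
    rw [norm_smul, Real.norm_eq_abs]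
    exact mul_le_mul_of_nonneg_left (hn i) (abs_nonneg _)
  have h2 := sq_sum_le_card_mul_sum_sq (s := Finset.univ) (f := fun i => |c i| * ε)
  have h3 : ∑ i, (|c i| * ε) ^ 2 = ε ^ 2 * ∑ i, c i ^ 2 := by
    rw [Finset.mul_sum]; exact Finset.sum_congr rfl fun i _ => by rw [mul_pow, sq_abs]; ring
  rw [h3, Finset.card_univ] at h2
  calc _ ≤ (∑ i, |c i| * ε) ^ 2 := pow_le_pow_left₀ (norm_nonneg _) h1 2
    _ ≤ _ := h2
    _ = (ε ^ 2 * Fintype.card ι) * ∑ i, c i ^ 2 := by ring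
    _ ≤ 1 * ∑ i, c i ^ 2 := mul_le_mul_of_nonneg_right hc (Finset.sum_nonneg fun i _ => sq_nonneg _)
    _ = _ := one_mul _

/-- Well-separated approximate eigenvalues with approximate eigenfunctions supported in one box of
length `q` number at most `C q`: by symmetry the eigenfunctions are almost orthogonal, so the local
elliptic estimate bounds `∑ |u i x|²` uniformly in `x`, and integration over the box counts them. -/
theorem count_lemma {a : ℝ} (ha : 0 < a) (M R : ℝ) : ∃ C > 0, ∀ {V : ℝ → ℝ}, ULoc a V M →
    ∀ (q : ℕ) {ι : Type} [Fintype ι] (E : ι → ℝ) (u k : ι → L2R) (ε η : ℝ), 0 ≤ ε → 0 < η →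
    (∀ i, |E i| ≤ R) → (∀ i j, i ≠ j → η ≤ |E i - E j|) →
    (∀ i, Eqn (fun x => V x - E i) (u i) (k i)) →
    (∀ i, ∀ᵐ x, x ∉ Ico 0 (q * a) → u i x = 0) → (∀ i, ‖u i‖ = 1) → (∀ i, ‖k i‖ ≤ ε) →
    4 * ε * Fintype.card ι ≤ η → ε ^ 2 * Fintype.card ι ≤ 1 → (Fintype.card ι : ℝ) ≤ C * q := by
  set C2 := leC a M * (3 / 2 + (2 + 3 * R ^ 2)) with hC2
  have hl := leC_pos (M := M) ha
  have hC20 : 0 < C2 := by positivity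
  refine ⟨C2 * a, by positivity, ?_⟩
  intro V hV q ι _ E u k ε η hε hη hER hsep he hsupp hu hk h4 h1
  have hV2 := hV.l2loc
  have eV : ∀ i, Eqn V (u i) (k i + E i • u i : L2R) := by
    intro i
    have := (he i).sub_const (hV2.sub (l2loc_const (E i))) (-E i)
    rw [neg_smul, sub_neg_eq_add] at this
    exact this.congr (Eventually.of_forall fun x => by simp) (ae_eq_refl _) (ae_eq_refl _)
  have orth : ∀ i j, i ≠ j → |inner ℝ (u i) (u j)| ≤ 2 * ε / η := by
    intro i j hij
    have s : (inner ℝ (u i) (k j + E j • u j) : ℝ) = inner ℝ (k i + E i • u i) (u j) := by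
      rw [L2R_inner, L2R_inner]; exact symm_eqn hV (eV i) (eV j)
    rw [inner_add_left, inner_add_right, inner_smul_left, inner_smul_right,
      RCLike.conj_to_real] at s
    have s1 : (E i - E j) * inner ℝ (u i) (u j) = inner ℝ (u i) (k j) - inner ℝ (k i) (u j) := by
      linarith
    have b1 : |(inner ℝ (u i) (k j) : ℝ)| ≤ ε := by
      refine (abs_real_inner_le_norm _ _).trans ?_
      rw [hu, one_mul]; exact hk j
    have b2 : |(inner ℝ (k i) (u j) : ℝ)| ≤ ε := by
      refine (abs_real_inner_le_norm _ _).trans ?_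
      rw [hu, mul_one]; exact hk i
    have b3 : |E i - E j| * |inner ℝ (u i) (u j)| ≤ 2 * ε := by
      rw [← abs_mul, s1]
      refine (abs_sub _ _).trans ?_
      linarith
    rw [le_div_iff₀ hη, mul_comm]
    exact (mul_le_mul_of_nonneg_right (hsep i j hij) (abs_nonneg _)).trans b3
  have hβ : 2 * ε / η * Fintype.card ι ≤ 1 / 2 := by
    rw [div_mul_eq_mul_div, div_le_iff₀ hη]; linarith
  have hβ0 : 0 ≤ 2 * ε / η := by positivity
  choose G P r using fun i => (eV i).exists_reg hV2
  have point : ∀ x, ∑ i, G i x ^ 2 ≤ C2 := by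
    intro x
    -- the local estimate is applied to the combination with coefficients `G i x`, whose value at `x`
    -- is the sum to be bounded
    set c : ι → ℝ := fun i => G i x with hc
    set T := ∑ i, c i ^ 2 with hT
    have hT0 : 0 ≤ T := Finset.sum_nonneg fun i _ => sq_nonneg _
    have eF := Eqn.sum hV2 Finset.univ c fun i _ => eV i
    have rF := Reg.sum hV2 c eV r
    have hxb : x ∈ Icc ((⌊x / a⌋ : ℝ) * a) ((⌊x / a⌋ : ℝ) * a + a) := by
      have h1 := Int.floor_le (x / a)
      have h2 := Int.lt_floor_add_one (x / a)
      rw [le_div_iff₀ ha] at h1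
      rw [div_lt_iff₀ ha] at h2
      exact ⟨h1, by linarith⟩
    have le := (local_est hV eF rF ⌊x / a⌋ hxb).1
    have n1 : ∫ y, (∑ i, c i * u i y) ^ 2 ≤ 3 / 2 * T := by
      have : ∫ y, (∑ i, c i * u i y) ^ 2 = ‖∑ i, c i • u i‖ ^ 2 := by
        rw [← L2R_norm_sq]
        refine integral_congr_ae ?_
        filter_upwards [coeFn_sum Finset.univ c u] with y hy
        rw [hy]
      rw [this]
      exact almost_orth u c hβ0 hu orth hβ
    have n2 : ∫ y, (∑ i, c i * (k i + E i • u i : L2R) y) ^ 2 ≤ (2 + 3 * R ^ 2) * T := by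
      have : ∫ y, (∑ i, c i * (k i + E i • u i : L2R) y) ^ 2
          = ‖∑ i, c i • (k i + E i • u i)‖ ^ 2 := by
        rw [← L2R_norm_sq]
        refine integral_congr_ae ?_
        filter_upwards [coeFn_sum Finset.univ c fun i => k i + E i • u i] with y hy
        rw [hy]
      rw [this]
      have e1 : ∑ i, c i • (k i + E i • u i) = (∑ i, c i • k i) + ∑ i, (c i * E i) • u i := by
        rw [← Finset.sum_add_distrib]
        exact Finset.sum_congr rfl fun i _ => by rw [smul_add, smul_smul]
      have a1 := sum_small k c hk h1
      have a2 := almost_orth u (fun i => c i * E i) hβ0 hu orth hβ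
      have a3 : ∑ i, (c i * E i) ^ 2 ≤ R ^ 2 * T := by
        rw [hT, Finset.mul_sum]
        refine Finset.sum_le_sum fun i _ => ?_
        have : E i ^ 2 ≤ R ^ 2 := sq_le_sq' (abs_le.1 (hER i)).1 (abs_le.1 (hER i)).2
        nlinarith [mul_le_mul_of_nonneg_left this (sq_nonneg (c i))]
      rw [e1]
      have tri := norm_add_le (∑ i, c i • k i) (∑ i, (c i * E i) • u i)
      have t2 := pow_le_pow_left₀ (norm_nonneg _) tri 2
      nlinarith [sq_nonneg (‖∑ i, c i • k i‖ - ‖∑ i, (c i * E i) • u i‖)]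
    have s1 : ∫ y in blk a ⌊x / a⌋, (∑ i, c i * u i y) ^ 2 ≤ ∫ y, (∑ i, c i * u i y) ^ 2 :=
      setIntegral_le_integral eF.memg.integrable_sq (Eventually.of_forall fun _ => sq_nonneg _)
    have s2 : ∫ y in blk a ⌊x / a⌋, (∑ i, c i * (k i + E i • u i : L2R) y) ^ 2
        ≤ ∫ y, (∑ i, c i * (k i + E i • u i : L2R) y) ^ 2 :=
      setIntegral_le_integral eF.memh.integrable_sq (Eventually.of_forall fun _ => sq_nonneg _)
    have e2 : ∑ i, c i * G i x = T := Finset.sum_congr rfl fun i _ => by rw [sq]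
    rw [e2] at le
    have fin : T ^ 2 ≤ C2 * T := by
      refine le.trans ?_
      rw [hC2, mul_assoc]
      refine mul_le_mul_of_nonneg_left ?_ hl.le
      linarith
    change T ≤ C2
    rcases hT0.eq_or_lt with h0 | hpos
    · rw [← h0]; exact hC20.le
    · exact le_of_mul_le_mul_right (by rwa [sq] at fin) hpos
  have one : ∀ i, ∫ x in Ico 0 (q * a), G i x ^ 2 = 1 := by
    intro i
    have h2 : ∫ x, (u i x) ^ 2 = 1 := by rw [L2R_norm_sq, hu, one_pow]
    rw [← h2, ← integral_indicator measurableSet_Ico]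
    refine integral_congr_ae ?_
    filter_upwards [hsupp i, (r i).ae] with x hx1 hx2
    by_cases hx : x ∈ Ico 0 (q * a)
    · rw [indicator_of_mem hx, hx2]
    · rw [indicator_of_notMem hx, hx1 hx]; norm_num
  have int : ∀ i, IntegrableOn (fun x => G i x ^ 2) (Ico 0 (q * a)) := fun i =>
    (((r i).cG.pow 2).continuousOn.integrableOn_Icc).mono_set Ico_subset_Icc_self
  have hcard : (Fintype.card ι : ℝ) = ∫ x in Ico 0 (q * a), ∑ i, G i x ^ 2 := by
    rw [integral_finsetSum _ fun i _ => int i]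
    simp [one]
  rw [hcard]
  calc ∫ x in Ico 0 (q * a), ∑ i, G i x ^ 2 ≤ ∫ x in Ico 0 (q * a), C2 :=
        integral_mono (integrable_finsetSum _ fun i _ => int i)
          (integrableOn_const (by exact measure_Ico_lt_top.ne)) fun x => point x
    _ = C2 * a * q := by
        rw [setIntegral_const, measureReal_def, Real.volume_Ico, sub_zero,
          ENNReal.toReal_ofReal (by positivity), smul_eq_mul]; ring

/-! ### Covering the spectrum of a periodic potential -/

/-- A set without `N + 1` points at mutual distance at least `η` is covered by `N` balls of radius
`η`, chosen greedily. -/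
lemma sep_cover {A : Set ℝ} {η : ℝ} (hη : 0 < η) {N : ℕ}
    (h : ∀ F : Finset ℝ, ↑F ⊆ A → (∀ x ∈ F, ∀ y ∈ F, x ≠ y → η ≤ |x - y|) → F.card ≠ N + 1) :
    ∃ F : Finset ℝ, F.card ≤ N ∧ A ⊆ ⋃ x ∈ F, Metric.ball x η := by
  classical
  by_contra hne
  push Not at hne
  have key : ∀ n ≤ N + 1, ∃ F : Finset ℝ, ↑F ⊆ A ∧
      (∀ x ∈ F, ∀ y ∈ F, x ≠ y → η ≤ |x - y|) ∧ F.card = n := by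
    intro n
    induction n with
    | zero => exact fun _ => ⟨∅, by simp, by simp, rfl⟩
    | succ n ih =>
      intro hn
      obtain ⟨F, hA, hs, hc⟩ := ih (by omega)
      obtain ⟨z, hz, hz'⟩ := not_subset.1 (hne F (by omega))
      have far : ∀ x ∈ F, η ≤ |z - x| := by
        intro x hx
        by_contra hlt
        push Not at hlt
        exact hz' (mem_iUnion₂.2 ⟨x, hx, by rwa [Metric.mem_ball, Real.dist_eq]⟩)
      by_cases hzF : z ∈ F
      · exact absurd (mem_iUnion₂.2 ⟨z, hzF, Metric.mem_ball_self hη⟩) hz'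
      · refine ⟨insert z F, ?_, ?_, ?_⟩
        · rw [Finset.coe_insert]
          exact insert_subset hz hA
        · intro x hx y hy hxy
          rw [Finset.mem_insert] at hx hy
          rcases hx with rfl | hx <;> rcases hy with rfl | hy
          · exact absurd rfl hxy
          · exact far y hy
          · rw [abs_sub_comm]; exact far x hx
          · exact hs x hx y hy hxy
        · rw [Finset.card_insert_of_notMem hzF, hc]
  obtain ⟨F, hA, hs, hc⟩ := key (N + 1) le_rfl
  exact h F hA hs hc


lemma periodic_mul {α : Type*} {v : ℤ → α} {q : ℕ} (hper : ∀ n : ℤ, v (n + q) = v n) (m n : ℤ) :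
    v (n + m * q) = v n := by
  induction m using Int.induction_on with
  | zero => simp
  | succ m ih => rw [← ih, ← hper (n + m * q)]; congr 1; ring
  | pred m ih => rw [← ih, ← hper (n + (-(m : ℤ) - 1) * q)]; congr 1; ring

lemma LB.of_shift {W : ℝ → ℝ} {c : ℝ} (τ : ℝ) (h : LB (fun x => W (x - τ)) c) : LB W c := by
  have := h.shift (-τ)
  simpa using this

/-- A state concentrated in some period cell of a periodic potential can be moved to the cell
`[0, qa)` and normalised. -/
lemma normalise {a : ℝ} (ha : 0 < a) {v : ℤ → L2I a} {q : ℕ} (hper : ∀ n : ℤ, v (n + q) = v n)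
    {E B : ℝ} {i : ℤ} {u k : ℝ → ℝ} (e : Eqn (fun x => aggC a v x - E) u k)
    (hs : ∀ x, x ∉ Ico ((i * q : ℤ) * a) (((i + 1) * q : ℤ) * a) → u x = 0 ∧ k x = 0)
    (hpos : 0 < ∫ x, u x ^ 2) (hk : ∫ x, k x ^ 2 ≤ B * ∫ x, u x ^ 2) :
    ∃ U K : L2R, Eqn (fun x => aggC a v x - E) U K ∧ (∀ᵐ x, x ∉ Ico 0 (q * a) → U x = 0) ∧
      ‖U‖ = 1 ∧ ‖K‖ ≤ Real.sqrt B := by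
  have hperz := periodic_mul hper
  set s := ∫ x, u x ^ 2 with hsdef
  set t : ℝ := (Real.sqrt s)⁻¹ with ht
  have hts : t ^ 2 * s = 1 := by
    rw [ht, inv_pow, Real.sq_sqrt hpos.le, inv_mul_cancel₀ hpos.ne']
  have e1 := (e.shift (((-(i * q) : ℤ) : ℝ) * a)).smul t
  have e2 : Eqn (fun x => aggC a v x - E) (fun x => t * u (x - ((-(i * q) : ℤ) : ℝ) * a))
      (fun x => t * k (x - ((-(i * q) : ℤ) : ℝ) * a)) := by
    refine e1.congr (Eventually.of_forall fun x => ?_) (ae_eq_refl _) (ae_eq_refl _)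
    simp only
    rw [aggC_shift ha]
    congr 2
    funext j
    rw [← hperz i j]; congr 1; ring
  refine ⟨_, _, e2.toLp, ?_, ?_, ?_⟩
  · filter_upwards [e2.memg.coeFn_toLp] with x hx hxn
    rw [hx]
    have := (hs (x - ((-(i * q) : ℤ) : ℝ) * a) fun hm => hxn ?_).1
    · rw [this, mul_zero]
    · obtain ⟨h1, h2⟩ := hm
      push_cast at h1 h2
      constructor <;> nlinarith
  · have := toLp_norm_sq e2.memg
    simp only [mul_pow] at this
    rw [integral_const_mul, integral_sub_right_eq_self (fun x => u x ^ 2), hts] at this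
    nlinarith [norm_nonneg (e2.memg.toLp _)]
  · have := toLp_norm_sq e2.memh
    simp only [mul_pow] at this
    rw [integral_const_mul, integral_sub_right_eq_self (fun x => k x ^ 2)] at this
    refine Real.le_sqrt_of_sq_le ?_
    rw [this]
    calc t ^ 2 * ∫ x, k x ^ 2 ≤ t ^ 2 * (B * s) := by gcongr
      _ = B := by rw [mul_left_comm, hts, mul_one]

/-- If a periodic sequence `w` of period `q` agrees on `2r` consecutive sites with sequences whose
operators have a gap of definite size at the energies in `A`, then the part of the spectrum in `A`
is covered by `O(q)` intervals of length exponentially small in `r`. -/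
theorem thin_lemma {a : ℝ} (ha : 0 < a) (M R : ℝ) {c : ℝ} (hc : 0 < c) : ∃ C > 0, ∃ B > 0, ∃ θ > 0,
    θ < 1 ∧ ∃ r₀ : ℕ, ∀ (w : ℤ → L2I a), (∀ j, ‖w j‖ ≤ M) → ∀ q r : ℕ, r₀ ≤ r → 2 ≤ q → 1 ≤ r →
    r ≤ q → (∀ n : ℤ, w (n + q) = w n) → ∀ (A : Set ℝ), (∀ E ∈ A, |E| ≤ R) →
    A ⊆ ContSpectrum (aggC a w) → ∀ n : ℤ,
    (∀ E ∈ A, ∃ z : ℤ → L2I a, LB (fun x => aggC a z x - E) c ∧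
      ∀ j ∈ Ico (n - r) (n + r), w j = z j) →
    ∀ ε η : ℝ, 0 ≤ ε → B * θ ^ r ≤ ε ^ 2 → 0 < η → 4 * ε * (C * q + 1) ≤ η →
    ε ^ 2 * (C * q + 1) ≤ 1 →
    ∃ F : Finset ℝ, (F.card : ℝ) ≤ C * q ∧ A ⊆ ⋃ x ∈ F, Metric.ball x η := by
  obtain ⟨C, hC, hcount⟩ := count_lemma ha M R
  obtain ⟨B, hB, θ, hθ, hθ1, r₀, hbox⟩ := box_lemma ha (2 * (M + (1 + a) * R)) hc
  refine ⟨C, hC, B, hB, θ, hθ, hθ1, r₀, ?_⟩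
  intro w hw q r hr hq hr1 hrq hper A hAR hAs n hA ε η hε hBε hη h1 h2
  have hM : 0 ≤ M := (norm_nonneg _).trans (hw 0)
  set v : ℤ → L2I a := fun j => w (j + n) with hv
  have hvper : ∀ n : ℤ, v (n + q) = v n := fun m => by
    simp only [hv]; rw [← hper (m + n)]; congr 1; ring
  have hperz := periodic_mul hvper
  have hvn : ∀ x, aggC a v x = aggC a w (x - ((-n : ℤ) : ℝ) * a) := fun x => by
    rw [aggC_shift ha]; simp [hv]
  have hVu : ULoc a (aggC a v) M := uloc_aggC ha hM v fun j => hw _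
  have state : ∀ E ∈ A, ∃ U K : L2R, Eqn (fun x => aggC a v x - E) U K ∧
      (∀ᵐ x, x ∉ Ico 0 (q * a) → U x = 0) ∧ ‖U‖ = 1 ∧ ‖K‖ ≤ ε := by
    intro E hE
    obtain ⟨z, hz, hzw⟩ := hA E hE
    have hWu : ULoc a (fun x => aggC a v x - E) (2 * (M + (1 + a) * R)) := by
      have := hVu.add (uloc_const_le (E := -E) (δ := (1 + a) * R) ha
        (by rw [abs_neg]; exact mul_le_mul_of_nonneg_left (hAR E hE) (by linarith)))
      simpa only [← sub_eq_add_neg] using this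
    have hno : ∀ c' > 0, ¬ LB (fun x => aggC a v x - E) c' := by
      intro c' hc' hlb
      simp only [hvn] at hlb
      have := LB.of_shift (W := fun x => aggC a w x - E) (((-n : ℤ) : ℝ) * a) hlb
      exact res_of_lb (uloc_aggC ha hM w hw) hc' this (hAs hE)
    obtain ⟨i, u, k, e, hs, hpos, hk⟩ := hbox hWu hno q r hr hq hr1 hrq fun i => by
      refine ⟨_, hz.shift (((i * q - n : ℤ) : ℝ) * a), fun x hx => ?_⟩
      simp only
      rw [aggC_shift ha]
      congr 1
      have hmem := mem_blk_floor ha x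
      rw [aggC_on_blk ha _ hmem, aggC_on_blk ha _ hmem]
      have hj : ⌊x / a⌋ ∈ Ico (i * q - r : ℤ) (i * q + r) := by
        obtain ⟨hx1, hx2⟩ := hx
        constructor
        · rw [Int.le_floor, le_div_iff₀ ha]; exact hx1
        · rw [Int.floor_lt, div_lt_iff₀ ha]; exact hx2
      have : v ⌊x / a⌋ = z (⌊x / a⌋ - (i * q - n)) := by
        rw [← hzw]
        · rw [← hperz (-i)]; simp only [hv]; congr 1; ring
        · constructor <;> [have := hj.1; have := hj.2] <;> linarith
      rw [this]
    obtain ⟨U, K, eUK, hU, hU1, hK⟩ := normalise ha hvper e hs hpos hk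
    exact ⟨U, K, eUK, hU, hU1, hK.trans (Real.sqrt_le_iff.2 ⟨hε, hBε⟩)⟩
  have hCq : 0 ≤ C * q := by positivity
  obtain ⟨F, hF, hFA⟩ := sep_cover (A := A) hη (N := ⌊C * q⌋₊) (by
    intro F hFA hsep hcard
    choose! U K he hU hU1 hK using state
    have hle := Nat.floor_le hCq
    have hlt := Nat.lt_floor_add_one (C * (q : ℝ))
    have hc' : ((Fintype.card F : ℕ) : ℝ) = ⌊C * (q : ℝ)⌋₊ + 1 := by
      rw [Fintype.card_coe, hcard]; push_cast; rfl
    have := hcount hVu q (ι := F) (fun x => (x : ℝ)) (fun x => U x) (fun x => K x) ε η hε hη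
      (fun x => hAR _ (hFA x.2)) (fun x y hxy => hsep _ x.2 _ y.2 (Subtype.coe_ne_coe.2 hxy))
      (fun x => he _ (hFA x.2)) (fun x => hU _ (hFA x.2)) (fun x => hU1 _ (hFA x.2))
      (fun x => hK _ (hFA x.2))
      (by rw [hc']; refine le_trans ?_ h1; gcongr)
      (by rw [hc']; refine le_trans ?_ h2; gcongr)
    rw [hc'] at this
    linarith)
  exact ⟨F, (by exact_mod_cast hF : (F.card : ℝ) ≤ ⌊C * (q : ℝ)⌋₊).trans (Nat.floor_le hCq), hFA⟩

/-! ### Hausdorff dimension from polynomially many tiny intervals -/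

/-- `s` is covered by finitely many intervals of radius `r`, where `r` is smaller than the inverse of
`n + 1` times the `n`-th power of their number. -/
def ThinCover (n : ℕ) (s : Set ℝ) : Prop :=
  ∃ (F : Finset ℝ) (r : ℝ), 0 < r ∧ s ⊆ ⋃ x ∈ F, Metric.ball x r ∧ (F.card : ℝ) ^ n * r < 1 / (n + 1)

lemma ThinCover.mono {n : ℕ} {s t : Set ℝ} (h : ThinCover n t) (hst : s ⊆ t) : ThinCover n s := by
  obtain ⟨F, r, hr, hc, hn⟩ := h
  exact ⟨F, r, hr, hst.trans hc, hn⟩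

/-- Intervals of radius `r < N⁻ⁿ`, `N` in number, have `d`-dimensional size at most about `N r ^ d`,
which tends to zero as soon as `n d > 1`. -/
lemma hausdorff_zero {s : Set ℝ} (h : ∀ᶠ n in atTop, ThinCover n s) {d : ℝ} (hd : 0 < d) :
    Measure.hausdorffMeasure d s = 0 := by
  have h' : ∀ n, ∃ (F : Finset ℝ) (r : ℝ), ThinCover n s →
      0 < r ∧ s ⊆ ⋃ x ∈ F, Metric.ball x r ∧ (F.card : ℝ) ^ n * r < 1 / (n + 1) := by
    intro n
    by_cases hn : ThinCover n s
    · obtain ⟨F, r, h⟩ := hn; exact ⟨F, r, fun _ => h⟩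
    · exact ⟨∅, 0, fun h => absurd h hn⟩
  choose F r hFr using h'
  have lim0 : Tendsto (fun n : ℕ => 2 * (1 / ((n : ℝ) + 1))) atTop (𝓝 0) := by
    simpa using tendsto_one_div_add_atTop_nhds_zero_nat.const_mul (2 : ℝ)
  have limd : Tendsto (fun n : ℕ => (2 * (1 / ((n : ℝ) + 1))) ^ d) atTop (𝓝 0) := by
    have := lim0.rpow_const (p := d) (Or.inr hd.le)
    rwa [Real.zero_rpow hd.ne'] at this
  have diam : ∀ n (x : ℝ), 0 < r n → Metric.ediam (Metric.ball x (r n)) ≤ ENNReal.ofReal (2 * r n) := by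
    intro n x hr
    rw [Real.ball_eq_Ioo, Real.ediam_Ioo]
    exact ENNReal.ofReal_le_ofReal (by linarith)
  have one_le : ∀ n, (i : F n) → (1 : ℝ) ≤ (F n).card := by
    intro n i
    exact_mod_cast Finset.card_pos.2 ⟨i.1, i.2⟩
  have key := Measure.hausdorffMeasure_le_liminf_sum d s (l := atTop) (ι := fun n => F n)
    (fun n : ℕ => ENNReal.ofReal (2 * (1 / ((n : ℝ) + 1))))
    (by simpa using ENNReal.tendsto_ofReal lim0)
    (fun n i => Metric.ball (i : ℝ) (r n))
    (by
      filter_upwards [h] with n hn i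
      obtain ⟨hr, -, hb⟩ := hFr n hn
      refine (diam n i hr).trans (ENNReal.ofReal_le_ofReal ?_)
      have : r n ≤ ((F n).card : ℝ) ^ n * r n := le_mul_of_one_le_left hr.le (one_le_pow₀ (one_le n i))
      linarith)
    (by
      filter_upwards [h] with n hn
      obtain ⟨-, hc, -⟩ := hFr n hn
      intro x hx
      obtain ⟨y, hy, hxy⟩ := mem_iUnion₂.1 (hc hx)
      exact mem_iUnion.2 ⟨⟨y, hy⟩, hxy⟩)
  have lim : Tendsto (fun n : ℕ => ∑ i : F n, Metric.ediam (Metric.ball (i : ℝ) (r n)) ^ d) atTop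
      (𝓝 0) := by
    refine tendsto_of_tendsto_of_tendsto_of_le_of_le' tendsto_const_nhds
      (h := fun n : ℕ => ENNReal.ofReal ((2 * (1 / ((n : ℝ) + 1))) ^ d))
      (by simpa using ENNReal.tendsto_ofReal limd) (Eventually.of_forall fun _ => zero_le) ?_
    filter_upwards [h, eventually_ge_atTop ⌈1 / d⌉₊] with n hn hnd
    obtain ⟨hr, -, hb⟩ := hFr n hn
    have hnd' : 1 ≤ n * d := by
      have := (Nat.le_ceil (1 / d)).trans (Nat.cast_le.2 hnd)
      rwa [div_le_iff₀ hd] at this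
    rcases (F n).eq_empty_or_nonempty with he | hne
    · have : IsEmpty (F n) := by rw [he]; infer_instance
      simp
    have hcard : (1 : ℝ) ≤ (F n).card := by exact_mod_cast Finset.card_pos.2 hne
    calc ∑ i : F n, Metric.ediam (Metric.ball (i : ℝ) (r n)) ^ d
        ≤ ∑ i : F n, ENNReal.ofReal ((2 * r n) ^ d) := by
          refine Finset.sum_le_sum fun i _ => ?_
          rw [← ENNReal.ofReal_rpow_of_pos (by positivity)]
          exact ENNReal.rpow_le_rpow (diam n i hr) hd.le
      _ = ENNReal.ofReal ((F n).card * (2 * r n) ^ d) := by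
          rw [Finset.sum_const, Finset.card_univ, Fintype.card_coe, nsmul_eq_mul,
            ENNReal.ofReal_mul (by positivity), ENNReal.ofReal_natCast]
      _ ≤ _ := by
          refine ENNReal.ofReal_le_ofReal ?_
          -- since `n * d ≥ 1`, the number of intervals is at most its own power `n * d`
          have h1 : ((F n).card : ℝ) ≤ (((F n).card : ℝ) ^ n) ^ d := by
            rw [← Real.rpow_natCast, ← Real.rpow_mul (by positivity)]
            exact Real.self_le_rpow_of_one_le hcard hnd'
          calc ((F n).card : ℝ) * (2 * r n) ^ d ≤ (((F n).card : ℝ) ^ n) ^ d * (2 * r n) ^ d := by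
                gcongr
            _ = (((F n).card : ℝ) ^ n * (2 * r n)) ^ d := by
                rw [Real.mul_rpow (x := ((F n).card : ℝ) ^ n) (by positivity) (by positivity)]
            _ ≤ _ := Real.rpow_le_rpow (by positivity) (by linarith) hd.le
  rw [lim.liminf_eq] at key
  exact le_antisymm key zero_le

lemma dimH_zero_of_thin {s : Set ℝ} (h : ∀ᶠ n in atTop, ThinCover n s) : dimH s = 0 := by
  by_contra hne
  obtain ⟨d, hd, hd'⟩ := ENNReal.lt_iff_exists_nnreal_btwn.1 (pos_iff_ne_zero.2 hne)
  refine absurd (dimH_le_of_hausdorffMeasure_ne_top (s := s) (d := d) ?_) (not_le.2 hd')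
  rw [hausdorff_zero h (by exact_mod_cast hd)]
  exact ENNReal.zero_ne_top

/-- The compact exhaustion of `ℝ ∖ S` used to localise the covers. -/
def K (S : Set ℝ) (n : ℕ) : Set ℝ := {E | |E| ≤ n ∧ ∀ s ∈ S, 1 / ((n : ℝ) + 1) ≤ |E - s|}

lemma isCompact_K (S : Set ℝ) (n : ℕ) : IsCompact (K S n) := by
  refine (isCompact_Icc (a := -(n : ℝ)) (b := n)).of_isClosed_subset ?_ fun E hE => abs_le.1 hE.1
  have : K S n = {E : ℝ | |E| ≤ n} ∩ ⋂ s ∈ S, {E : ℝ | 1 / ((n : ℝ) + 1) ≤ |E - s|} := by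
    ext E; simp [K]
  rw [this]
  refine (isClosed_le continuous_abs continuous_const).inter ?_
  exact isClosed_biInter fun s _ => isClosed_le continuous_const (by fun_prop)

lemma K_mono (S : Set ℝ) : Monotone (K S) := by
  intro m n hmn E hE
  have h : (m : ℝ) ≤ n := by exact_mod_cast hmn
  exact ⟨hE.1.trans h, fun s hs => le_trans (by gcongr) (hE.2 s hs)⟩

lemma notMem_of_mem_K {S : Set ℝ} {n : ℕ} {E : ℝ} (h : E ∈ K S n) : E ∉ S := by
  intro hs
  have := h.2 E hs
  rw [sub_self, abs_zero] at this
  have h2 : 0 < 1 / ((n : ℝ) + 1) := by positivity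
  linarith

lemma exists_mem_K {S : Set ℝ} (hS : IsDiscreteSet S) {E : ℝ} (hE : E ∉ S) : ∃ n, E ∈ K S n := by
  have hcl : IsClosed S := isClosed_iff_accPt.2 fun x hx => absurd hx (hS x)
  obtain ⟨ε, hε, hb⟩ := Metric.isOpen_iff.1 hcl.isOpen_compl E hE
  obtain ⟨n₁, hn₁⟩ := exists_nat_ge |E|
  obtain ⟨n₂, hn₂⟩ := exists_nat_one_div_lt hε
  refine ⟨max n₁ n₂, hn₁.trans (by exact_mod_cast le_max_left _ _), fun s hs => ?_⟩
  have h1 : ε ≤ |E - s| := by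
    by_contra hlt
    push Not at hlt
    exact hb (by rwa [Metric.mem_ball, dist_comm, Real.dist_eq]) hs
  have h2 : 1 / (((max n₁ n₂ : ℕ) : ℝ) + 1) ≤ 1 / ((n₂ : ℝ) + 1) := by
    have : (n₂ : ℝ) ≤ (max n₁ n₂ : ℕ) := by exact_mod_cast le_max_right _ _
    gcongr
  linarith

lemma countable_of_discrete {S : Set ℝ} (hS : IsDiscreteSet S) : S.Countable := by
  have hf : ∀ n : ℕ, (S ∩ Icc (-(n : ℝ)) n).Finite := by
    intro n
    by_contra hinf
    obtain ⟨x, -, hx⟩ := Set.Infinite.exists_accPt_of_subset_isCompact hinf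
      (isCompact_Icc (a := -(n : ℝ)) (b := n)) inter_subset_right
    exact hS x (hx.mono (principal_mono.2 inter_subset_left))
  refine (countable_iUnion fun n => (hf n).countable).mono fun x hx => ?_
  obtain ⟨n, hn⟩ := exists_nat_ge |x|
  exact mem_iUnion.2 ⟨n, hx, abs_le.1 hn⟩

lemma dimH_zero_of_thin_K {S s : Set ℝ} (hS : IsDiscreteSet S)
    (h : ∀ n, ThinCover n (s ∩ K S n)) : dimH s = 0 := by
  have hsub : s ⊆ S ∪ ⋃ m, s ∩ K S m := by
    intro E hE
    by_cases hES : E ∈ S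
    · exact Or.inl hES
    · obtain ⟨n, hn⟩ := exists_mem_K hS hES
      exact Or.inr (mem_iUnion.2 ⟨n, hE, hn⟩)
  refine le_antisymm ((dimH_mono hsub).trans ?_) zero_le
  rw [dimH_union, dimH_countable (countable_of_discrete hS), dimH_iUnion]
  refine max_le le_rfl (iSup_le fun m => (dimH_zero_of_thin ?_).le)
  filter_upwards [eventually_ge_atTop m] with n hn
  exact (h n).mono (inter_subset_inter_right _ (K_mono S hn))

lemma interior_empty_of_dimH {s : Set ℝ} (h : dimH s = 0) : interior s = ∅ := by
  by_contra hne
  have := Real.dimH_of_nonempty_interior (nonempty_iff_ne_empty.2 hne)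
  rw [h] at this
  simp at this

/-! ### Genericity -/

/-- Gaps are stable, with a uniform lower bound, under small changes of the energy and of the
sequence. -/
lemma lb_nearby {a M : ℝ} (ha : 0 < a) (hM : 0 ≤ M) {y₀ : ℤ → L2I a} (hy₀ : ∀ j, ‖y₀ j‖ ≤ M) {E₀ : ℝ}
    (hE : E₀ ∉ ContSpectrum (aggC a y₀)) : ∃ δ > 0, ∃ c > 0, ∀ y : ℤ → L2I a, ∀ E : ℝ,
      (∀ j, ‖y j - y₀ j‖ ≤ δ) → |E - E₀| ≤ δ → LB (fun x => aggC a y x - E) c := by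
  obtain ⟨c, hc, hlb⟩ := lb_of_notMem hE
  obtain ⟨M', hW⟩ := uloc_sub_const (uloc_aggC ha hM y₀ hy₀) E₀
  obtain ⟨δ, hδ, c', hc', hp⟩ := LB_perturb (M := M') ha hc
  refine ⟨δ / (2 * (2 + a)), by positivity, c', hc', fun y E hy hEE => ?_⟩
  have h1 : ULoc a (fun _ => E₀ - E) ((1 + a) * (δ / (2 * (2 + a)))) :=
    uloc_const_le ha (by rw [abs_sub_comm]; gcongr)
  have h2 := (uloc_aggC_sub ha (by positivity) y y₀ hy).add h1
  have h3 : 2 * (δ / (2 * (2 + a)) + (1 + a) * (δ / (2 * (2 + a)))) = δ := by field_simp; ring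
  rw [h3] at h2
  convert hp _ _ hW h2 hlb using 2 with x
  ring

/-- A thin cover of the spectrum in a compact set persists, since the rest of that compact set lies
in gaps, which are stable. -/
lemma isOpen_thin {a : ℝ} (ha : 0 < a) (n : ℕ) {K : Set ℝ} (hK : IsCompact K) :
    IsOpen {y : ℤ →ᵇ L2I a | ThinCover n (ContSpectrum (aggC a y) ∩ K)} := by
  rw [isOpen_iff_mem_nhds]
  rintro y ⟨F, r, hr, hc, hn⟩
  have hK' : IsCompact (K \ ⋃ x ∈ F, Metric.ball x r) :=
    hK.diff (isOpen_biUnion fun _ _ => Metric.isOpen_ball)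
  have := hK'.eventually_forall_of_forall_eventually (x₀ := y)
    (P := fun y E => E ∉ ContSpectrum (aggC a y)) (by
      intro E hE
      have hEs : E ∉ ContSpectrum (aggC a y) := fun h => hE.2 (hc ⟨h, hE.1⟩)
      obtain ⟨δ, hδ, c, hc', hnear⟩ := lb_nearby ha (norm_nonneg y) (fun j => y.norm_coe_le_norm j) hEs
      filter_upwards [Metric.ball_mem_nhds (y, E) hδ] with z hz
      rw [← ball_prod_same] at hz
      obtain ⟨hz1, hz2⟩ := hz
      refine res_of_lb (uloc_aggC ha (norm_nonneg z.1) z.1 fun j => z.1.norm_coe_le_norm j) hc'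
        (hnear z.1 z.2 (fun j => ?_) ?_)
      · rw [← dist_eq_norm]
        exact (dist_coe_le_dist j).trans (Metric.mem_ball.1 hz1).le
      · exact (Metric.mem_ball.1 hz2).le)
  filter_upwards [this] with z hz
  refine ⟨F, r, hr, fun E hE => ?_, hn⟩
  by_contra hcon
  exact hz E ⟨hE.2, hcon⟩ hE.1

/-- Periodic concatenation of long stretches of the sequences `z 0, …, z (m - 1)`, each stretch
being read off at its own position, so that closeness to the periodic sequence `x` is kept. -/
lemma concat {a : ℝ} {Y : Set (L2I a)} {x : ℤ →ᵇ L2I a} {p : ℕ} (hp : 0 < p)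
    (hper : ∀ n : ℤ, x (n + p) = x n) {ε : ℝ} (hε : 0 ≤ ε) {z : ℕ → ℤ → L2I a}
    (hzY : ∀ i j, z i j ∈ Y) (hzx : ∀ i j, dist (x j) (z i j) ≤ ε) {m N : ℕ} (hm : 0 < m)
    (hN : 0 < N) : ∃ w ∈ PerC a Y, dist x w ≤ ε ∧ (∀ n : ℤ, w (n + (2 * m * (N * p) : ℕ)) = w n) ∧
      ∀ i < m, ∀ j ∈ Ico ((2 * i + 1) * (N * p) - (N * p : ℕ) : ℤ) ((2 * i + 1) * (N * p) + (N * p : ℕ)),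
        w j = z i j := by
  set q : ℕ := 2 * m * (N * p) with hq
  have hqpos : 0 < q := by positivity
  have hx : ∀ j : ℤ, x (j % q) = x j := by
    intro j
    rw [← periodic_mul hper (2 * m * N * (j / q)) (j % q)]
    congr 1
    conv_rhs => rw [← Int.emod_add_mul_ediv j q]
    rw [hq]; push_cast; ring
  set f : ℤ → L2I a := fun j => z ((j % q) / (2 * (N * p) : ℕ)).toNat (j % q) with hf
  have hdist : ∀ j, dist (x j) (f j) ≤ ε := fun j => by
    rw [← hx j]; exact hzx _ _
  have hper' : ∀ n : ℤ, f (n + q) = f n := fun n => by simp [hf]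
  have hbd : ∀ j, ‖f j‖ ≤ ‖x‖ + ε := fun j => by
    have h1 := hdist j
    rw [dist_comm, dist_eq_norm] at h1
    calc ‖f j‖ = ‖x j + (f j - x j)‖ := by congr 1; abel
      _ ≤ ‖x j‖ + ‖f j - x j‖ := norm_add_le _ _
      _ ≤ _ := add_le_add (x.norm_coe_le_norm j) h1
  refine ⟨ofNormedAddCommGroupDiscrete f (‖x‖ + ε) hbd, ⟨⟨q, hqpos, hper'⟩, fun n => hzY _ _⟩,
    (dist_le hε).2 hdist, hper', fun i hi j hj => ?_⟩
  change f j = z i j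
  obtain ⟨h1, h2⟩ := hj
  set L : ℤ := ((N * p : ℕ) : ℤ) with hL
  have hLpos : 0 < L := by rw [hL]; exact_mod_cast Nat.mul_pos hN hp
  have hL' : (N : ℤ) * p = L := by rw [hL]; push_cast; ring
  rw [hL'] at h1 h2
  have hqL : (q : ℤ) = 2 * m * L := by rw [hq, hL]; push_cast; ring
  have him : (i : ℤ) + 1 ≤ m := by exact_mod_cast hi
  have hj0 : 0 ≤ j := by nlinarith [mul_nonneg (Int.natCast_nonneg i) hLpos.le]
  have hjq : j < q := by rw [hqL]; nlinarith
  have hmod : j % q = j := Int.emod_eq_of_lt hj0 hjq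
  have hdiv : j / (2 * L) = i := by
    rw [Int.ediv_eq_iff_of_pos (by positivity)]
    constructor <;> linarith
  have h2L : ((2 * (N * p) : ℕ) : ℤ) = 2 * L := by rw [hL]; push_cast; ring
  simp only [hf, hmod, h2L, hdiv, Int.toNat_natCast]

/-- Exponentially small errors beat polynomial counts. -/
lemma numeric {B C θ : ℝ} (hB : 0 < B) (hθ : 0 < θ) (hθ1 : θ < 1) (m n : ℕ) :
    ∀ᶠ r : ℕ in atTop, B * θ ^ r * (C * (2 * m * r : ℕ) + 1) ≤ 1 ∧
      (m * (C * (2 * m * r : ℕ))) ^ n * (4 * Real.sqrt (B * θ ^ r) * (C * (2 * m * r : ℕ) + 1))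
        < 1 / ((n : ℝ) + 1) := by
  have hs0 : 0 ≤ Real.sqrt θ := Real.sqrt_nonneg θ
  have hs1 : Real.sqrt θ < 1 := by rw [Real.sqrt_lt' one_pos]; simpa using hθ1
  have t1 : Tendsto (fun r : ℕ => B * (C * 2 * m) * ((r : ℝ) ^ 1 * θ ^ r) + B * ((r : ℝ) ^ 0 * θ ^ r))
      atTop (𝓝 0) := by
    have h := fun k => tendsto_pow_const_mul_const_pow_of_abs_lt_one k
      (by rwa [abs_of_pos hθ] : |θ| < 1)
    simpa using ((h 1).const_mul (B * (C * 2 * m))).add ((h 0).const_mul B)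
  have t2 : Tendsto (fun r : ℕ => (m * C * 2 * m) ^ n * (4 * Real.sqrt B) * (C * 2 * m) *
      ((r : ℝ) ^ (n + 1) * (Real.sqrt θ) ^ r) + (m * C * 2 * m) ^ n * (4 * Real.sqrt B) *
        ((r : ℝ) ^ n * (Real.sqrt θ) ^ r)) atTop (𝓝 0) := by
    have h := fun k => tendsto_pow_const_mul_const_pow_of_abs_lt_one k
      (by rwa [abs_of_nonneg hs0] : |Real.sqrt θ| < 1)
    simpa using ((h (n + 1)).const_mul ((m * C * 2 * m) ^ n * (4 * Real.sqrt B) * (C * 2 * m))).add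
      ((h n).const_mul ((m * C * 2 * m) ^ n * (4 * Real.sqrt B)))
  filter_upwards [t1.eventually_le_const one_pos,
    t2.eventually_lt_const (by positivity : (0 : ℝ) < 1 / ((n : ℝ) + 1))] with r h1 h2
  constructor
  · refine le_trans (le_of_eq ?_) h1
    push_cast; ring
  · refine lt_of_le_of_lt (le_of_eq ?_) h2
    rw [Real.sqrt_mul hB.le, show Real.sqrt (θ ^ r) = Real.sqrt θ ^ r from by
      rw [Real.sqrt_eq_iff_mul_self_eq (by positivity) (by positivity), ← mul_pow,
        Real.mul_self_sqrt hθ.le]]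
    push_cast
    rw [show (m * (C * (2 * m * (r : ℝ)))) = (m * C * 2 * m) * r by ring, mul_pow]
    ring

/-- Periodic sequences with thin spectrum are dense: near a periodic `x`, gap-richness gives finitely
many sequences which jointly open gaps at all energies in `K S n`; concatenating long stretches of
them makes the spectrum in `K S n` exponentially thin compared with the period. -/
theorem exists_thin {a : ℝ} (ha : 0 < a) {Y : Set (L2I a)} {S : Set ℝ} (hGR : GapRichC a Y S) (n : ℕ)
    {x : ℤ →ᵇ L2I a} (hx : x ∈ PerC a Y) {ε : ℝ} (hε : 0 < ε) :
    ∃ w ∈ PerC a Y, dist x w ≤ ε ∧ ThinCover n (ContSpectrum (aggC a w) ∩ K S n) := by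
  classical
  obtain ⟨⟨p, hp, hper⟩, hxY⟩ := hx
  rcases (K S n).eq_empty_or_nonempty with hKe | ⟨E₁, hE₁⟩
  · refine ⟨x, ⟨⟨p, hp, hper⟩, hxY⟩, by simpa using hε.le, ∅, 1 / ((n : ℝ) + 2), by positivity, ?_, ?_⟩
    · rw [hKe]; simp
    · have : (0 : ℝ) ^ n ≤ 1 := pow_le_one₀ le_rfl zero_le_one
      rw [Finset.card_empty, Nat.cast_zero]
      calc (0 : ℝ) ^ n * (1 / ((n : ℝ) + 2)) ≤ 1 * (1 / ((n : ℝ) + 2)) := by gcongr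
        _ < _ := by rw [one_mul]; gcongr; norm_num
  set M : ℝ := ‖x‖ + ε with hM
  have hM0 : 0 ≤ M := by positivity
  have bound : ∀ y : L2I a, ∀ j, dist (x j) y ≤ ε → ‖y‖ ≤ M := fun y j h => by
    rw [dist_comm, dist_eq_norm] at h
    calc ‖y‖ = ‖x j + (y - x j)‖ := by congr 1; abel
      _ ≤ ‖x j‖ + ‖y - x j‖ := norm_add_le _ _
      _ ≤ _ := add_le_add (x.norm_coe_le_norm j) h
  have hext : ∀ j, perExt (fun i : Fin p => x (i : ℕ)) j = x j := by
    intro j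
    have h0 : 0 ≤ j % (p : ℤ) := Int.emod_nonneg _ (by exact_mod_cast hp.ne')
    rw [perExt, dif_pos hp]
    simp only [Int.toNat_of_nonneg h0]
    rw [← periodic_mul hper (j / p) (j % p)]
    congr 1
    rw [mul_comm]; exact Int.emod_add_mul_ediv j p
  have gap : ∀ E ∈ K S n, ∃ z : ℤ → L2I a, ∃ δ > 0, ∃ c > 0, (∀ j, z j ∈ Y) ∧
      (∀ j, dist (x j) (z j) ≤ ε) ∧ ∀ E', |E' - E| ≤ δ → LB (fun t => aggC a z t - E') c := by
    intro E hE
    obtain ⟨l, hl, y, hyY, hyx, hyE⟩ := hGR.2 E (notMem_of_mem_K hE) p hp (fun i : Fin p => x (i : ℕ))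
      (fun i => hxY _) ε hε
    simp only [hext] at hyx
    obtain ⟨δ, hδ, c, hc, h⟩ := lb_nearby ha hM0 (fun j => bound _ j (hyx j).le) hyE
    refine ⟨perExt y, δ, hδ, c, hc, fun j => ?_, fun j => (hyx j).le, fun E' hE' =>
      h _ E' (fun j => by simpa using hδ.le) hE'⟩
    rw [perExt, dif_pos hl]; exact hyY _
  choose! z δ hδ c hc hzY hzx hlb using gap
  obtain ⟨t, htK, ht⟩ := (isCompact_K S n).elim_nhds_subcover (fun E => Metric.ball E (δ E))
    fun E hE => Metric.ball_mem_nhds E (hδ E hE)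
  have htne : t.Nonempty := by
    obtain ⟨E, hE, -⟩ := mem_iUnion₂.1 (ht hE₁)
    exact ⟨E, hE⟩
  set m := t.card with hm
  have hmpos : 0 < m := Finset.card_pos.2 htne
  -- an enumeration of the chosen energies, continued by the constant `E₁`
  set f : ℕ → ℝ := fun i => if h : i < m then (t.equivFin.symm ⟨i, h⟩ : ℝ) else E₁ with hf
  have hfK : ∀ i, f i ∈ K S n := by
    intro i
    by_cases h : i < m
    · simp only [hf, dif_pos h]; exact htK _ (t.equivFin.symm ⟨i, h⟩).2
    · simp only [hf, dif_neg h]; exact hE₁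
  have hft : ∀ E ∈ t, ∃ i < m, f i = E := by
    intro E hE
    have hlt : (t.equivFin ⟨E, hE⟩ : ℕ) < m := (t.equivFin ⟨E, hE⟩).2
    refine ⟨t.equivFin ⟨E, hE⟩, hlt, ?_⟩
    simp only [hf, dif_pos hlt]
    simp
  obtain ⟨c₀, hc₀, hcc⟩ : ∃ c₀ > 0, ∀ i < m, c₀ ≤ c (f i) := by
    have hne : (Finset.range m).Nonempty := ⟨0, Finset.mem_range.2 hmpos⟩
    refine ⟨(Finset.range m).inf' hne fun i => c (f i), ?_, fun i hi =>
      Finset.inf'_le _ (Finset.mem_range.2 hi)⟩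
    rw [gt_iff_lt, Finset.lt_inf'_iff]
    exact fun i _ => hc _ (hfK i)
  obtain ⟨C, hC, B, hB, θ, hθ, hθ1, r₀, hthin⟩ := thin_lemma ha M (n : ℝ) hc₀
  obtain ⟨r₁, hr₁⟩ := eventually_atTop.1 (numeric (C := C) hB hθ hθ1 m n)
  set N := r₀ + r₁ + 1 with hN
  set r := N * p with hr
  have hNr : N ≤ r := Nat.le_mul_of_pos_right _ hp
  set q := 2 * m * r with hq
  obtain ⟨w, hw, hwx, hwq, hwz⟩ := concat hp hper hε.le (z := fun i => z (f i))
    (fun i j => hzY _ (hfK i) j) (fun i j => hzx _ (hfK i) j) hmpos (show 0 < N by omega)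
  obtain ⟨hn1, hn2⟩ := hr₁ r (by omega)
  set e := Real.sqrt (B * θ ^ r) with he
  have hepos : 0 < e := Real.sqrt_pos.2 (by positivity)
  have hesq : e ^ 2 = B * θ ^ r := Real.sq_sqrt (by positivity)
  set η := 4 * e * (C * (q : ℝ) + 1) with hη
  have hηpos : 0 < η := by positivity
  have hrq : r ≤ q := by rw [hq]; nlinarith
  have hq2 : 2 ≤ q := by
    have h1 : 1 ≤ r := by omega
    rw [hq]; nlinarith
  have cover : ∀ i, ∃ F : Finset ℝ, i < m → (F.card : ℝ) ≤ C * q ∧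
      ContSpectrum (aggC a w) ∩ K S n ∩ Metric.ball (f i) (δ (f i)) ⊆ ⋃ x ∈ F, Metric.ball x η := by
    intro i
    by_cases hi : i < m
    · obtain ⟨F, h1, h2⟩ := hthin w (fun j => bound _ j ((dist_coe_le_dist j).trans hwx)) q r (by omega)
        hq2 (by omega) hrq hwq
        (ContSpectrum (aggC a w) ∩ K S n ∩ Metric.ball (f i) (δ (f i)))
        (fun E hE => hE.1.2.1) (fun E hE => hE.1.1) ((2 * i + 1) * (N * p))
        (fun E hE => ⟨z (f i), (hlb _ (hfK i) E (Metric.mem_ball.1 hE.2).le).mono (hcc i hi),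
          hwz i hi⟩) e η hepos.le hesq.ge hηpos le_rfl (by rw [hesq]; exact hn1)
      exact ⟨F, fun _ => ⟨h1, h2⟩⟩
    · exact ⟨∅, fun h => absurd h hi⟩
  choose F hF using cover
  refine ⟨w, hw, hwx, (Finset.range m).biUnion F, η, hηpos, fun E hE => ?_, ?_⟩
  · obtain ⟨E', hE't, hEE'⟩ := mem_iUnion₂.1 (ht hE.2)
    obtain ⟨i, hi, rfl⟩ := hft E' hE't
    obtain ⟨x', hx', hEx'⟩ := mem_iUnion₂.1 ((hF i hi).2 ⟨hE, hEE'⟩)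
    exact mem_iUnion₂.2 ⟨x', Finset.mem_biUnion.2 ⟨i, Finset.mem_range.2 hi, hx'⟩, hEx'⟩
  · refine lt_of_le_of_lt ?_ hn2
    have hcard : (((Finset.range m).biUnion F).card : ℝ) ≤ m * (C * q) := by
      calc (((Finset.range m).biUnion F).card : ℝ) ≤ ∑ i ∈ Finset.range m, ((F i).card : ℝ) := by
            exact_mod_cast Finset.card_biUnion_le
        _ ≤ ∑ i ∈ Finset.range m, C * q :=
            Finset.sum_le_sum fun i hi => (hF i (Finset.mem_range.1 hi)).1
        _ = _ := by simp
    gcongr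

end ThinSpec

open ThinSpec

/-- If `Y ⊆ L²([0,a))` is a perfect gap-rich set, then for generic
`y ∈ LP(ℤ,Y)` the spectrum of `L_y = -d²/dx² + y^♮` is a Cantor set of zero
Hausdorff dimension. -/
theorem continuum_gapRich_generic_zero_dim_cantor (a : ℝ) (ha : 0 < a)
    (Y : Set (L2I a)) (hY : Perfect Y) (S : Set ℝ) (hGR : GapRichC a Y S) :
    ∃ R : Set (LPC a Y), IsGδ R ∧ Dense R ∧
      ∀ y ∈ R,
        IsZeroDimCantorC (ContSpectrum (aggC a ⇑(y : ℤ →ᵇ L2I a))) := by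
  set U : ℕ → Set (LPC a Y) := fun n =>
    {y | ThinCover n (ContSpectrum (aggC a ⇑(y : ℤ →ᵇ L2I a)) ∩ K S n)} with hU
  have hopen : ∀ n, IsOpen (U n) := fun n =>
    (isOpen_thin ha n (isCompact_K S n)).preimage continuous_subtype_val
  have hdense : ∀ n, Dense (U n) := by
    intro n
    rw [Metric.dense_iff]
    intro y ε hε
    obtain ⟨x, hx, hyx⟩ := Metric.mem_closure_iff.1 y.2 (ε / 2) (by positivity)
    obtain ⟨w, hw, hxw, hthin⟩ := exists_thin ha hGR n hx (show 0 < ε / 4 by positivity)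
    refine ⟨⟨w, subset_closure hw⟩, ?_, hthin⟩
    rw [Metric.mem_ball, Subtype.dist_eq, dist_comm]
    linarith [dist_triangle (y : ℤ →ᵇ L2I a) x w]
  have : CompleteSpace (LPC a Y) := (isClosed_closure : IsClosed (LPC a Y)).completeSpace_coe
  refine ⟨⋂ n, U n, IsGδ.iInter_of_isOpen hopen, dense_iInter_of_isOpen hopen hdense, fun y hy => ?_⟩
  have hV := uloc_aggC ha (norm_nonneg (y : ℤ →ᵇ L2I a)) y fun j =>
    (y : ℤ →ᵇ L2I a).norm_coe_le_norm j
  have hdim := dimH_zero_of_thin_K hGR.1 fun n => mem_iInter.1 hy n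
  exact ⟨spec_nonempty hV, spec_closed hV, spec_preperfect ha y.2, interior_empty_of_dimH hdim, hdim⟩
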